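/- arXiv:1806.02574 — 4 statements merged into one kernel-verified Lean document; each statement's English description precedes it below -/
import Mathlib

section
/- For every fixed integer t' ≥ 0 there exist a constant c > 0 and a natural number d₀ (depending only on t') such that for every integer d ≥ d₀ the following holds: for every set V of 2d points in general position in ℝ^d that is in convex position and forms the vertex set of a d-dimensional convex polytope conv(V) which is (⌊d/2⌋ − t')-neighborly, the number of unordered pairs {B, C} of disjoint d-element subsets of V such that the relative interiors of the convex hulls of B and of C have a common point is at least c · 2^d · d^{5/2}. -/
/-!
Two complementary halves `B`, `V \ B` of `V` cross as soon as `V` has an affine dependence that is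
positive on `B` and negative on `V \ B` (`crossing_of_dep`), so the task is to produce many balanced
sign patterns of affine dependences.

In general position each `(d + 2)`-subset `S` of `V` carries a dependence without vanishing
coefficients. It can be perturbed so that its signs on `S` are kept while the signs at the remaining
`d - 2` points become arbitrary (`exists_perturb`). Neighborliness forces the dependence on `S` to
have at least `⌊d/2⌋ - t' + 1` coefficients of either sign (`neighborly_pos_card`), so the number of
completions to a balanced pattern is an almost central binomial coefficient of `d - 2`, which is at
least `2 ^ (d - 2)` divided by a fixed power of `d` (`two_pow_le_choose`).

A single `S` loses a power of `d`, but many sets `S` can be used at once. A pattern arising from both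
`S` and `S'` is determined outside `S ∪ S'`, so the two families share at most
`2 ^ (d - 2 - |S' \ S|)` patterns. With `s = ⌊√d⌋`, a repetition code made of `⌊s/2⌋` blocks of
length `s` provides `2 ^ ⌊s/2⌋` sets `S` pairwise differing in at least `s - 2` points
(`exists_code`). The overlaps are then negligible (`le_card_biUnion`), and the superpolynomial factor
`2 ^ ⌊s/2⌋` absorbs every power of `d` (`pow_le_two_pow_sqrt`).
-/

noncomputable section

/-- Points of `ℝ^d`. -/
abbrev Pt (d : ℕ) := EuclideanSpace ℝ (Fin d)

/-- A finite point set is in general position in `ℝ^d` if every subset of at most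
`d + 1` of its points is affinely independent. -/
def GenPos (d : ℕ) (V : Finset (Pt d)) : Prop :=
  ∀ S : Finset (Pt d), S ⊆ V → S.card ≤ d + 1 →
    AffineIndependent ℝ ((↑) : {x // x ∈ (S : Set (Pt d))} → Pt d)

/-- Two vertex-disjoint point sets form a crossing pair of simplices if the
relative (intrinsic) interiors of their convex hulls have a common point. -/
def CrossingPair (d : ℕ) (B C : Finset (Pt d)) : Prop :=
  Disjoint B C ∧
    (intrinsicInterior ℝ (convexHull ℝ (B : Set (Pt d))) ∩
      intrinsicInterior ℝ (convexHull ℝ (C : Set (Pt d)))).Nonempty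

/-- The set of unordered pairs `{B, C}` of disjoint `d`-element subsets of `V`
whose simplices cross: the crossing pairs of hyperedges. -/
def crossingHyperedgePairs (d : ℕ) (V : Finset (Pt d)) : Set (Sym2 (Finset (Pt d))) :=
  {p | ∃ B C : Finset (Pt d), p = s(B, C) ∧ B ⊆ V ∧ C ⊆ V ∧
        B.card = d ∧ C.card = d ∧ CrossingPair d B C}


/-- A finite point set is in convex position if no point of it lies in the convex
hull of the remaining points. -/
def ConvexPos (d : ℕ) (V : Finset (Pt d)) : Prop :=
  ∀ v ∈ V, v ∉ convexHull ℝ ((V : Set (Pt d)) \ {v})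

/-- `S` is a face of the polytope `conv V`: some linear functional attains the
value `a` on all of `S` and values `< a` on the rest of `V`. -/
def IsFaceOf (d : ℕ) (S V : Finset (Pt d)) : Prop :=
  S ⊆ V ∧ ∃ (f : Pt d →ₗ[ℝ] ℝ) (a : ℝ),
    (∀ x ∈ S, f x = a) ∧ ∀ y ∈ V, y ∉ S → f y < a

/-- The polytope `conv V` is `t`-neighborly: every subset of `V` with at most `t`
elements is a face of `conv V`. -/
def Neighborly (d t : ℕ) (V : Finset (Pt d)) : Prop :=
  ∀ S : Finset (Pt d), S ⊆ V → S.card ≤ t → IsFaceOf d S V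

open Finset Filter Topology

/-! ### Affine dependences and crossing pairs -/

/-- A strictly positive convex combination of a finite point set lies in the intrinsic interior of
its convex hull. -/
lemma pos_combo_mem_intrinsicInterior {d : ℕ} (B : Finset (Pt d)) (hB : B.Nonempty)
    (w : Pt d → ℝ) (hw : ∀ b ∈ B, 0 < w b) (hw1 : ∑ b ∈ B, w b = 1) :
    ∑ b ∈ B, w b • b ∈ intrinsicInterior ℝ (convexHull ℝ (B : Set (Pt d))) := by
  set K := convexHull ℝ (B : Set (Pt d)) with hK
  have hKc : Convex ℝ K := convex_convexHull ℝ _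
  have hKne : K.Nonempty := by simpa [hK] using hB
  -- `p` lies strictly between a relative interior point `q` and another point `p'` of the hull, so
  -- the homothety centred at `p'` carries a relative neighbourhood of `q` to one of `p`.
  obtain ⟨q, hq⟩ := hKne.intrinsicInterior hKc
  have hqK : q ∈ K := intrinsicInterior_subset hq
  obtain ⟨u, hu0, hu1, huq⟩ := Finset.mem_convexHull'.1 hqK
  obtain ⟨ε, hε0, hε1, hεw⟩ : ∃ ε : ℝ, 0 < ε ∧ ε < 1 ∧ ∀ b ∈ B, ε ≤ w b := by
    obtain ⟨b₀, hb₀, hmin⟩ := B.exists_min_image w hB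
    refine ⟨min (1 / 2) (w b₀), lt_min (by norm_num) (hw _ hb₀),
      (min_le_left _ _).trans_lt (by norm_num), fun b hb => (min_le_right _ _).trans (hmin b hb)⟩
  have hε' : (0 : ℝ) < 1 - ε := by linarith
  set p := ∑ b ∈ B, w b • b with hp
  set p' : Pt d := (1 - ε)⁻¹ • (p - ε • q) with hp'
  have hp'K : p' ∈ K := by
    refine Finset.mem_convexHull'.2 ⟨fun b => (1 - ε)⁻¹ * (w b - ε * u b), ?_, ?_, ?_⟩
    · intro b hb
      have h1 : u b ≤ 1 := hu1 ▸ Finset.single_le_sum hu0 hb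
      have := hεw b hb
      refine mul_nonneg (inv_nonneg.2 hε'.le) ?_
      nlinarith
    · rw [← Finset.mul_sum, Finset.sum_sub_distrib, ← Finset.mul_sum, hw1, hu1]
      field_simp
    · simp only [mul_smul, sub_smul]
      rw [← Finset.smul_sum, Finset.sum_sub_distrib, ← Finset.smul_sum, huq]
  have hpq : p = ε • (q - p') + p' := by
    have : (1 - ε) • p' = p - ε • q := by rw [hp', smul_inv_smul₀ hε'.ne']
    rw [smul_sub, sub_add_eq_add_sub]
    have h2 : p' = (1 - ε) • p' + ε • p' := by rw [← add_smul]; simp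
    nth_rewrite 1 [h2]
    rw [this]; abel
  obtain ⟨⟨q₁, hq₁⟩, hq₂, rfl⟩ := mem_intrinsicInterior.1 hq
  have hp'S : p' ∈ affineSpan ℝ K := subset_affineSpan _ _ hp'K
  have : Nonempty (affineSpan ℝ K) := ⟨⟨p', hp'S⟩⟩
  set c : affineSpan ℝ K := ⟨p', hp'S⟩
  have hmap : ∀ x : affineSpan ℝ K,
      ((AffineMap.homothety c ε x : affineSpan ℝ K) : Pt d) = ε • ((x : Pt d) - p') + p' := by
    intro x
    simp [AffineMap.homothety_apply, c]
  refine mem_intrinsicInterior.2 ⟨AffineMap.homothety c ε ⟨q₁, hq₁⟩, ?_, ?_⟩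
  · have hopen := AffineMap.homothety_isOpenMap c ε hε0.ne'
    refine mem_interior.2 ⟨_, ?_, hopen _ isOpen_interior, Set.mem_image_of_mem _ hq₂⟩
    rintro _ ⟨x, hx, rfl⟩
    have hxK : (x : Pt d) ∈ K :=
      interior_subset (s := ((↑) ⁻¹' K : Set (affineSpan ℝ K))) hx
    change ((AffineMap.homothety c ε x : affineSpan ℝ K) : Pt d) ∈ K
    rw [hmap]
    have := hKc hxK hp'K hε0.le hε'.le (by ring)
    convert this using 1
    rw [smul_sub, sub_smul, one_smul]; abel
  · rw [hmap, hpq]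

/-- `y` is (the coefficient function of) an affine dependence of the points of `V`. -/
def IsDep {d : ℕ} (V : Finset (Pt d)) (y : Pt d → ℝ) : Prop :=
  ∑ v ∈ V, y v = 0 ∧ ∑ v ∈ V, y v • v = 0

/-- In general position any `d + 2` points carry an affine dependence, and no coefficient of it
vanishes. -/
lemma exists_circuit {d : ℕ} {V : Finset (Pt d)} (hV : GenPos d V) {S : Finset (Pt d)}
    (hS : S ⊆ V) (hc : S.card = d + 2) :
    ∃ x : Pt d → ℝ, IsDep V x ∧ (∀ v ∉ S, x v = 0) ∧ ∀ v ∈ S, x v ≠ 0 := by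
  classical
  obtain ⟨f, hf0, hf1, v₁, hv₁, hne⟩ :=
    Module.exists_nontrivial_relation_sum_zero_of_finrank_succ_lt_card (R := ℝ) (t := S)
      (by simp [hc])
  refine ⟨fun v => if v ∈ S then f v else 0, ⟨?_, ?_⟩, fun v hv => by simp [hv], ?_⟩
  · rw [← Finset.sum_filter, Finset.filter_mem_eq_inter, Finset.inter_eq_right.2 hS, hf1]
  · simp only [ite_smul, zero_smul]
    rw [← Finset.sum_filter, Finset.filter_mem_eq_inter, Finset.inter_eq_right.2 hS, hf0]
  · intro v₀ hv₀
    simp only [hv₀, if_true]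
    intro h0
    have hind := hV (S.erase v₀) ((Finset.erase_subset _ _).trans hS)
      (by rw [Finset.card_erase_of_mem hv₀]; omega)
    have hz := AffineIndependent.eq_zero_of_sum_eq_zero_subtype (w := f) hind
      (by rw [← hf1, ← Finset.add_sum_erase _ _ hv₀, h0, zero_add])
      (by rw [← hf0, ← Finset.add_sum_erase _ _ hv₀, h0, zero_smul, zero_add])
    have : v₁ ≠ v₀ := fun h => hne (h ▸ h0)
    exact hne (hz v₁ (Finset.mem_erase.2 ⟨this, hv₁⟩))

/-- A dependence supported on `d + 2` points can be perturbed, keeping its signs there, to a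
dependence of all of `V` with arbitrarily prescribed signs `τ` at the other points: the coefficients
outside a fixed `(d + 1)`-subset can be chosen freely. -/
lemma exists_perturb {d : ℕ} {V : Finset (Pt d)} (hV : GenPos d V) {S : Finset (Pt d)}
    (hS : S ⊆ V) (hc : S.card = d + 2) {x : Pt d → ℝ} (hx : IsDep V x)
    (hx0 : ∀ v ∉ S, x v = 0) (hx1 : ∀ v ∈ S, x v ≠ 0) (τ : Pt d → ℝ) (hτ : ∀ v, τ v ≠ 0) :
    ∃ y : Pt d → ℝ, IsDep V y ∧ (∀ v ∈ S, 0 < x v * y v) ∧ ∀ v ∈ V \ S, 0 < τ v * y v := by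
  classical
  obtain ⟨S₀, hS₀, hc₀⟩ := Finset.exists_subset_card_eq (s := S) (n := d + 1) (by omega)
  have hz : ∀ r : Pt d, ∃ z : Pt d → ℝ, r ∈ V \ S →
      IsDep V z ∧ z r = 1 ∧ ∀ v ∈ V \ S, v ≠ r → z v = 0 := by
    intro r
    by_cases hr : r ∈ V \ S
    · rw [Finset.mem_sdiff] at hr
      have hr0 : r ∉ S₀ := fun h => hr.2 (hS₀ h)
      obtain ⟨z, ⟨hz1, hz2⟩, hz3, hz4⟩ := exists_circuit hV (S := insert r S₀)
        (Finset.insert_subset hr.1 (hS₀.trans hS)) (by rw [Finset.card_insert_of_notMem hr0, hc₀])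
      have hzr := hz4 r (Finset.mem_insert_self _ _)
      refine ⟨fun v => (z r)⁻¹ * z v, fun _ => ⟨⟨?_, ?_⟩, inv_mul_cancel₀ hzr, ?_⟩⟩
      · rw [← Finset.mul_sum, hz1, mul_zero]
      · simp only [mul_smul]
        rw [← Finset.smul_sum, hz2, smul_zero]
      · intro v hv hvr
        rw [Finset.mem_sdiff] at hv
        change (z r)⁻¹ * z v = 0
        rw [hz3 v, mul_zero]
        simp only [Finset.mem_insert, not_or]
        exact ⟨hvr, fun h => hv.2 (hS₀ h)⟩
    · exact ⟨0, fun h => absurd h hr⟩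
  choose z hz using hz
  set u : Pt d → ℝ := fun v => ∑ r ∈ V \ S, τ r * z r v with hu
  have hudep : IsDep V u := by
    constructor
    · simp only [hu]
      rw [Finset.sum_comm]
      refine Finset.sum_eq_zero fun r hr => ?_
      rw [← Finset.mul_sum, (hz r hr).1.1, mul_zero]
    · simp only [hu, Finset.sum_smul]
      rw [Finset.sum_comm]
      refine Finset.sum_eq_zero fun r hr => ?_
      simp only [mul_smul]
      rw [← Finset.smul_sum, (hz r hr).1.2, smul_zero]
  have hur : ∀ r ∈ V \ S, u r = τ r := by
    intro r hr
    simp only [hu]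
    rw [Finset.sum_eq_single r, (hz r hr).2.1, mul_one]
    · intro r' hr' hne
      rw [(hz r' hr').2.2 r hr hne.symm, mul_zero]
    · exact fun h => absurd hr h
  have hev : ∀ᶠ ε : ℝ in 𝓝[>] 0, ∀ v ∈ S, 0 < x v * (x v + ε * u v) := by
    rw [Filter.eventually_all_finset]
    intro v hv
    have hcont : Tendsto (fun ε : ℝ => x v * (x v + ε * u v)) (𝓝 0) (𝓝 (x v * (x v + 0 * u v))) :=
      (Continuous.tendsto (by fun_prop) 0)
    have hpos : 0 < x v * (x v + 0 * u v) := by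
      rw [zero_mul, add_zero]; exact mul_self_pos.2 (hx1 v hv)
    exact (hcont.mono_left nhdsWithin_le_nhds).eventually (lt_mem_nhds hpos)
  obtain ⟨ε, hε, hεpos⟩ := (hev.and self_mem_nhdsWithin).exists
  have hεpos : 0 < ε := hεpos
  refine ⟨fun v => x v + ε * u v, ⟨?_, ?_⟩, hε, ?_⟩
  · rw [Finset.sum_add_distrib, ← Finset.mul_sum, hx.1, hudep.1]; simp
  · simp only [add_smul, mul_smul]
    rw [Finset.sum_add_distrib, ← Finset.smul_sum, hx.2, hudep.2]; simp
  · intro v hv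
    change 0 < τ v * (x v + ε * u v)
    rw [hur v hv, hx0 v (Finset.mem_sdiff.1 hv).2, zero_add]
    have := mul_self_pos.2 (hτ v)
    nlinarith [mul_pos hεpos this]

/-- The positive and negative parts of a dependence with full support form a crossing pair
(the Radon point is a common relative interior point). -/
lemma crossing_of_dep {d : ℕ} {V B : Finset (Pt d)} (hB : B ⊆ V) (hBne : B.Nonempty)
    {y : Pt d → ℝ} (hy : IsDep V y) (hpos : ∀ v ∈ B, 0 < y v)
    (hneg : ∀ v ∈ V, v ∉ B → y v < 0) : ∀ C : Finset (Pt d), (∀ v, v ∈ C ↔ v ∈ V ∧ v ∉ B) →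
      CrossingPair d B C := by
  classical
  intro C hC
  have hCeq : C = V \ B := by ext v; simp [hC]
  subst hCeq
  refine ⟨Finset.disjoint_sdiff, ?_⟩
  have h1 := hy.1
  have h2 := hy.2
  rw [← Finset.sum_sdiff hB] at h1 h2
  set T := ∑ v ∈ B, y v with hT
  have hTpos : 0 < T := Finset.sum_pos hpos hBne
  have hCne : (V \ B).Nonempty := by
    by_contra h
    rw [Finset.not_nonempty_iff_eq_empty] at h
    rw [h] at h1
    simp at h1
    exact hTpos.ne' h1
  have hCsum : ∑ v ∈ V \ B, T⁻¹ * (-y v) = 1 := by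
    rw [← Finset.mul_sum, Finset.sum_neg_distrib]
    have : -∑ v ∈ V \ B, y v = T := by linarith
    rw [this, inv_mul_cancel₀ hTpos.ne']
  have hmemB := pos_combo_mem_intrinsicInterior B hBne (fun v => T⁻¹ * y v)
    (fun b hb => mul_pos (inv_pos.2 hTpos) (hpos b hb))
    (by rw [← Finset.mul_sum, inv_mul_cancel₀ hTpos.ne'])
  have hmemC := pos_combo_mem_intrinsicInterior (V \ B) hCne (fun v => T⁻¹ * (-y v))
    (fun b hb => mul_pos (inv_pos.2 hTpos)
      (by have := hneg b (Finset.mem_sdiff.1 hb).1 (Finset.mem_sdiff.1 hb).2; linarith))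
    hCsum
  refine ⟨_, hmemB, ?_⟩
  convert hmemC using 1
  simp only [mul_smul, neg_smul]
  rw [← Finset.smul_sum, ← Finset.smul_sum, Finset.sum_neg_distrib]
  congr 1
  rw [eq_neg_iff_add_eq_zero, add_comm]; exact h2

/-- In a `t`-neighborly polytope every affine dependence has more than `t` positive coefficients:
otherwise those positive points form a face, and applying its supporting functional to the dependence
gives a sum of nonnegative terms that vanishes only if no coefficient is negative. -/
lemma neighborly_pos_card {d t : ℕ} {V : Finset (Pt d)} (hN : Neighborly d t V)
    {x : Pt d → ℝ} (hx : IsDep V x) (hne : ∃ v ∈ V, x v ≠ 0) :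
    t + 1 ≤ (V.filter (fun v => 0 < x v)).card := by
  by_contra hlt
  obtain ⟨-, f, a, hfa, hflt⟩ := hN (V.filter (fun v => 0 < x v)) (Finset.filter_subset _ _)
    (by omega)
  have hsum : ∑ v ∈ V, x v * (f v - a) = 0 := by
    have h := congrArg f hx.2
    simp only [map_sum, map_smul, smul_eq_mul, map_zero] at h
    simp only [mul_sub]
    rw [Finset.sum_sub_distrib, h, ← Finset.sum_mul, hx.1]; simp
  have hterm : ∀ v ∈ V, 0 ≤ x v * (f v - a) := by
    intro v hv
    by_cases h : 0 < x v
    · rw [hfa v (Finset.mem_filter.2 ⟨hv, h⟩)]; simp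
    · have := hflt v hv (fun h' => h (Finset.mem_filter.1 h').2)
      nlinarith
  have hz := (Finset.sum_eq_zero_iff_of_nonneg hterm).1 hsum
  have hnn : ∀ v ∈ V, 0 ≤ x v := by
    intro v hv
    by_contra h
    have h1 := hflt v hv (fun h' => h (Finset.mem_filter.1 h').2.le)
    have h2 := hz v hv
    rw [mul_eq_zero] at h2
    rcases h2 with h2 | h2 <;> linarith
  obtain ⟨v, hv, hv0⟩ := hne
  exact hv0 ((Finset.sum_eq_zero_iff_of_nonneg hnn).1 hx.1 v hv)

/-- Every `(d + 2)`-subset `S` of a neighborly `V` contains an almost balanced set `P` (one side of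
its Radon partition) such that every `B ⊆ V` with `B ∩ S = P` crosses its complement. -/
lemma exists_radon {d t : ℕ} {V : Finset (Pt d)} (hV : GenPos d V)
    (hN : Neighborly d t V)
    {S : Finset (Pt d)} (hS : S ⊆ V) (hc : S.card = d + 2) :
    ∃ P ⊆ S, t + 1 ≤ P.card ∧ P.card + (t + 1) ≤ d + 2 ∧
      ∀ B ⊆ V, B ∩ S = P → CrossingPair d B (V \ B) := by
  obtain ⟨x, hx, hx0, hx1⟩ := exists_circuit hV hS hc
  have hSne : S.Nonempty := Finset.card_pos.1 (by omega)
  obtain ⟨s, hs⟩ := hSne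
  have hfil : ∀ y : Pt d → ℝ, (∀ v ∉ S, y v = 0) →
      V.filter (fun v => 0 < y v) = S.filter (fun v => 0 < y v) := by
    intro y hy
    ext v
    simp only [Finset.mem_filter]
    refine ⟨fun h => ⟨?_, h.2⟩, fun h => ⟨hS h.1, h.2⟩⟩
    by_contra hv
    rw [hy v hv] at h
    exact lt_irrefl _ h.2
  have hp := neighborly_pos_card hN hx ⟨s, hS hs, hx1 s hs⟩
  have hn := neighborly_pos_card hN (x := fun v => -x v)
    ⟨by rw [Finset.sum_neg_distrib, hx.1, neg_zero],
      by simp only [neg_smul]; rw [Finset.sum_neg_distrib, hx.2, neg_zero]⟩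
    ⟨s, hS hs, neg_ne_zero.2 (hx1 s hs)⟩
  rw [hfil _ hx0] at hp
  rw [hfil _ (fun v hv => by simp [hx0 v hv])] at hn
  have hsplit : (S.filter (fun v => 0 < x v)).card + (S.filter (fun v => 0 < -x v)).card
      = d + 2 := by
    rw [← hc, ← Finset.card_filter_add_card_filter_not (s := S) (fun v => 0 < x v)]
    congr 2
    refine Finset.filter_congr fun v hv => ?_
    have := hx1 v hv
    rw [not_lt, neg_pos]
    exact ⟨le_of_lt, fun h => lt_of_le_of_ne h this⟩
  refine ⟨S.filter (fun v => 0 < x v), Finset.filter_subset _ _, hp, by omega, ?_⟩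
  intro B hB hBS
  obtain ⟨y, hy, hy1, hy2⟩ := exists_perturb hV hS hc hx hx0 hx1
    (fun v => if v ∈ B then 1 else -1) (fun v => by split_ifs <;> norm_num)
  have hmem : ∀ v ∈ S, (v ∈ B ↔ 0 < x v) := by
    intro v hv
    have : v ∈ B ∩ S ↔ v ∈ S.filter (fun v => 0 < x v) := by rw [hBS]
    simpa [hv] using this
  refine crossing_of_dep hB ?_ hy ?_ ?_ _ (fun v => by simp)
  · have : (B ∩ S).Nonempty := by rw [hBS]; exact Finset.card_pos.1 (by omega)
    exact this.mono Finset.inter_subset_left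
  · intro v hv
    by_cases hvS : v ∈ S
    · exact (mul_pos_iff_of_pos_left ((hmem v hvS).1 hv)).1 (hy1 v hvS)
    · simpa [hv] using hy2 v (Finset.mem_sdiff.2 ⟨hB hv, hvS⟩)
  · intro v hvV hv
    by_cases hvS : v ∈ S
    · have h1 : x v ≤ 0 := not_lt.1 fun h => hv ((hmem v hvS).2 h)
      have := hy1 v hvS
      by_contra h
      nlinarith
    · simpa [hv] using hy2 v (Finset.mem_sdiff.2 ⟨hvV, hvS⟩)

/-! ### Set families and estimates -/

/-- A truncated Bonferroni inequality: sets of size at least `m` whose pairwise intersections have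
size at most `k` are almost disjoint. -/
lemma le_card_biUnion {ι α : Type*} [DecidableEq α] [DecidableEq ι] (I : Finset ι)
    (A : ι → Finset α)
    (m k : ℕ) (hm : ∀ i ∈ I, m ≤ (A i).card)
    (hk : ∀ i ∈ I, ∀ j ∈ I, i ≠ j → (A i ∩ A j).card ≤ k) :
    I.card * (m - I.card * k) ≤ (I.biUnion A).card := by
  set A' : ι → Finset α := fun i => A i \ (I.erase i).biUnion A with hA'
  have hdisj : ∀ i ∈ I, ∀ j ∈ I, i ≠ j → Disjoint (A' i) (A' j) := by
    intro i hi j hj hij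
    rw [Finset.disjoint_left]
    intro a ha hb
    refine (Finset.mem_sdiff.1 ha).2 (Finset.mem_biUnion.2 ⟨j, ?_, (Finset.mem_sdiff.1 hb).1⟩)
    exact Finset.mem_erase.2 ⟨hij.symm, hj⟩
  have hcard : ∀ i ∈ I, m - I.card * k ≤ (A' i).card := by
    intro i hi
    have h1 : (A i ∩ (I.erase i).biUnion A).card ≤ I.card * k := by
      rw [Finset.inter_biUnion]
      refine (Finset.card_biUnion_le_card_mul _ _ k fun j hj => ?_).trans
        (Nat.mul_le_mul_right _ (Finset.card_erase_le))
      exact hk i hi j (Finset.mem_of_mem_erase hj) (Finset.ne_of_mem_erase hj).symm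
    have h2 := Finset.card_sdiff_add_card_inter (A i) ((I.erase i).biUnion A)
    have h3 := hm i hi
    simp only [hA']
    omega
  calc I.card * (m - I.card * k) = ∑ _i ∈ I, (m - I.card * k) := by simp
    _ ≤ ∑ i ∈ I, (A' i).card := Finset.sum_le_sum hcard
    _ = (I.biUnion A').card := (Finset.card_biUnion hdisj).symm
    _ ≤ _ := Finset.card_le_card
      (Finset.biUnion_mono fun i _ => Finset.sdiff_subset)

/-- A repetition code. The `2 d` points are grouped into `d` pairs and the pairs into blocks of
length `s`; a set `F` of block indices selects one point of every pair, according to whether the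
block of the pair belongs to `F`. Different `F` give selections differing in a whole block. -/
lemma exists_code {α : Type*} [DecidableEq α] {d K s : ℕ} (V : Finset α) (hV : V.card = 2 * d)
    (hKs : K * s ≤ d) :
    ∃ A : Finset ℕ → Finset α, (∀ F, A F ⊆ V ∧ (A F).card = d) ∧
      ∀ F ∈ (range K).powerset, ∀ G ∈ (range K).powerset, F ≠ G → s ≤ (A G \ A F).card := by
  rcases Nat.eq_zero_or_pos s with rfl | hs
  · obtain ⟨A, hA, hAc⟩ := Finset.exists_subset_card_eq (s := V) (n := d) (by omega)
    exact ⟨fun _ => A, fun _ => ⟨hA, hAc⟩, by simp⟩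
  have e : Fin d × Bool ≃ V := Fintype.equivOfCardEq (by simp [hV, mul_comm])
  have hinj : Function.Injective (fun p => (e p : α)) :=
    Subtype.val_injective.comp e.injective
  let g : Finset ℕ → Fin d → α := fun F i => e (i, decide (i.1 / s ∈ F))
  have hg : ∀ F, Function.Injective (g F) := by
    intro F i j hij
    exact congrArg Prod.fst (hinj hij)
  refine ⟨fun F => univ.image (g F), fun F => ⟨?_, ?_⟩, ?_⟩
  · intro a ha
    obtain ⟨i, -, rfl⟩ := Finset.mem_image.1 ha
    exact (e _).2
  · rw [Finset.card_image_of_injective _ (hg F)]; simp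
  · intro F hF G hG hFG
    obtain ⟨k, hkK, hk⟩ : ∃ k < K, ¬ (k ∈ F ↔ k ∈ G) := by
      by_contra! h
      refine hFG (Finset.ext fun k => ?_)
      by_cases hk : k < K
      · exact h k hk
      · exact ⟨fun h' => absurd (Finset.mem_range.1 (Finset.mem_powerset.1 hF h')) hk,
          fun h' => absurd (Finset.mem_range.1 (Finset.mem_powerset.1 hG h')) hk⟩
    have hlt : ∀ r < s, k * s + r < d := by
      intro r hr
      have : (k + 1) * s ≤ K * s := Nat.mul_le_mul_right _ hkK
      rw [add_mul] at this
      omega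
    let h : Fin s → α := fun r => g G ⟨k * s + r.1, hlt r.1 r.2⟩
    have hh : Function.Injective h := by
      intro r r' hrr
      have := Fin.ext_iff.1 (hg G hrr)
      ext
      simpa using this
    have hsub : univ.image h ⊆ univ.image (g G) \ univ.image (g F) := by
      intro a ha
      obtain ⟨r, -, rfl⟩ := Finset.mem_image.1 ha
      refine Finset.mem_sdiff.2 ⟨Finset.mem_image_of_mem _ (Finset.mem_univ _), fun hmem => ?_⟩
      obtain ⟨i, -, hi⟩ := Finset.mem_image.1 hmem
      have hp := hinj hi
      have h1 := congrArg Prod.fst hp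
      have h2 := congrArg Prod.snd hp
      simp only at h1 h2
      subst h1
      have hdiv : (k * s + r.1) / s = k := by
        rw [mul_comm, Nat.mul_add_div hs, Nat.div_eq_of_lt r.2, add_zero]
      simp only [hdiv, decide_eq_decide] at h2
      exact hk h2
    calc s = (univ.image h).card := by rw [Finset.card_image_of_injective _ hh]; simp
      _ ≤ _ := Finset.card_le_card hsub

/-- Almost central binomial coefficients are a polynomial factor away from `2 ^ n`. -/
lemma two_pow_le_choose_sub (n k : ℕ) :
    2 ^ n ≤ n.choose (n / 2 - k) * (n + 1) ^ (k + 1) := by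
  induction k with
  | zero =>
    rw [← Nat.sum_range_choose]
    calc ∑ m ∈ range (n + 1), n.choose m ≤ ∑ _m ∈ range (n + 1), n.choose (n / 2) :=
          Finset.sum_le_sum fun m _ => Nat.choose_le_middle m n
      _ = _ := by simp [mul_comm]
  | succ k ih =>
    refine ih.trans ?_
    rw [pow_succ (n + 1) (k + 1), mul_comm ((n + 1) ^ (k + 1)) (n + 1), ← mul_assoc]
    refine Nat.mul_le_mul_right _ ?_
    by_cases h : n / 2 ≤ k
    · rw [Nat.sub_eq_zero_of_le h, Nat.sub_eq_zero_of_le (by omega)]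
      simp
    · obtain ⟨r, hr⟩ : ∃ r, n / 2 - k = r + 1 := ⟨n / 2 - k - 1, by omega⟩
      have hr' : n / 2 - (k + 1) = r := by omega
      rw [hr, hr']
      have h1 := Nat.choose_succ_right_eq n r
      calc n.choose (r + 1) ≤ n.choose (r + 1) * (r + 1) := Nat.le_mul_of_pos_right _ (by omega)
        _ = n.choose r * (n - r) := h1
        _ ≤ _ := Nat.mul_le_mul_left _ (by omega)

lemma two_pow_le_choose {n t j : ℕ} (h1 : n / 2 ≤ j + t) (h2 : n / 2 + j ≤ n + t) (h3 : j ≤ n) :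
    2 ^ n ≤ n.choose j * (n + 1) ^ (t + 1) := by
  have key : ∀ j ≤ n / 2, n / 2 ≤ j + t → 2 ^ n ≤ n.choose j * (n + 1) ^ (t + 1) := by
    intro j hj hjt
    have h := two_pow_le_choose_sub n (n / 2 - j)
    rw [show n / 2 - (n / 2 - j) = j by omega] at h
    exact h.trans (Nat.mul_le_mul_left _ (Nat.pow_le_pow_right (by omega) (by omega)))
  by_cases hj : j ≤ n / 2
  · exact key j hj h1
  · rw [← Nat.choose_symm h3]
    by_cases hj' : n - j ≤ n / 2
    · exact key _ hj' (by omega)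
    · omega

/-- A superpolynomial function of `√d` dominates any power of `d`. -/
lemma pow_le_two_pow_sqrt (k : ℕ) : ∃ d₀ : ℕ, ∀ d ≥ d₀, d ^ k ≤ 2 ^ (Nat.sqrt d / 2) := by
  have ht := tendsto_pow_const_div_const_pow_of_one_lt (2 * k) (r := 2) one_lt_two
  obtain ⟨Q, hQ⟩ := Filter.eventually_atTop.1
    (ht.eventually (gt_mem_nhds (show (0 : ℝ) < (2 ^ (4 * k))⁻¹ by positivity)))
  refine ⟨(2 * (Q + 1)) ^ 2, fun d hd => ?_⟩
  set q := Nat.sqrt d / 2 with hq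
  have hQs : 2 * (Q + 1) ≤ Nat.sqrt d := by
    rw [Nat.le_sqrt']; exact hd
  have hqQ : Q + 1 ≤ q := by omega
  have hd1 : d ≤ (4 * q) ^ 2 := by
    have h1 : d < (Nat.sqrt d + 1) ^ 2 := by
      have := Nat.lt_succ_sqrt d
      rw [sq]; exact this
    refine h1.le.trans (Nat.pow_le_pow_left (by omega) 2)
  have h2 := hQ q (by omega)
  rw [div_lt_iff₀ (by positivity), ← div_eq_inv_mul, lt_div_iff₀ (by positivity)] at h2
  have h3 : (q ^ (2 * k) * 2 ^ (4 * k) : ℕ) < 2 ^ q := by exact_mod_cast h2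
  calc d ^ k ≤ ((4 * q) ^ 2) ^ k := Nat.pow_le_pow_left hd1 k
    _ = q ^ (2 * k) * 2 ^ (4 * k) := by
      rw [← pow_mul, mul_pow, show (4 : ℕ) = 2 ^ 2 by norm_num, ← pow_mul]; ring
    _ ≤ _ := h3.le

/-! ### Counting crossing pairs -/

lemma finite_crossingHyperedgePairs (d : ℕ) (V : Finset (Pt d)) :
    (crossingHyperedgePairs d V).Finite := by
  classical
  refine ((V.powerset ×ˢ V.powerset).image fun p => s(p.1, p.2)).finite_toSet.subset ?_
  rintro _ ⟨B, C, rfl, hB, hC, -⟩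
  simp only [Finset.coe_image, Set.mem_image]
  exact ⟨(B, C), by simp [hB, hC], rfl⟩

/-- A family of halves of `V` that cross their complements is at most twice as large as the set of
crossing pairs, since a pair `{B, V \ B}` only arises from `B` and `V \ B`. -/
lemma card_le_two_mul_crossing {d : ℕ} {V : Finset (Pt d)} (hV : V.card = 2 * d)
    (U : Finset (Finset (Pt d)))
    (hU : ∀ B ∈ U, B ⊆ V ∧ B.card = d ∧ CrossingPair d B (V \ B)) :
    U.card ≤ 2 * (crossingHyperedgePairs d V).ncard := by
  classical
  let φ : Finset (Pt d) → Sym2 (Finset (Pt d)) := fun B => s(B, V \ B)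
  have h1 : U.card ≤ 2 * (U.image φ).card := by
    refine Finset.card_le_mul_card_image U 2 fun b hb => ?_
    obtain ⟨B, hB, rfl⟩ := Finset.mem_image.1 hb
    refine (Finset.card_le_card (t := {B, V \ B}) fun B' hB' => ?_).trans Finset.card_le_two
    have := (Finset.mem_filter.1 hB').2
    simp only [φ, Sym2.eq_iff] at this
    rw [Finset.mem_insert, Finset.mem_singleton]
    exact this.imp And.left And.left
  refine h1.trans (Nat.mul_le_mul_left _ ?_)
  rw [← Set.ncard_coe_finset]
  refine Set.ncard_le_ncard ?_ (finite_crossingHyperedgePairs d V)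
  intro b hb
  obtain ⟨B, hB, rfl⟩ := Finset.mem_image.1 (Finset.mem_coe.1 hb)
  obtain ⟨hBV, hBc, hcr⟩ := hU B hB
  refine ⟨B, V \ B, rfl, hBV, Finset.sdiff_subset, hBc, ?_, hcr⟩
  rw [Finset.card_sdiff_of_subset hBV]
  omega

/-- The combinatorial core: each of `2 ^ K` well separated `(d + 2)`-subsets contributes at least
`m` crossing halves, where `m` is a polynomial fraction of `2 ^ (d - 2)`, and two of them share at
most `2 ^ (d - s)`. -/
lemma crossing_count {d t' K s : ℕ} {V : Finset (Pt d)} (hd : 2 * t' + 2 ≤ d)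
    (hV : V.card = 2 * d) (hG : GenPos d V) (hN : Neighborly d (d / 2 - t') V)
    (hKs : K * s ≤ d) :
    ∃ m : ℕ, 2 ^ (d - 2) ≤ m * (d - 1) ^ (t' + 1) ∧
      2 ^ K * (m - 2 ^ K * 2 ^ (d - s)) ≤ 2 * (crossingHyperedgePairs d V).ncard := by
  classical
  obtain ⟨A, hA, hAs⟩ := exists_code V hV hKs
  have hS : ∀ F, ∃ S, A F ⊆ S ∧ S ⊆ V ∧ S.card = d + 2 := fun F =>
    Finset.exists_subsuperset_card_eq (hA F).1 (by rw [(hA F).2]; omega) (by omega)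
  choose S hAS hSV hSc using hS
  have hP := fun F => exists_radon hG hN (hSV F) (hSc F)
  choose P hPS hP1 hP2 hP3 using hP
  let 𝓑 : Finset ℕ → Finset (Finset (Pt d)) := fun F =>
    (V.powersetCard d).filter fun B => B ∩ S F = P F
  have hlow : ∀ F, (d - 2).choose (d - (P F).card) ≤ (𝓑 F).card := by
    intro F
    have hPF := hP2 F
    have hVS : (V \ S F).card = d - 2 := by
      rw [Finset.card_sdiff_of_subset (hSV F), hSc, hV]; omega
    rw [← hVS, ← Finset.card_powersetCard]
    have hinter : ∀ Q ⊆ V \ S F, Q ∩ S F = ∅ := fun Q hQ =>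
      Finset.disjoint_iff_inter_eq_empty.1
        (Finset.disjoint_of_subset_left hQ Finset.sdiff_disjoint)
    have hQP : ∀ Q ⊆ V \ S F, Disjoint (P F) Q := fun Q hQ =>
      Finset.disjoint_of_subset_left (hPS F)
        (Finset.disjoint_of_subset_right hQ Finset.disjoint_sdiff)
    refine Finset.card_le_card_of_injOn (fun Q => P F ∪ Q) ?_ ?_
    · intro Q hQ
      obtain ⟨hQ1, hQ2⟩ := Finset.mem_powersetCard.1 (Finset.mem_coe.1 hQ)
      refine Finset.mem_coe.2 (Finset.mem_filter.2 ⟨Finset.mem_powersetCard.2 ⟨?_, ?_⟩, ?_⟩)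
      · exact Finset.union_subset ((hPS F).trans (hSV F)) (hQ1.trans Finset.sdiff_subset)
      · rw [Finset.card_union_of_disjoint (hQP Q hQ1), hQ2]; omega
      · rw [Finset.union_inter_distrib_right, hinter Q hQ1, Finset.union_empty,
          Finset.inter_eq_left.2 (hPS F)]
    · intro Q hQ Q' hQ' h
      have h1 := (Finset.mem_powersetCard.1 (Finset.mem_coe.1 hQ)).1
      have h2 := (Finset.mem_powersetCard.1 (Finset.mem_coe.1 hQ')).1
      have h3 := congrArg (· \ P F) h
      simpa [Finset.union_sdiff_cancel_left (hQP Q h1),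
        Finset.union_sdiff_cancel_left (hQP Q' h2)] using h3
  have hinter : ∀ F ∈ (range K).powerset, ∀ G ∈ (range K).powerset, F ≠ G →
      (𝓑 F ∩ 𝓑 G).card ≤ 2 ^ (d - s) := by
    intro F hF G hGm hFG
    -- The two selections differ in `s` points, and at most two of these are absorbed by the
    -- enlargement of `A F` to `S F`.
    have h1 : s ≤ (S G \ S F).card + 2 := by
      have h2 : A G \ A F ⊆ (S G \ S F) ∪ (S F \ A F) := by
        intro a ha
        obtain ⟨ha1, ha2⟩ := Finset.mem_sdiff.1 ha
        by_cases h : a ∈ S F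
        · exact Finset.mem_union_right _ (Finset.mem_sdiff.2 ⟨h, ha2⟩)
        · exact Finset.mem_union_left _ (Finset.mem_sdiff.2 ⟨hAS G ha1, h⟩)
      have h3 : (S F \ A F).card = 2 := by
        rw [Finset.card_sdiff_of_subset (hAS F), hSc, (hA F).2]; omega
      have h4 := (hAs F hF G hGm hFG).trans ((Finset.card_le_card h2).trans
        (Finset.card_union_le _ _))
      omega
    have h2 : (V \ (S F ∪ S G)).card ≤ d - s := by
      rw [Finset.card_sdiff_of_subset (Finset.union_subset (hSV F) (hSV G)), hV]
      have h5 : (S F ∪ S G).card = (S G \ S F).card + (S F).card := by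
        rw [Finset.union_comm, Finset.card_sdiff_add_card]
      have := hSc F
      omega
    refine le_trans ?_ (Nat.pow_le_pow_right (by norm_num) h2)
    rw [← Finset.card_powerset]
    refine Finset.card_le_card_of_injOn (fun B => B \ (S F ∪ S G)) ?_ ?_
    · intro B hB
      have hB1 := (Finset.mem_powersetCard.1 (Finset.mem_filter.1
        (Finset.mem_inter.1 (Finset.mem_coe.1 hB)).1).1).1
      exact Finset.mem_coe.2 (Finset.mem_powerset.2 (Finset.sdiff_subset_sdiff hB1 subset_rfl))
    · intro B hB B' hB' h
      obtain ⟨b1, b2⟩ := Finset.mem_inter.1 (Finset.mem_coe.1 hB)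
      obtain ⟨b1', b2'⟩ := Finset.mem_inter.1 (Finset.mem_coe.1 hB')
      have e1 : B ∩ S F = B' ∩ S F :=
        (Finset.mem_filter.1 b1).2.trans (Finset.mem_filter.1 b1').2.symm
      have e2 : B ∩ S G = B' ∩ S G :=
        (Finset.mem_filter.1 b2).2.trans (Finset.mem_filter.1 b2').2.symm
      ext a
      by_cases haF : a ∈ S F
      · simpa [haF] using Finset.ext_iff.1 e1 a
      by_cases haG : a ∈ S G
      · simpa [haG] using Finset.ext_iff.1 e2 a
      simpa [haF, haG] using Finset.ext_iff.1 h a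
  obtain ⟨F₀, hF₀, hmin⟩ := (range K).powerset.exists_min_image (fun F => (𝓑 F).card)
    ⟨∅, Finset.empty_mem_powerset _⟩
  refine ⟨(𝓑 F₀).card, ?_, ?_⟩
  · have h1 := hP1 F₀
    have h2 := hP2 F₀
    have h3 := two_pow_le_choose (n := d - 2) (t := t') (j := d - (P F₀).card)
      (by omega) (by omega) (by omega)
    rw [show d - 2 + 1 = d - 1 by omega] at h3
    exact h3.trans (Nat.mul_le_mul_right _ (hlow F₀))
  · have h1 := le_card_biUnion (range K).powerset 𝓑 (𝓑 F₀).card (2 ^ (d - s)) hmin hinter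
    rw [Finset.card_powerset, Finset.card_range] at h1
    refine h1.trans (card_le_two_mul_crossing hV _ fun B hB => ?_)
    obtain ⟨F, -, hF⟩ := Finset.mem_biUnion.1 hB
    obtain ⟨hB1, hB2⟩ := Finset.mem_filter.1 hF
    obtain ⟨hB3, hB4⟩ := Finset.mem_powersetCard.1 hB1
    exact ⟨hB3, hB4, hP3 F B hB3 hB2⟩

/-- If the `2d` vertices form a `d`-dimensional `(⌊d/2⌋ - t')`-neighborly polytope,
there are `Ω(2^d d^{5/2})` crossing pairs. -/
theorem crossing_number_nearly_neighborly_lower_bound :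
    ∀ t' : ℕ,
      ∃ (c : ℝ) (d₀ : ℕ), 0 < c ∧
        ∀ d : ℕ, d₀ ≤ d → ∀ V : Finset (Pt d), V.card = 2 * d → GenPos d V →
          ConvexPos d V → affineSpan ℝ (V : Set (Pt d)) = ⊤ →
          Neighborly d (d / 2 - t') V →
          c * 2 ^ d * (d : ℝ) ^ ((5 : ℝ) / 2) ≤
            ((crossingHyperedgePairs d V).ncard : ℝ) := by
  intro t'
  obtain ⟨d₁, hd₁⟩ := pow_le_two_pow_sqrt (t' + 4)
  refine ⟨1 / 16, max d₁ (2 * t' + 2), by norm_num, ?_⟩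
  intro d hd V hV hG _ _ hN
  have hdt : 2 * t' + 2 ≤ d := (le_max_right _ _).trans hd
  have hq := hd₁ d ((le_max_left _ _).trans hd)
  set s := Nat.sqrt d with hs
  set q := s / 2 with hqs
  have hss : s * s ≤ d := Nat.sqrt_le d
  have hsd : s ≤ d := Nat.sqrt_le_self d
  obtain ⟨m, hm, hcount⟩ := crossing_count (K := q) (s := s) hdt hV hG hN
    ((Nat.mul_le_mul_right _ (by omega)).trans hss)
  set N := (crossingHyperedgePairs d V).ncard
  have hD : (d - 1) ^ (t' + 1) ≤ d ^ (t' + 1) := Nat.pow_le_pow_left (by omega) _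
  have hm' : 2 ^ (d - 2) ≤ m * d ^ (t' + 1) := hm.trans (Nat.mul_le_mul_left _ hD)
  have h2d : 2 ^ d = 4 * 2 ^ (d - 2) := by
    rw [show (4 : ℕ) = 2 ^ 2 by norm_num, ← pow_add]; congr 1; omega
  have hdpos : 0 < d ^ (t' + 1) := Nat.pow_pos (by omega)
  have hsplit : d ^ (t' + 4) = d ^ 3 * d ^ (t' + 1) := by rw [← pow_add]; congr 1; omega
  have h8 : 8 * d ^ (t' + 1) ≤ 2 ^ q := by
    refine le_trans ?_ hq
    rw [hsplit]
    refine Nat.mul_le_mul_right _ ?_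
    calc 8 = 2 ^ 3 := by norm_num
      _ ≤ d ^ 3 := Nat.pow_le_pow_left (by omega) 3
  -- The total overlap with the other families eats up at most half of each family.
  have hover : 2 * (2 ^ q * 2 ^ (d - s)) ≤ m := by
    have h1 : 2 ^ q * 2 ^ (d - s) ≤ 2 ^ (d - q) := by
      rw [← pow_add]; exact Nat.pow_le_pow_right (by norm_num) (by omega)
    refine le_trans (Nat.mul_le_mul_left 2 h1) ?_
    refine Nat.le_of_mul_le_mul_right (le_trans ?_ hm') hdpos
    have h2 : 2 ^ (d - q) * 2 ^ q = 2 ^ d := by rw [← pow_add]; congr 1; omega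
    have h3 := Nat.mul_le_mul_left (2 ^ (d - q)) h8
    rw [h2, h2d] at h3
    nlinarith
  have h4N : 2 ^ q * m ≤ 4 * N := by
    have h1 : m ≤ 2 * (m - 2 ^ q * 2 ^ (d - s)) := by omega
    have h2 := Nat.mul_le_mul_left (2 ^ q) h1
    calc 2 ^ q * m ≤ 2 ^ q * (2 * (m - 2 ^ q * 2 ^ (d - s))) := h2
      _ = 2 * (2 ^ q * (m - 2 ^ q * 2 ^ (d - s))) := by ring
      _ ≤ 2 * (2 * N) := Nat.mul_le_mul_left _ hcount
      _ = 4 * N := by ring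
  have hfin : 2 ^ d * d ^ 3 ≤ 16 * N := by
    refine Nat.le_of_mul_le_mul_right ?_ hdpos
    calc 2 ^ d * d ^ 3 * d ^ (t' + 1) = 4 * (d ^ (t' + 4) * 2 ^ (d - 2)) := by
          rw [hsplit, h2d]; ring
      _ ≤ 4 * (2 ^ q * (m * d ^ (t' + 1))) :=
          Nat.mul_le_mul_left _ (Nat.mul_le_mul hq hm')
      _ = 4 * (2 ^ q * m) * d ^ (t' + 1) := by ring
      _ ≤ 4 * (4 * N) * d ^ (t' + 1) :=
          Nat.mul_le_mul_right _ (Nat.mul_le_mul_left _ h4N)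
      _ = 16 * N * d ^ (t' + 1) := by ring
  have hfinR : (2 : ℝ) ^ d * (d : ℝ) ^ 3 ≤ 16 * N := by exact_mod_cast hfin
  have hrpow : (d : ℝ) ^ ((5 : ℝ) / 2) ≤ (d : ℝ) ^ 3 := by
    rw [← Real.rpow_natCast (d : ℝ) 3]
    refine Real.rpow_le_rpow_of_exponent_le ?_ (by norm_num)
    exact_mod_cast (by omega : 1 ≤ d)
  have := mul_le_mul_of_nonneg_left hrpow (by positivity : (0 : ℝ) ≤ 2 ^ d)
  linarith
end
end

section
/- Let R be a set of r points in general position in ℝ² (no three collinear), with ⌈r/2⌉ of the points colored white and ⌊r/2⌋ colored black. Then the number of almost balanced directed lines of R, i.e., ordered pairs (w, b) with w a white point and b a black point of R such that the open half-plane on the positive side of the directed line from w to b (the set of points x with det(b − w, x − w) > 0) contains exactly as many white points of R as black points of R, is at least ⌊r/2⌋. -/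
/-!
The points are lifted to vectors of `ℝ³` at height `1`, and the lifts of the black points are
replaced by their antipodes (`lift3`). Black points are then exactly the vectors on one side of
a plane, and a line through a black point `b` and a white point `w` is almost balanced as soon as
the plane through their lifts, oriented from `b` to `w`, has `n - 1` vectors on its positive side,
where `N = r` and `n = ⌊r/2⌋` (`balanced_of_halving`). So it suffices to show, for `N` vectors in
general position and a set `E` of `n` of them cut off by a plane through the origin (a cell),
that at least `n` planes through some `u ∈ E` and `w ∉ E`, oriented from `u` to `w`, have `n - 1`
vectors on the positive side (`half_le_card_halving`). Let `F E` be the number of these planes.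

The one tool is `half_turn`: when an oriented plane makes half a turn about an axis, any function
of the set of vectors on its positive side changes by the telescoping sum of its changes at the
single vectors met. Applied to turns about a vector of the configuration (`vertex_turn`), it shows
that `F E - min (#E) (#Eᶜ)` does not change when the plane cutting off `E` moves over one vector
(`excess_insert`), hence it is the same for all cells (`excess_cell`). It remains to find one cell
`A` of size `n` with `n ≤ F A`.

Call two sets linked if a chain of exchanges of `u` and `w` on the positive side of the plane
through `u` and `w` leads from one to the other (`Step`). If `A` is linked to a set `B` disjoint
from `A`, both of size `n`, then along the chain the intersection with `A` shrinks from `n` elements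
to none. Each value `k < n` is thus crossed, by an exchange of an element of `A` with one outside
`A`; and such exchanges occur equally often in both orientations (`rows`), so each `k` provides
a plane counted by `F A` (`le_card_halving`). That `A` and `B` exist is a parity argument:
otherwise each set could be told apart from its complement by a class function with values in
`ZMod 2`, and two evaluations of the same sum over the planes through a generic axis would differ
(`exists_disjoint_linked`).
-/

noncomputable section

attribute [local instance] Classical.propDecidable

/-- Points of the plane `ℝ²`. -/
abbrev Pt2 := EuclideanSpace ℝ (Fin 2)

/-- The open half-plane on the positive (left) side of the directed line from
`w` to `b`: the points `x` with `det (b - w, x - w) > 0`. -/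
def PosSide (w b x : Pt2) : Prop :=
  0 < (b 0 - w 0) * (x 1 - w 1) - (b 1 - w 1) * (x 0 - w 0)

namespace BalancedLines

/-! ### Linear algebra in `ℝ³` -/

/-- The standard dot product of `ℝ³`, as an explicit polynomial. -/
def dot3 (a b : Fin 3 → ℝ) : ℝ := a 0 * b 0 + a 1 * b 1 + a 2 * b 2

/-- The determinant of three vectors of `ℝ³`, expanded along the last one. -/
def det3 (a b c : Fin 3 → ℝ) : ℝ :=
  (a 1 * b 2 - a 2 * b 1) * c 0 + (a 2 * b 0 - a 0 * b 2) * c 1 + (a 0 * b 1 - a 1 * b 0) * c 2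

/-- The cross product of `ℝ³`, so that `dot3 (cross3 a b) c = det3 a b c`. -/
def cross3 (a b : Fin 3 → ℝ) : Fin 3 → ℝ :=
  ![a 1 * b 2 - a 2 * b 1, a 2 * b 0 - a 0 * b 2, a 0 * b 1 - a 1 * b 0]

lemma dot3_cross3 (a b c : Fin 3 → ℝ) : dot3 (cross3 a b) c = det3 a b c := by
  simp [dot3, cross3, det3]

lemma det3_swap (a b c : Fin 3 → ℝ) : det3 b a c = - det3 a b c := by
  simp only [det3]; ring

lemma det3_rotate (a b c : Fin 3 → ℝ) : det3 b c a = det3 a b c := by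
  simp only [det3]; ring

lemma det3_self_left (a b : Fin 3 → ℝ) : det3 a b a = 0 := by
  simp only [det3]; ring

lemma det3_self_right (a b : Fin 3 → ℝ) : det3 a b b = 0 := by
  simp only [det3]; ring

lemma dot3_neg (a b : Fin 3 → ℝ) : dot3 (-a) b = - dot3 a b := by
  simp only [dot3, Pi.neg_apply]; ring

lemma dot3_add_smul (a z b : Fin 3 → ℝ) (s : ℝ) :
    dot3 (a + s • z) b = dot3 a b + s * dot3 z b := by
  simp only [dot3, Pi.add_apply, Pi.smul_apply, smul_eq_mul]; ring

lemma dot3_self_pos {y : Fin 3 → ℝ} (h : y ≠ 0) : 0 < dot3 y y := by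
  by_contra hn
  apply h
  simp only [dot3] at hn
  have h0 : y 0 = 0 := by nlinarith [mul_self_nonneg (y 0), mul_self_nonneg (y 1), mul_self_nonneg (y 2)]
  have h1 : y 1 = 0 := by nlinarith [mul_self_nonneg (y 0), mul_self_nonneg (y 1), mul_self_nonneg (y 2)]
  have h2 : y 2 = 0 := by nlinarith [mul_self_nonneg (y 0), mul_self_nonneg (y 1), mul_self_nonneg (y 2)]
  funext i; fin_cases i <;> simpa

/-- Moving `h` slightly in the direction `z` changes none of the nonzero signs of
`dot3 h (y i)`. -/
lemma exists_small {α : Type*} (S : Finset α) (y : α → Fin 3 → ℝ) (h z : Fin 3 → ℝ) :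
    ∃ s : ℝ, 0 < s ∧ ∀ i ∈ S, (0 < dot3 h (y i) → 0 < dot3 (h + s • z) (y i)) ∧
      (dot3 h (y i) < 0 → dot3 (h + s • z) (y i) < 0) := by
  have key : ∀ᶠ s : ℝ in nhdsWithin 0 (Set.Ioi 0), ∀ i ∈ S,
      (0 < dot3 h (y i) → 0 < dot3 (h + s • z) (y i)) ∧
      (dot3 h (y i) < 0 → dot3 (h + s • z) (y i) < 0) := by
    rw [Filter.eventually_all_finset]
    intro i _
    have hc : Filter.Tendsto (fun s : ℝ => dot3 (h + s • z) (y i)) (nhdsWithin 0 (Set.Ioi 0))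
        (nhds (dot3 h (y i))) := by
      have : Continuous (fun s : ℝ => dot3 h (y i) + s * dot3 z (y i)) := by fun_prop
      have h2 := (this.tendsto 0).mono_left (nhdsWithin_le_nhds (s := Set.Ioi 0))
      simpa [dot3_add_smul] using h2
    apply Filter.Eventually.and
    · by_cases hp : 0 < dot3 h (y i)
      · filter_upwards [hc.eventually (lt_mem_nhds hp)] with s hs _ using hs
      · exact Filter.Eventually.of_forall fun s hs => absurd hs hp
    · by_cases hp : dot3 h (y i) < 0
      · filter_upwards [hc.eventually (gt_mem_nhds hp)] with s hs _ using hs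
      · exact Filter.Eventually.of_forall fun s hs => absurd hs hp
  obtain ⟨s, hs, h2⟩ := (key.and self_mem_nhdsWithin).exists
  exact ⟨s, h2, hs⟩

/-- Some linear functional vanishes at none of finitely many given nonzero vectors. -/
lemma exists_generic {α : Type*} (S : Finset α) (y : α → Fin 3 → ℝ) (hy : ∀ i ∈ S, y i ≠ 0) :
    ∃ h' : Fin 3 → ℝ, ∀ i ∈ S, dot3 h' (y i) ≠ 0 := by
  induction S using Finset.induction_on with
  | empty => exact ⟨0, by simp⟩
  | insert a S ha ih =>
    obtain ⟨h1, H1⟩ := ih fun i hi => hy i (Finset.mem_insert_of_mem hi)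
    have hpos := dot3_self_pos (hy a (Finset.mem_insert_self _ _))
    by_cases h0 : dot3 h1 (y a) = 0
    · obtain ⟨s, hs, Hs⟩ := exists_small S y h1 (y a)
      refine ⟨h1 + s • y a, fun i hi => ?_⟩
      rcases Finset.mem_insert.1 hi with rfl | hi
      · rw [dot3_add_smul, h0]; positivity
      · rcases (H1 i hi).lt_or_gt with h | h
        · exact ((Hs i hi).2 h).ne
        · exact ((Hs i hi).1 h).ne'
    · refine ⟨h1, fun i hi => ?_⟩
      rcases Finset.mem_insert.1 hi with rfl | hi
      exacts [h0, H1 i hi]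

/-- A perturbation of `h` keeps all nonzero signs and makes every value nonzero. -/
lemma exists_perturb {α : Type*} (S : Finset α) (y : α → Fin 3 → ℝ) (hy : ∀ i ∈ S, y i ≠ 0)
    (h : Fin 3 → ℝ) :
    ∃ h' : Fin 3 → ℝ, ∀ i ∈ S, dot3 h' (y i) ≠ 0 ∧ (0 < dot3 h (y i) → 0 < dot3 h' (y i)) ∧
      (dot3 h (y i) < 0 → dot3 h' (y i) < 0) := by
  obtain ⟨z, hz⟩ := exists_generic S y hy
  obtain ⟨s, hs, Hs⟩ := exists_small S y h z
  refine ⟨h + s • z, fun i hi => ⟨?_, Hs i hi⟩⟩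
  rcases lt_trichotomy (dot3 h (y i)) 0 with h0 | h0 | h0
  · exact ((Hs i hi).2 h0).ne
  · rw [dot3_add_smul, h0, zero_add]; exact mul_ne_zero hs.ne' (hz i hi)
  · exact ((Hs i hi).1 h0).ne'

/-- A sum over ordered pairs vanishes if the two orders of each pair cancel. -/
lemma sum_pairs {ι M : Type*} [AddCommGroup M] (S : Finset ι) (h : ι → ι → M)
    (hh : ∀ u w, u ≠ w → h u w + h w u = 0) :
    ∑ u ∈ S, ∑ w ∈ S.erase u, h u w = 0 := by
  have : ∀ u ∈ S, ∑ w ∈ S.erase u, h u w = ∑ w ∈ S, if u = w then 0 else h u w := by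
    intro u hu
    rw [← Finset.sum_erase_add _ _ hu]
    simp only [if_true, add_zero]
    refine Finset.sum_congr rfl fun w hw => ?_
    rw [if_neg (Finset.ne_of_mem_erase hw).symm]
  rw [Finset.sum_congr rfl this, ← Finset.sum_product']
  refine Finset.sum_involution (fun p _ => p.swap) ?_ ?_ ?_ ?_
  · rintro ⟨u, w⟩ _
    by_cases huw : u = w
    · simp [huw]
    · simp [huw, Ne.symm huw, hh u w huw]
  · rintro ⟨u, w⟩ _ hne heq
    simp only [Prod.swap_prod_mk, Prod.mk.injEq] at heq
    exact hne (by simp [heq.2])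
  · rintro ⟨u, w⟩ hp
    simpa [and_comm] using hp
  · simp

/-! ### Half turns of a plane -/

/-- Telescoping over the upper segments of a finite set ordered by an injective key `τ`. -/
lemma sum_order {ι M : Type*} [AddCommGroup M] (τ : ι → ℝ) (G : Finset ι → M) (S : Finset ι)
    (hinj : Set.InjOn τ S) :
    ∑ w ∈ S, (G (S.filter (fun x => τ w ≤ τ x)) - G (S.filter (fun x => τ w < τ x))) =
      G S - G ∅ := by
  induction S using Finset.induction_on_min_value τ with
  | empty => simp
  | insert a S ha hmin ih =>
    have hlt : ∀ x ∈ S, τ a < τ x := fun x hx => lt_of_le_of_ne (hmin x hx) fun h =>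
      ha (hinj (by simp) (by simp [hx]) h ▸ hx)
    rw [Finset.sum_insert ha]
    have h1 : (insert a S).filter (fun x => τ a ≤ τ x) = insert a S := by
      apply Finset.filter_true_of_mem
      intro x hx
      rcases Finset.mem_insert.1 hx with rfl | hx
      exacts [le_rfl, hmin x hx]
    have h2 : (insert a S).filter (fun x => τ a < τ x) = S := by
      rw [Finset.filter_insert, if_neg (lt_irrefl _)]
      exact Finset.filter_true_of_mem hlt
    rw [h1, h2]
    have h3 : ∑ w ∈ S, (G ((insert a S).filter (fun x => τ w ≤ τ x)) -
        G ((insert a S).filter (fun x => τ w < τ x))) = G S - G ∅ := by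
      rw [← ih (hinj.mono (by simp))]
      refine Finset.sum_congr rfl fun w hw => ?_
      rw [Finset.filter_insert, if_neg (not_le.2 (hlt w hw)), Finset.filter_insert,
        if_neg (not_lt.2 (hlt w hw).le)]
    rw [h3]; abel

/-- Rotate an oriented plane containing the axis `g` by half a turn, from normal `q` to normal `-q`.
The set of vectors on its positive side changes from `{0 < q}` to `{q < 0}`, one vector `w` at
a time: `w` leaves if `0 < dot3 q (v w)` and enters otherwise, and at the moment of change the
plane is spanned by `g` and `v w`. The change of any set function `f` is the sum of the single
changes. -/
lemma half_turn {ι M : Type*} [AddCommGroup M] (v : ι → Fin 3 → ℝ) (S : Finset ι)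
    (g q : Fin 3 → ℝ) (hqg : dot3 q g = 0) (hq : ∀ x ∈ S, dot3 q (v x) ≠ 0)
    (hgen : ∀ x ∈ S, ∀ y ∈ S, x ≠ y → det3 g (v x) (v y) ≠ 0) (f : Finset ι → M) :
    ∑ w ∈ S, (if 0 < dot3 q (v w) then
        f (S.filter fun x => 0 < det3 g (v w) (v x)) -
          f (insert w (S.filter fun x => 0 < det3 g (v w) (v x)))
      else
        f (insert w (S.filter fun x => det3 g (v w) (v x) < 0)) -
          f (S.filter fun x => det3 g (v w) (v x) < 0)) =
    f (S.filter fun x => dot3 q (v x) < 0) - f (S.filter fun x => 0 < dot3 q (v x)) := by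
  -- `τ x` orders the vectors by the angle at which the rotating plane meets `v x`;
  -- the sets on the positive side are the ones below with `T` an upper segment for `τ`.
  set τ : ι → ℝ := fun x => - dot3 (cross3 g q) (v x) / dot3 q (v x) with hτ
  have hid : ∀ w x, dot3 q q * det3 g (v w) (v x) =
      dot3 q (v w) * dot3 (cross3 g q) (v x) - dot3 q (v x) * dot3 (cross3 g q) (v w) := by
    intro w x
    have : dot3 q q * det3 g (v w) (v x) - dot3 q g * det3 q (v w) (v x) =
      dot3 q (v w) * dot3 (cross3 g q) (v x) - dot3 q (v x) * dot3 (cross3 g q) (v w) := by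
      simp [dot3, det3, cross3]; ring
    rw [← this, hqg]; ring
  have hid2 : ∀ w ∈ S, ∀ x ∈ S, dot3 q q * det3 g (v w) (v x) =
      dot3 q (v w) * dot3 q (v x) * (τ w - τ x) := by
    intro w hw x hx
    have h1 := hq w hw
    have h2 := hq x hx
    rw [hid, hτ]; field_simp; ring
  have hqq : ∀ w ∈ S, 0 < dot3 q q := by
    intro w hw
    apply dot3_self_pos
    rintro rfl
    exact hq w hw (by simp [dot3])
  have hinj : Set.InjOn τ S := by
    intro x hx y hy hxy
    by_contra hne
    have := hid2 x hx y hy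
    rw [hxy, sub_self, mul_zero] at this
    exact (mul_ne_zero (hqq x hx).ne' (hgen x hx y hy hne)) this
  have key := sum_order τ (fun T => f (S.filter fun x =>
    if x ∈ T then dot3 q (v x) < 0 else 0 < dot3 q (v x))) S hinj
  have e1 : (S.filter fun x => if x ∈ S then dot3 q (v x) < 0 else 0 < dot3 q (v x)) =
      S.filter fun x => dot3 q (v x) < 0 := by
    apply Finset.filter_congr; intro x hx; simp [hx]
  simp only [e1, Finset.notMem_empty, if_false] at key
  rw [← key]
  refine Finset.sum_congr rfl fun w hw => ?_
  have sgn : ∀ x ∈ S, (0 < det3 g (v w) (v x) ↔ 0 < dot3 q (v w) * dot3 q (v x) * (τ w - τ x)) ∧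
      (det3 g (v w) (v x) < 0 ↔ dot3 q (v w) * dot3 q (v x) * (τ w - τ x) < 0) := by
    intro x hx
    rw [← hid2 w hw x hx]
    have := hqq w hw
    exact ⟨(mul_pos_iff_of_pos_left this).symm, ⟨fun h => mul_neg_of_pos_of_neg this h, fun h => by
      by_contra hn; nlinarith⟩⟩
  have hτne : ∀ x ∈ S, x ≠ w → τ x ≠ τ w := fun x hx hne h => hne (hinj hx hw h)
  split_ifs with hpos
  · congr 2
    · ext x
      simp only [Finset.mem_filter]
      refine and_congr_right fun hx => ?_
      rw [(sgn x hx).1]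
      by_cases hle : τ w ≤ τ x
      · rw [if_pos ⟨hx, hle⟩]
        constructor
        · intro h
          by_contra hn
          have h0 : 0 ≤ dot3 q (v w) * dot3 q (v x) := mul_nonneg hpos.le (not_lt.1 hn)
          nlinarith
        · intro h
          have hne : x ≠ w := by rintro rfl; exact lt_asymm h hpos
          have : τ w < τ x := lt_of_le_of_ne hle (hτne x hx hne).symm
          exact mul_pos_of_neg_of_neg (mul_neg_of_pos_of_neg hpos h) (by linarith)
      · rw [if_neg (fun h => hle h.2)]
        have : 0 < τ w - τ x := by linarith [not_le.1 hle]
        rw [mul_pos_iff_of_pos_right this, mul_pos_iff_of_pos_left hpos]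
    · ext x
      simp only [Finset.mem_filter, Finset.mem_insert]
      by_cases hxw : x = w
      · subst hxw; simp [hw, hpos]
      simp only [hxw, false_or]
      refine and_congr_right fun hx => ?_
      rw [(sgn x hx).1]
      by_cases hle : τ w < τ x
      · rw [if_pos ⟨hx, hle⟩]
        have : τ w - τ x < 0 := by linarith
        constructor
        · intro h
          by_contra hn
          have h0 : 0 ≤ dot3 q (v w) * dot3 q (v x) := mul_nonneg hpos.le (not_lt.1 hn)
          nlinarith
        · intro h
          exact mul_pos_of_neg_of_neg (mul_neg_of_pos_of_neg hpos h) (by linarith)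
      · rw [if_neg (fun h => hle h.2)]
        have : 0 < τ w - τ x := sub_pos.2 (lt_of_le_of_ne (not_lt.1 hle) (hτne x hx hxw))
        rw [mul_pos_iff_of_pos_right this, mul_pos_iff_of_pos_left hpos]
  · have hneg : dot3 q (v w) < 0 := lt_of_le_of_ne (not_lt.1 hpos) (hq w hw)
    congr 2
    · ext x
      simp only [Finset.mem_filter, Finset.mem_insert]
      by_cases hxw : x = w
      · subst hxw; simp [hw, hneg]
      simp only [hxw, false_or]
      refine and_congr_right fun hx => ?_
      rw [(sgn x hx).2]
      by_cases hle : τ w ≤ τ x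
      · rw [if_pos ⟨hx, hle⟩]
        have : τ w - τ x < 0 := sub_neg.2 (lt_of_le_of_ne hle (hτne x hx hxw).symm)
        constructor
        · intro h
          by_contra hn
          have h0 : dot3 q (v w) * dot3 q (v x) ≤ 0 :=
            mul_nonpos_of_nonpos_of_nonneg hneg.le (not_lt.1 hn)
          nlinarith
        · intro h
          exact mul_neg_of_pos_of_neg (mul_pos_of_neg_of_neg hneg h) this
      · rw [if_neg (fun h => hle h.2)]
        have : 0 < τ w - τ x := by linarith [not_le.1 hle]
        constructor
        · intro h
          by_contra hn
          have h0 : 0 ≤ dot3 q (v w) * dot3 q (v x) :=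
            mul_nonneg_of_nonpos_of_nonpos hneg.le (not_lt.1 hn)
          nlinarith
        · intro h
          exact mul_neg_of_neg_of_pos (mul_neg_of_neg_of_pos hneg h) this
    · ext x
      simp only [Finset.mem_filter]
      refine and_congr_right fun hx => ?_
      rw [(sgn x hx).2]
      by_cases hle : τ w < τ x
      · rw [if_pos ⟨hx, hle⟩]
        have : τ w - τ x < 0 := by linarith
        constructor
        · intro h
          by_contra hn
          have h0 : dot3 q (v w) * dot3 q (v x) ≤ 0 :=
            mul_nonpos_of_nonpos_of_nonneg hneg.le (not_lt.1 hn)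
          nlinarith
        · intro h
          exact mul_neg_of_pos_of_neg (mul_pos_of_neg_of_neg hneg h) this
      · rw [if_neg (fun h => hle h.2)]
        constructor
        · intro h
          by_contra hn
          have h0 : 0 ≤ dot3 q (v w) * dot3 q (v x) :=
            mul_nonneg_of_nonpos_of_nonpos hneg.le (not_lt.1 hn)
          nlinarith [not_lt.1 hle]
        · intro h
          have hne : x ≠ w := by rintro rfl; exact lt_asymm h hneg
          have : 0 < τ w - τ x := sub_pos.2 (lt_of_le_of_ne (not_lt.1 hle) (hτne x hx hne))
          exact mul_neg_of_neg_of_pos (mul_neg_of_neg_of_pos hneg h) this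

/-! ### Configurations in general position -/

/-- General position of a vector configuration in `ℝ³`: three distinct indices give linearly
independent vectors, and so do two (which follows from the former only if there is a third). -/
structure GenPos {ι : Type*} (V : ι → Fin 3 → ℝ) : Prop where
  triple : ∀ i j k, i ≠ j → i ≠ k → j ≠ k → det3 (V i) (V j) (V k) ≠ 0
  pair : ∀ i j, i ≠ j → cross3 (V i) (V j) ≠ 0

/-- The indices of the vectors strictly on the positive side of the plane through `V u` and
`V w`, oriented by `cross3 (V u) (V w)`. -/
def leftSet {ι : Type*} [Fintype ι] (V : ι → Fin 3 → ℝ) (u w : ι) : Finset ι :=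
  Finset.univ.filter fun x => 0 < det3 (V u) (V w) (V x)

section
variable {ι : Type*} [Fintype ι] {V : ι → Fin 3 → ℝ}

lemma mem_leftSet {u w x : ι} : x ∈ leftSet V u w ↔ 0 < det3 (V u) (V w) (V x) := by
  simp [leftSet]

lemma fst_notMem_leftSet (u w : ι) : u ∉ leftSet V u w := by
  simp [mem_leftSet, det3_self_left]

lemma snd_notMem_leftSet (u w : ι) : w ∉ leftSet V u w := by
  simp [mem_leftSet, det3_self_right]

lemma mem_leftSet_swap {u w x : ι} : x ∈ leftSet V w u ↔ det3 (V u) (V w) (V x) < 0 := by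
  rw [mem_leftSet, det3_swap, neg_pos]

lemma compl_insert_leftSet (hV : GenPos V) {u w : ι} (huw : u ≠ w) :
    (insert u (leftSet V u w))ᶜ = insert w (leftSet V w u) := by
  ext x
  rw [Finset.mem_compl, Finset.mem_insert, Finset.mem_insert, mem_leftSet_swap (u := u) (w := w),
    mem_leftSet, not_or, not_lt]
  by_cases hxu : x = u
  · subst hxu; simp [huw, det3_self_left]
  by_cases hxw : x = w
  · subst hxw; simp [hxu, det3_self_right]
  have := hV.triple u w x huw (Ne.symm hxu) (Ne.symm hxw)
  simp only [hxu, hxw, false_or, not_false_eq_true, true_and]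
  exact ⟨fun h => lt_of_le_of_ne h this, le_of_lt⟩

lemma compl_insert_leftSet' (hV : GenPos V) {u w : ι} (huw : u ≠ w) :
    (insert w (leftSet V u w))ᶜ = insert u (leftSet V w u) := by
  ext x
  rw [Finset.mem_compl, Finset.mem_insert, Finset.mem_insert, mem_leftSet_swap (u := u) (w := w),
    mem_leftSet, not_or, not_lt]
  by_cases hxu : x = u
  · subst hxu; simp [huw, det3_self_left]
  by_cases hxw : x = w
  · subst hxw; simp [hxu, det3_self_right]
  have := hV.triple u w x huw (Ne.symm hxu) (Ne.symm hxw)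
  simp only [hxu, hxw, false_or, not_false_eq_true, true_and]
  exact ⟨fun h => lt_of_le_of_ne h this, le_of_lt⟩

/-- `half_turn` for a plane rotating about the vector `V u` of the configuration itself. -/
lemma vertex_turn {M : Type*} [AddCommGroup M] (hV : GenPos V) (u : ι) (q : Fin 3 → ℝ)
    (hqu : dot3 q (V u) = 0) (hq : ∀ x, x ≠ u → dot3 q (V x) ≠ 0) (f : Finset ι → M) :
    ∑ w ∈ Finset.univ.erase u, (if 0 < dot3 q (V w) then
        f (leftSet V u w) - f (insert w (leftSet V u w))
      else f (insert w (leftSet V w u)) - f (leftSet V w u)) =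
    f (Finset.univ.filter fun x => dot3 q (V x) < 0) -
      f (Finset.univ.filter fun x => 0 < dot3 q (V x)) := by
  have key := half_turn V (Finset.univ.erase u) (V u) q hqu (by simpa using hq)
    (by
      intro x hx y hy hxy
      exact hV.triple u x y (by simpa using (Finset.ne_of_mem_erase hx).symm)
        (by simpa using (Finset.ne_of_mem_erase hy).symm) hxy) f
  have h1 : ∀ w, (Finset.univ.erase u).filter (fun x => 0 < det3 (V u) (V w) (V x)) =
      leftSet V u w := by
    intro w; ext x
    simp only [Finset.mem_filter, Finset.mem_erase, Finset.mem_univ, and_true, mem_leftSet]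
    refine ⟨fun h => h.2, fun h => ⟨?_, h⟩⟩
    rintro rfl; simp [det3_self_left] at h
  have h2 : ∀ w, (Finset.univ.erase u).filter (fun x => det3 (V u) (V w) (V x) < 0) =
      leftSet V w u := by
    intro w; ext x
    simp only [Finset.mem_filter, Finset.mem_erase, Finset.mem_univ, and_true, mem_leftSet_swap]
    refine ⟨fun h => h.2, fun h => ⟨?_, h⟩⟩
    rintro rfl; simp [det3_self_left] at h
  have h3 : (Finset.univ.erase u).filter (fun x => 0 < dot3 q (V x)) =
      Finset.univ.filter fun x => 0 < dot3 q (V x) := by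
    ext x
    simp only [Finset.mem_filter, Finset.mem_erase, Finset.mem_univ, and_true, true_and]
    refine ⟨fun h => h.2, fun h => ⟨?_, h⟩⟩
    rintro rfl; simp [hqu] at h
  have h4 : (Finset.univ.erase u).filter (fun x => dot3 q (V x) < 0) =
      Finset.univ.filter fun x => dot3 q (V x) < 0 := by
    ext x
    simp only [Finset.mem_filter, Finset.mem_erase, Finset.mem_univ, and_true, true_and]
    refine ⟨fun h => h.2, fun h => ⟨?_, h⟩⟩
    rintro rfl; simp [hqu] at h
  simp only [h1, h2, h3, h4] at key
  exact key

/-! ### Exchange classes -/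

/-- The two sets obtained from the positive side of the plane through `V u` and `V w` by adding
one of `u`, `w`. They are cut out by planes close to that one, and as `u` and `w` are exchanged
the cardinality does not change. -/
def Step (V : ι → Fin 3 → ℝ) (A B : Finset ι) : Prop :=
  ∃ u w, u ≠ w ∧ A = insert u (leftSet V u w) ∧ B = insert w (leftSet V u w)

lemma Step.compl (hV : GenPos V) {A B : Finset ι} (h : Step V A B) : Step V Aᶜ Bᶜ := by
  obtain ⟨u, w, huw, rfl, rfl⟩ := h
  exact ⟨w, u, huw.symm, compl_insert_leftSet hV huw, compl_insert_leftSet' hV huw⟩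

lemma linked_compl (hV : GenPos V) {A B : Finset ι} (h : Relation.EqvGen (Step V) A B) :
    Relation.EqvGen (Step V) Aᶜ Bᶜ := by
  induction h with
  | rel _ _ h => exact .rel _ _ (h.compl hV)
  | refl _ => exact .refl _
  | symm _ _ _ ih => exact .symm _ _ ih
  | trans _ _ _ _ _ ih1 ih2 => exact .trans _ _ _ ih1 ih2

lemma linked_insert {u w : ι} (huw : u ≠ w) :
    Relation.EqvGen (Step V) (insert u (leftSet V u w)) (insert w (leftSet V u w)) :=
  .rel _ _ ⟨u, w, huw, rfl, rfl⟩

/-- Consider all planes through a fixed generic axis `g` and a vector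
`V u`: for each `u`, turn about `V u` from one side of the plane `V u`, `g` to the other, and add
the changes of `Y ↦ φ Y (insert u Y)`. If `φ` depends only on the classes of its arguments, the
contributions of `(u, w)` and `(w, u)` cancel, since `u` and `w` may be exchanged within
a class. -/
lemma star {M : Type*} [AddCommGroup M] (hV : GenPos V) (g : Fin 3 → ℝ)
    (hg : ∀ u x, x ≠ u → det3 (V u) g (V x) ≠ 0)
    (φ : Finset ι → Finset ι → M)
    (hφ : ∀ A B C D, Relation.EqvGen (Step V) A B → Relation.EqvGen (Step V) C D →
      φ A C = φ B D) :
    ∑ u, (φ (Finset.univ.filter fun x => det3 (V u) g (V x) < 0)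
        (insert u (Finset.univ.filter fun x => det3 (V u) g (V x) < 0)) -
      φ (Finset.univ.filter fun x => 0 < det3 (V u) g (V x))
        (insert u (Finset.univ.filter fun x => 0 < det3 (V u) g (V x)))) = 0 := by
  have key := fun u => vertex_turn hV u (cross3 (V u) g)
    (by rw [dot3_cross3, det3_self_left]) (by intro x hx; rw [dot3_cross3]; exact hg u x hx)
    (fun Y => φ Y (insert u Y))
  simp only [dot3_cross3] at key
  rw [Finset.sum_congr rfl fun u _ => (key u).symm]
  refine sum_pairs _ _ fun u w huw => ?_
  have hs : det3 (V w) g (V u) = - det3 (V u) g (V w) := by simp only [det3]; ring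
  have hne := hg u w huw.symm
  have e1 : ∀ a b, a ≠ b → φ (leftSet V a b) (insert a (leftSet V a b)) =
      φ (leftSet V a b) (insert b (leftSet V a b)) := fun a b hab =>
    hφ _ _ _ _ (.refl _) (linked_insert hab)
  have e2 : ∀ a b, a ≠ b → φ (insert a (leftSet V a b)) (insert b (insert a (leftSet V a b))) =
      φ (insert b (leftSet V a b)) (insert a (insert b (leftSet V a b))) := fun a b hab => by
    rw [Finset.insert_comm]; exact hφ _ _ _ _ (linked_insert hab) (.refl _)
  rw [hs]
  rcases hne.lt_or_gt with h | h
  · rw [if_neg (not_lt.2 h.le), if_pos (by linarith), e2 w u huw.symm, e1 w u huw.symm]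
    abel
  · rw [if_pos h, if_neg (by linarith), e2 u w huw, e1 u w huw]
    abel

/-- Some class contains two disjoint sets of size `⌊N/2⌋`.

Otherwise neither `A`, `Aᶜ` nor `Y`, `(insert u Y)ᶜ` are ever in one class, so comparing the
numbers `ρ` of the classes gives `ZMod 2`-valued class functions `s` and `t` with
`s Aᶜ = s A + 1` and `t (insert u Y)ᶜ Yᶜ = t Y (insert u Y) + 1`. Let `Y u` be the positive side
of the plane through `V u` and a generic axis `g`. Applying `star` to `(s A + s C) * t A C` shows
that the sum of `s (Y u) + s (insert u (Y u))` over all `u` is `0`. But by `half_turn` about `g`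
this sum is the change of `s` from a set to its complement, which is `1`. -/
theorem exists_disjoint_linked (hV : GenPos V) (hN : 2 ≤ Fintype.card ι) :
    ∃ A B : Finset ι, Relation.EqvGen (Step V) A B ∧ Disjoint A B ∧
      A.card = Fintype.card ι / 2 ∧ B.card = Fintype.card ι / 2 := by
  by_contra hno
  push Not at hno
  have card_linked : ∀ A B : Finset ι, Relation.EqvGen (Step V) A B → A.card = B.card := by
    intro A B h
    induction h with
    | rel _ _ h =>
      obtain ⟨u, w, huw, rfl, rfl⟩ := h
      rw [Finset.card_insert_of_notMem (fst_notMem_leftSet u w),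
        Finset.card_insert_of_notMem (snd_notMem_leftSet u w)]
    | refl _ => rfl
    | symm _ _ _ ih => exact ih.symm
    | trans _ _ _ _ _ ih1 ih2 => exact ih1.trans ih2
  obtain ⟨ρ, hρ⟩ : ∃ ρ : Finset ι → ℕ, ∀ A B, ρ A = ρ B ↔ Relation.EqvGen (Step V) A B := by
    let st : Setoid (Finset ι) := Relation.EqvGen.setoid (Step V)
    refine ⟨fun A => (Finite.equivFin (Quotient st) (Quotient.mk st A)).val, fun A B => ?_⟩
    rw [Fin.val_inj, (Finite.equivFin (Quotient st)).injective.eq_iff, Quotient.eq]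
    rfl
  have hcompl : ∀ A : Finset ι, ρ A ≠ ρ Aᶜ := by
    intro A h
    have hl := (hρ _ _).1 h
    have hc := card_linked _ _ hl
    have := Finset.card_compl_add_card A
    have := Finset.card_le_univ A
    exact hno A Aᶜ hl disjoint_compl_right (by omega) (by omega)
  have hedge : ∀ (u : ι) (Y : Finset ι), u ∉ Y → ρ Y ≠ ρ (insert u Y)ᶜ := by
    intro u Y hu h
    have hl := (hρ _ _).1 h
    have hc := card_linked _ _ hl
    have h1 := Finset.card_compl_add_card (insert u Y)
    rw [Finset.card_insert_of_notMem hu] at h1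
    refine hno Y (insert u Y)ᶜ hl ?_ (by omega) (by omega)
    exact Disjoint.mono_left (Finset.subset_insert u Y) disjoint_compl_right
  have hρc : ∀ A B, Relation.EqvGen (Step V) A B → ρ Aᶜ = ρ Bᶜ := fun A B h =>
    (hρ _ _).2 (linked_compl hV h)
  set s : Finset ι → ZMod 2 := fun A => if ρ A < ρ Aᶜ then 1 else 0 with hs
  set t : Finset ι → Finset ι → ZMod 2 := fun Y Z => if ρ Y < ρ Zᶜ then 1 else 0 with ht
  have s_compl : ∀ A, s Aᶜ = s A + 1 := by
    intro A
    have := hcompl A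
    simp only [hs, compl_compl]
    rcases lt_or_gt_of_ne this with h | h
    · rw [if_neg (by omega), if_pos h]; decide
    · rw [if_pos h, if_neg (by omega)]; decide
  have t_compl : ∀ u Y, u ∉ Y → t (insert u Y)ᶜ Yᶜ = t Y (insert u Y) + 1 := by
    intro u Y hu
    have := hedge u Y hu
    simp only [ht, compl_compl]
    rcases lt_or_gt_of_ne this with h | h
    · rw [if_neg (by omega), if_pos h]; decide
    · rw [if_pos h, if_neg (by omega)]; decide
  -- `g` lies on no plane spanned by two vectors of the configuration.
  obtain ⟨g, hg⟩ := exists_generic (Finset.univ.filter fun p : ι × ι => p.1 ≠ p.2)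
    (fun p => cross3 (V p.1) (V p.2)) (by
      rintro ⟨a, b⟩ h; exact hV.pair a b (by simpa using h))
  have hg' : ∀ u x, x ≠ u → det3 (V u) g (V x) ≠ 0 := by
    intro u x hxu
    have h1 := hg (x, u) (by simpa using hxu)
    have : dot3 g (cross3 (V x) (V u)) = det3 (V u) g (V x) := by
      simp [dot3, cross3, det3]; ring
    rwa [this] at h1
  obtain ⟨z, hz⟩ := exists_generic (Finset.univ : Finset ι) (fun x => cross3 (V x) g) (by
    intro x _ h0
    obtain ⟨u, hu⟩ := Fintype.exists_ne_of_one_lt_card (by omega) x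
    apply hg' x u hu
    rw [← dot3_cross3, h0]; simp [dot3])
  have hq : ∀ x, dot3 (cross3 g z) (V x) ≠ 0 := by
    intro x
    have h1 := hz x (Finset.mem_univ _)
    have : dot3 z (cross3 (V x) g) = dot3 (cross3 g z) (V x) := by
      simp [dot3, cross3]; ring
    rwa [this] at h1
  set q := cross3 g z with hqdef
  set Y : ι → Finset ι := fun u => Finset.univ.filter fun x => 0 < det3 (V u) g (V x) with hY
  set Y' : ι → Finset ι := fun u => Finset.univ.filter fun x => det3 (V u) g (V x) < 0 with hY'
  have hYu : ∀ u, u ∉ Y u := fun u => by simp [hY, det3_self_left]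
  have hYY' : ∀ u, (insert u (Y u))ᶜ = Y' u := by
    intro u; ext x
    simp only [hY, hY', Finset.mem_compl, Finset.mem_insert, Finset.mem_filter, Finset.mem_univ,
      true_and, not_or, not_lt]
    by_cases hxu : x = u
    · subst hxu; simp [det3_self_left]
    · simp only [hxu, not_false_eq_true, true_and]
      exact ⟨fun h => lt_of_le_of_ne h (hg' u x hxu), le_of_lt⟩
  have hYY'2 : ∀ u, insert u (Y' u) = (Y u)ᶜ := by
    intro u
    rw [← hYY', Finset.compl_insert, Finset.insert_erase (by simpa using hYu u)]
  have h_star := star hV g hg' (fun A C => (s A + s C) * t A C) (by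
    intro A B C D hAB hCD
    simp only [hs, ht, (hρ _ _).2 hAB, (hρ _ _).2 hCD, hρc _ _ hAB, hρc _ _ hCD])
  have e1 : ∀ u, (s (Y' u) + s (insert u (Y' u))) * t (Y' u) (insert u (Y' u)) -
      (s (Y u) + s (insert u (Y u))) * t (Y u) (insert u (Y u)) =
      s (Y u) + s (insert u (Y u)) := by
    intro u
    rw [hYY'2 u, ← hYY' u, s_compl, s_compl, t_compl u _ (hYu u)]
    generalize s (Y u) = a
    generalize s (insert u (Y u)) = b
    generalize t (Y u) (insert u (Y u)) = c
    revert a b c; decide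
  have sum0 : ∑ u, (s (Y u) + s (insert u (Y u))) = 0 := by
    rw [← h_star]
    exact Finset.sum_congr rfl fun u _ => (e1 u).symm
  have path := half_turn V Finset.univ g q (by simp [hqdef, dot3, cross3]; ring)
    (fun x _ => hq x) (by
      intro x _ y _ hxy h
      apply hg' x y hxy.symm
      rw [det3_swap, h, neg_zero]) s
  have f1 : ∀ w, (Finset.univ.filter fun x => 0 < det3 g (V w) (V x)) = Y' w := by
    intro w; ext x; simp [hY', det3_swap g (V w)]
  have f2 : ∀ w, (Finset.univ.filter fun x => det3 g (V w) (V x) < 0) = Y w := by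
    intro w; ext x; simp [hY, det3_swap g (V w)]
  have f3 : (Finset.univ.filter fun x => dot3 q (V x) < 0) =
      (Finset.univ.filter fun x => 0 < dot3 q (V x))ᶜ := by
    ext x
    simp only [Finset.mem_filter, Finset.mem_univ, true_and, Finset.mem_compl, not_lt]
    exact ⟨le_of_lt, fun h => lt_of_le_of_ne h (hq x)⟩
  simp only [f1, f2, f3, s_compl] at path
  have e2 : ∀ w, (if 0 < dot3 q (V w) then s (Y' w) - s (insert w (Y' w))
      else s (insert w (Y w)) - s (Y w)) = s (Y w) + s (insert w (Y w)) := by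
    intro w
    rw [hYY'2 w, ← hYY' w, s_compl, s_compl]
    generalize s (Y w) = a
    generalize s (insert w (Y w)) = b
    split_ifs <;> (revert a b; decide)
  rw [Finset.sum_congr rfl fun w _ => e2 w, sum0, add_sub_cancel_left] at path
  exact absurd path (by decide)

end

/-! ### Planes separating a set from its complement -/

section
variable {ι : Type*} [Fintype ι] {V : ι → Fin 3 → ℝ}

lemma exists_perp (hV : GenPos V) (u : ι) :
    ∃ q : Fin 3 → ℝ, dot3 q (V u) = 0 ∧ ∀ x, x ≠ u → dot3 q (V x) ≠ 0 := by
  obtain ⟨z, hz⟩ := exists_generic (Finset.univ.erase u) (fun x => cross3 (V x) (V u))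
    (fun x hx => hV.pair _ _ (Finset.ne_of_mem_erase hx))
  refine ⟨cross3 (V u) z, by rw [dot3_cross3, det3_self_left], fun x hx => ?_⟩
  have h1 := hz x (by simpa using hx)
  rwa [show dot3 z (cross3 (V x) (V u)) = dot3 (cross3 (V u) z) (V x) by
    simp [dot3, cross3]; ring] at h1

/-- A full turn about `V u` changes nothing; the two passages over each `V w` are paired. -/
lemma full_turn {M : Type*} [AddCommGroup M] (hV : GenPos V) (u : ι) (f : Finset ι → M) :
    ∑ w ∈ Finset.univ.erase u,
      ((f (leftSet V u w) - f (insert w (leftSet V u w))) +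
        (f (insert w (leftSet V w u)) - f (leftSet V w u))) = 0 := by
  obtain ⟨q, hqu, hq⟩ := exists_perp hV u
  have k1 := vertex_turn hV u q hqu hq f
  have k2 := vertex_turn hV u (-q) (by rw [dot3_neg, hqu, neg_zero])
    (fun x hx => by rw [dot3_neg]; exact neg_ne_zero.2 (hq x hx)) f
  simp only [dot3_neg, neg_pos, neg_lt_zero] at k2
  have h0 : (f (Finset.univ.filter fun x => dot3 q (V x) < 0) -
      f (Finset.univ.filter fun x => 0 < dot3 q (V x))) +
      (f (Finset.univ.filter fun x => 0 < dot3 q (V x)) -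
      f (Finset.univ.filter fun x => dot3 q (V x) < 0)) = 0 := by abel
  rw [← h0, ← k1, ← k2, ← Finset.sum_add_distrib]
  refine Finset.sum_congr rfl fun w hw => ?_
  rcases (hq w (Finset.ne_of_mem_erase hw)).lt_or_gt with h | h
  · rw [if_neg h.not_gt, if_pos h]; abel
  · rw [if_neg h.not_gt, if_pos h]

/-- Among the planes through `u ∈ A` and `w ∉ A` with `n - 1` vectors on the positive side, `k` of
them from `A`, as many are oriented from `u` to `w` as from `w` to `u`. This follows by summing
`full_turn` over `u ∈ A` for the indicator of `#(Y ∩ A) = k` and `#Y < n`: the planes through two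
elements of `A` contribute nothing. -/
lemma rows (hV : GenPos V) (A : Finset ι) (n k : ℕ) :
    ∑ u ∈ A, ∑ w ∈ Aᶜ,
      (if (leftSet V u w).card + 1 = n ∧ (leftSet V u w ∩ A).card = k then (1 : ℤ) else 0) =
    ∑ u ∈ A, ∑ w ∈ Aᶜ,
      (if (leftSet V w u).card + 1 = n ∧ (leftSet V w u ∩ A).card = k then (1 : ℤ) else 0) := by
  -- Adding an element outside `A` changes `f` exactly when `Y` has `n - 1` elements.
  set f : Finset ι → ℤ := fun Y => if (Y ∩ A).card = k ∧ Y.card + 1 ≤ n then 1 else 0 with hf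
  set t : ι → ι → ℤ := fun u w => (f (leftSet V u w) - f (insert w (leftSet V u w))) +
        (f (insert w (leftSet V w u)) - f (leftSet V w u)) with ht
  have h0 : ∑ u ∈ A, ∑ w ∈ Finset.univ.erase u, t u w = 0 :=
    Finset.sum_eq_zero fun u _ => full_turn hV u f
  have hsplit : ∀ u ∈ A, ∑ w ∈ Finset.univ.erase u, t u w =
      ∑ w ∈ A.erase u, t u w + ∑ w ∈ Aᶜ, t u w := by
    intro u hu
    rw [← Finset.sum_union]
    · congr 1
      ext x
      simp only [Finset.mem_erase, Finset.mem_univ, and_true, Finset.mem_union, Finset.mem_compl]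
      by_cases hx : x ∈ A
      · simp [hx]
      · simp only [hx, and_false, false_or, not_false_eq_true, iff_true]
        rintro rfl; exact hx hu
    · exact Finset.disjoint_left.2 fun x hx hx' =>
        (Finset.mem_compl.1 hx') (Finset.mem_of_mem_erase hx)
  have hins : ∀ (X : Finset ι) (a b : ι), a ∉ X → b ∉ X → a ∈ A → b ∈ A →
      f (insert a X) = f (insert b X) := by
    intro X a b ha hb haA hbA
    simp only [hf, Finset.insert_inter_of_mem haA, Finset.insert_inter_of_mem hbA,
      Finset.card_insert_of_notMem ha, Finset.card_insert_of_notMem hb]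
    rw [Finset.card_insert_of_notMem (fun h => ha (Finset.mem_inter.1 h).1),
      Finset.card_insert_of_notMem (fun h => hb (Finset.mem_inter.1 h).1)]
  have hout : ∀ (X : Finset ι) (a : ι), a ∉ X → a ∉ A → f X - f (insert a X) =
      if X.card + 1 = n ∧ (X ∩ A).card = k then (1 : ℤ) else 0 := by
    intro X a ha haA
    simp only [hf, Finset.insert_inter_of_notMem haA, Finset.card_insert_of_notMem ha]
    split_ifs <;> omega
  have hin : ∑ u ∈ A, ∑ w ∈ A.erase u, t u w = 0 := by
    have e : ∀ u ∈ A, ∑ w ∈ A.erase u, t u w = ∑ w ∈ A.erase u,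
        (if u ∈ A ∧ w ∈ A then t u w else 0) := by
      intro u hu
      refine Finset.sum_congr rfl fun w hw => ?_
      rw [if_pos ⟨hu, Finset.mem_of_mem_erase hw⟩]
    rw [Finset.sum_congr rfl e]
    refine sum_pairs _ _ fun u w huw => ?_
    by_cases h : u ∈ A ∧ w ∈ A
    · rw [if_pos h, if_pos h.symm]
      simp only [ht]
      rw [hins (leftSet V u w) u w (fst_notMem_leftSet _ _) (snd_notMem_leftSet _ _) h.1 h.2,
        hins (leftSet V w u) u w (snd_notMem_leftSet _ _) (fst_notMem_leftSet _ _) h.1 h.2]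
      ring
    · rw [if_neg h, if_neg (fun h' => h h'.symm)]; rfl
  rw [Finset.sum_congr rfl hsplit, Finset.sum_add_distrib, hin, zero_add] at h0
  rw [← sub_eq_zero, ← Finset.sum_sub_distrib]
  refine (Finset.sum_congr rfl fun u hu => ?_).trans h0
  rw [← Finset.sum_sub_distrib]
  refine Finset.sum_congr rfl fun w hw => ?_
  have hwA := Finset.mem_compl.1 hw
  simp only [ht]
  rw [hout _ w (snd_notMem_leftSet u w) hwA,
    ← hout _ w (fst_notMem_leftSet w u) hwA]
  ring

/-- Within a class of sets of size `n`, the size of the intersection with `A` can only change from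
`k` to `k + 1` or back by exchanging an element of `A` with one outside `A`. -/
lemma linked_crosses (A : Finset ι) (n k : ℕ) {C D : Finset ι}
    (h : Relation.EqvGen (Step V) C D) :
    C.card = D.card ∧ (C.card = n →
      (k < (C ∩ A).card ↔ k < (D ∩ A).card) ∨
      ∃ u ∈ A, ∃ w ∉ A,
        ((leftSet V u w).card + 1 = n ∧ (leftSet V u w ∩ A).card = k) ∨
        ((leftSet V w u).card + 1 = n ∧ (leftSet V w u ∩ A).card = k)) := by
  induction h with
  | refl _ => exact ⟨rfl, fun _ => .inl Iff.rfl⟩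
  | symm _ _ _ ih => exact ⟨ih.1.symm, fun h => (ih.2 (ih.1.trans h)).imp_left Iff.symm⟩
  | trans _ _ _ _ _ ih1 ih2 =>
    refine ⟨ih1.1.trans ih2.1, fun h => ?_⟩
    rcases ih1.2 h with h1 | h1
    · rcases ih2.2 (ih1.1.symm.trans h) with h2 | h2
      · exact .inl (h1.trans h2)
      · exact .inr h2
    · exact .inr h1
  | rel _ _ h =>
    obtain ⟨u, w, huw, rfl, rfl⟩ := h
    have hu := fst_notMem_leftSet (V := V) u w
    have hw := snd_notMem_leftSet (V := V) u w
    have hu' : u ∉ leftSet V u w ∩ A := fun h => hu (Finset.mem_inter.1 h).1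
    have hw' : w ∉ leftSet V u w ∩ A := fun h => hw (Finset.mem_inter.1 h).1
    rw [Finset.card_insert_of_notMem hu, Finset.card_insert_of_notMem hw]
    refine ⟨rfl, fun hn => ?_⟩
    by_cases hk : (leftSet V u w ∩ A).card = k
    · by_cases hua : u ∈ A <;> by_cases hwa : w ∈ A
      · left
        rw [Finset.insert_inter_of_mem hua, Finset.insert_inter_of_mem hwa,
          Finset.card_insert_of_notMem hu', Finset.card_insert_of_notMem hw']
      · exact .inr ⟨u, hua, w, hwa, .inl ⟨hn, hk⟩⟩
      · exact .inr ⟨w, hwa, u, hua, .inr ⟨hn, hk⟩⟩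
      · left
        rw [Finset.insert_inter_of_notMem hua, Finset.insert_inter_of_notMem hwa]
    · left
      have e : ∀ v, v ∉ leftSet V u w ∩ A →
          (k < (insert v (leftSet V u w) ∩ A).card ↔ k < (leftSet V u w ∩ A).card) := by
        intro v hv
        by_cases hva : v ∈ A
        · rw [Finset.insert_inter_of_mem hva, Finset.card_insert_of_notMem hv]; omega
        · rw [Finset.insert_inter_of_notMem hva]
      rw [e u hu', e w hw']

/-- The planes through `u ∈ E` and `w ∉ E`, oriented from `u` to `w`, with exactly `n - 1` vectors
on the positive side. -/
def halving (V : ι → Fin 3 → ℝ) (n : ℕ) (E : Finset ι) : Finset (ι × ι) :=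
  (E ×ˢ Eᶜ).filter fun p => (leftSet V p.1 p.2).card + 1 = n

lemma mem_halving {n : ℕ} {E : Finset ι} {p : ι × ι} : p ∈ halving V n E ↔
    p.1 ∈ E ∧ p.2 ∉ E ∧ (leftSet V p.1 p.2).card + 1 = n := by
  simp [halving, and_assoc]

/-- On the way from `A` to a set disjoint from `A` inside one class, the size of the intersection
with `A` drops from `n` to `0`, so every value `k < n` is crossed; by `rows` each crossing may be
taken with the orientation counted by `halving`. -/
lemma le_card_halving (hV : GenPos V) {n : ℕ} {A B : Finset ι}
    (hAB : Relation.EqvGen (Step V) A B) (hd : Disjoint A B) (hA : A.card = n) :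
    n ≤ (halving V n A).card := by
  have hsurj : Finset.range n ⊆
      (halving V n A).image fun p => (leftSet V p.1 p.2 ∩ A).card := by
    intro k hk
    rw [Finset.mem_range] at hk
    have hex : ∃ u ∈ A, ∃ w ∉ A,
        ((leftSet V u w).card + 1 = n ∧ (leftSet V u w ∩ A).card = k) := by
      rcases (linked_crosses A n k hAB).2 hA with h | ⟨u, hu, w, hw, h | h⟩
      · rw [Finset.inter_self, hA, Finset.inter_comm, Finset.disjoint_iff_inter_eq_empty.1 hd,
          Finset.card_empty] at h
        omega
      · exact ⟨u, hu, w, hw, h⟩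
      · have hr := rows hV A n k
        have hpos : 0 < ∑ u ∈ A, ∑ w ∈ Aᶜ, (if (leftSet V w u).card + 1 = n ∧
            (leftSet V w u ∩ A).card = k then (1 : ℤ) else 0) := by
          refine Finset.sum_pos' (fun u _ => Finset.sum_nonneg fun w _ => by split_ifs <;> simp)
            ⟨u, hu, Finset.sum_pos' (fun w _ => by split_ifs <;> simp)
              ⟨w, Finset.mem_compl.2 hw, by rw [if_pos h]; exact one_pos⟩⟩
        rw [← hr] at hpos
        obtain ⟨u', hu', h1⟩ := Finset.exists_ne_zero_of_sum_ne_zero hpos.ne'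
        obtain ⟨w', hw', h2⟩ := Finset.exists_ne_zero_of_sum_ne_zero h1
        refine ⟨u', hu', w', Finset.mem_compl.1 hw', ?_⟩
        by_contra hc
        exact h2 (if_neg hc)
    obtain ⟨u, hu, w, hw, h1, h2⟩ := hex
    exact Finset.mem_image.2 ⟨(u, w), mem_halving.2 ⟨hu, hw, h1⟩, h2⟩
  calc n = (Finset.range n).card := (Finset.card_range n).symm
    _ ≤ _ := Finset.card_le_card hsurj
    _ ≤ _ := Finset.card_image_le

end

/-! ### Moving between cells -/

/-- `E` is the set of vectors on the positive side of a plane through the origin that contains no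
`V x`, that is, a covector without zeros of the oriented matroid of `V`. -/
def IsCell {ι : Type*} (V : ι → Fin 3 → ℝ) (E : Finset ι) : Prop :=
  ∃ h : Fin 3 → ℝ, ∀ x, dot3 h (V x) ≠ 0 ∧ (x ∈ E ↔ 0 < dot3 h (V x))

section
variable {ι : Type*} [Fintype ι] {V : ι → Fin 3 → ℝ}

lemma card_halving_eq_sum (n : ℕ) (E : Finset ι) : ((halving V n E).card : ℤ) =
    ∑ u ∈ E, ∑ w ∈ Eᶜ, if (leftSet V u w).card + 1 = n then (1 : ℤ) else 0 := by
  rw [halving, Finset.card_filter, Finset.sum_product]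
  push_cast
  rfl

/-- The effect on `halving` of moving a plane over the single vector `V v`, stated without
subtraction. Only pairs involving `v` matter, and these are counted by a half turn about `V v`
for the indicator of `n ≤ #Y`. -/
lemma card_halving_insert (hV : GenPos V) (n : ℕ) {E : Finset ι} {v : ι} (hv : v ∉ E)
    (q : Fin 3 → ℝ) (hqv : dot3 q (V v) = 0)
    (hq : ∀ x, x ≠ v → dot3 q (V x) ≠ 0 ∧ (x ∈ E ↔ 0 < dot3 q (V x))) :
    ((halving V n (insert v E)).card : ℤ) + (if n ≤ E.card then 1 else 0) =
      (halving V n E).card + (if n ≤ (insert v E)ᶜ.card then 1 else 0) := by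
  have key := vertex_turn hV v (-q) (by rw [dot3_neg, hqv, neg_zero])
    (fun x hx => by rw [dot3_neg]; exact neg_ne_zero.2 (hq x hx).1)
    (fun Y => if n ≤ Y.card then (1 : ℤ) else 0)
  simp only [dot3_neg, neg_pos, neg_lt_zero] at key
  have e1 : (Finset.univ.filter fun x => 0 < dot3 q (V x)) = E := by
    ext x
    simp only [Finset.mem_filter, Finset.mem_univ, true_and]
    by_cases hx : x = v
    · subst hx; simp [hqv, hv]
    · exact (hq x hx).2.symm
  have e2 : (Finset.univ.filter fun x => dot3 q (V x) < 0) = (insert v E)ᶜ := by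
    ext x
    simp only [Finset.mem_filter, Finset.mem_univ, true_and, Finset.mem_compl, Finset.mem_insert,
      not_or]
    by_cases hx : x = v
    · subst hx; simp [hqv]
    · rw [(hq x hx).2]
      simp only [hx, not_false_eq_true, true_and, not_lt]
      exact ⟨le_of_lt, fun h => lt_of_le_of_ne h (hq x hx).1⟩
  have e3 : Finset.univ.erase v = E ∪ (insert v E)ᶜ := by
    ext x
    simp only [Finset.mem_erase, Finset.mem_univ, and_true, Finset.mem_union, Finset.mem_compl,
      Finset.mem_insert, not_or]
    by_cases hx : x = v
    · subst hx; simp [hv]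
    · simp [hx, em]
  have hd : Disjoint E (insert v E)ᶜ := Finset.disjoint_left.2 fun x hx hx' =>
    (Finset.mem_compl.1 hx') (Finset.mem_insert_of_mem hx)
  rw [e1, e2, e3, Finset.sum_union hd] at key
  have s1 : ∀ w ∈ E, (if dot3 q (V w) < 0 then
        (if n ≤ (leftSet V v w).card then (1 : ℤ) else 0) -
          (if n ≤ (insert w (leftSet V v w)).card then (1 : ℤ) else 0)
      else (if n ≤ (insert w (leftSet V w v)).card then (1 : ℤ) else 0) -
          (if n ≤ (leftSet V w v).card then (1 : ℤ) else 0)) =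
      if (leftSet V w v).card + 1 = n then (1 : ℤ) else 0 := by
    intro w hw
    have hwv : w ≠ v := fun h => hv (h ▸ hw)
    rw [if_neg ((hq w hwv).2.1 hw).not_gt, Finset.card_insert_of_notMem (fst_notMem_leftSet _ _)]
    split_ifs <;> omega
  have s2 : ∀ w ∈ (insert v E)ᶜ, (if dot3 q (V w) < 0 then
        (if n ≤ (leftSet V v w).card then (1 : ℤ) else 0) -
          (if n ≤ (insert w (leftSet V v w)).card then (1 : ℤ) else 0)
      else (if n ≤ (insert w (leftSet V w v)).card then (1 : ℤ) else 0) -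
          (if n ≤ (leftSet V w v).card then (1 : ℤ) else 0)) =
      -(if (leftSet V v w).card + 1 = n then (1 : ℤ) else 0) := by
    intro w hw
    rw [← e2, Finset.mem_filter] at hw
    rw [if_pos hw.2, Finset.card_insert_of_notMem (snd_notMem_leftSet _ _)]
    split_ifs <;> omega
  rw [Finset.sum_congr rfl s1, Finset.sum_congr rfl s2, Finset.sum_neg_distrib] at key
  rw [card_halving_eq_sum, card_halving_eq_sum, Finset.sum_insert hv]
  have e4 : Eᶜ = insert v (insert v E)ᶜ := by
    rw [Finset.compl_insert, Finset.insert_erase (Finset.mem_compl.2 hv)]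
  have e5 : ∀ u ∈ E, (∑ w ∈ Eᶜ, if (leftSet V u w).card + 1 = n then (1 : ℤ) else 0) =
      (if (leftSet V u v).card + 1 = n then (1 : ℤ) else 0) +
      ∑ w ∈ (insert v E)ᶜ, if (leftSet V u w).card + 1 = n then (1 : ℤ) else 0 := by
    intro u _
    rw [e4, Finset.sum_insert (by simp)]
  rw [Finset.sum_congr rfl e5, Finset.sum_add_distrib]
  linarith

/-- The excess of `#(halving V ⌊N/2⌋ E)` over `min (#E) (#Eᶜ)`. -/
def excess (V : ι → Fin 3 → ℝ) (E : Finset ι) : ℤ :=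
  (halving V (Fintype.card ι / 2) E).card - min (E.card : ℤ) (Eᶜ.card : ℤ)

lemma excess_insert (hV : GenPos V) {E : Finset ι} {v : ι} (hv : v ∉ E)
    (q : Fin 3 → ℝ) (hqv : dot3 q (V v) = 0)
    (hq : ∀ x, x ≠ v → dot3 q (V x) ≠ 0 ∧ (x ∈ E ↔ 0 < dot3 q (V x))) :
    excess V (insert v E) = excess V E := by
  have h1 := card_halving_insert hV (Fintype.card ι / 2) hv q hqv hq
  have h2 := Finset.card_add_card_compl (insert v E)
  have h3 := Finset.card_add_card_compl E
  rw [Finset.card_insert_of_notMem hv] at h2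
  unfold excess
  rw [Finset.card_insert_of_notMem hv]
  split_ifs at h1 <;> omega

/-- All cells have the same `excess`: rotating one plane to another generic one passes over the
vectors of the symmetric difference one at a time, and `excess_insert` applies each time. The
induction is on the size of the symmetric difference. -/
lemma excess_cell (hV : GenPos V) {A : Finset ι} (hA : IsCell V A) :
    ∀ (d : ℕ) (E : Finset ι), IsCell V E → (symmDiff E A).card = d → excess V E = excess V A := by
  obtain ⟨a, ha⟩ := hA
  intro d
  induction d with
  | zero =>
    intro E _ h
    rw [Finset.card_eq_zero] at h
    rw [symmDiff_eq_bot.1 h]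
  | succ d ih =>
    rintro E ⟨h₀, hh₀⟩ hd
    -- Besides keeping `E`, the perturbed `h` is such that no two vectors are met simultaneously
    -- by the planes with normal `h + t • a`.
    obtain ⟨h, hh⟩ := exists_perturb
      ((Finset.univ : Finset ι).disjSum (Finset.univ.filter fun p : ι × ι => p.1 ≠ p.2))
      (Sum.elim V fun p => dot3 a (V p.1) • V p.2 - dot3 a (V p.2) • V p.1) (by
        rintro (x | ⟨x, y⟩) hx h0
        · apply (hh₀ x).1
          simp only [Sum.elim_inl] at h0
          simp [h0, dot3]
        · simp only [Finset.inr_mem_disjSum, Finset.mem_filter, Finset.mem_univ, true_and] at hx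
          simp only [Sum.elim_inr] at h0
          apply hV.pair x y hx
          have c := fun i => congrFun h0 i
          simp only [Pi.sub_apply, Pi.smul_apply, smul_eq_mul, Pi.zero_apply] at c
          have c0 := c 0
          have c1 := c 1
          have c2 := c 2
          have hax := (ha x).1
          funext i
          apply mul_left_cancel₀ hax
          fin_cases i <;> simp only [cross3, Fin.zero_eta, Fin.mk_one, Fin.reduceFinMk,
            Matrix.cons_val, Pi.zero_apply, mul_zero]
          · linear_combination V x 1 * c2 - V x 2 * c1
          · linear_combination V x 2 * c0 - V x 0 * c2
          · linear_combination V x 0 * c1 - V x 1 * c0) h₀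
    have hE : ∀ x, dot3 h (V x) ≠ 0 ∧ (x ∈ E ↔ 0 < dot3 h (V x)) := by
      intro x
      have h1 := hh (Sum.inl x) (by simp)
      simp only [Sum.elim_inl] at h1
      refine ⟨h1.1, ?_⟩
      rw [(hh₀ x).2]
      refine ⟨h1.2.1, fun hp => ?_⟩
      rcases (hh₀ x).1.lt_or_gt with h2 | h2
      · exact absurd hp (h1.2.2 h2).not_gt
      · exact h2
    have hgen : ∀ x y, x ≠ y → dot3 a (V x) * dot3 h (V y) ≠ dot3 a (V y) * dot3 h (V x) := by
      intro x y hxy heq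
      have h1 := (hh (Sum.inr (x, y)) (by simpa using hxy)).1
      apply h1
      simp only [Sum.elim_inr]
      rw [← sub_eq_zero] at heq
      rw [← heq]
      simp only [dot3, Pi.sub_apply, Pi.smul_apply, smul_eq_mul]; ring
    clear hh hh₀ h₀
    -- The plane with normal `h + t • a` meets `V x` at `t = ρ x`.
    set ρ : ι → ℝ := fun x => - (dot3 h (V x) / dot3 a (V x)) with hρ
    have hρe : ∀ x, dot3 h (V x) = - (ρ x * dot3 a (V x)) := by
      intro x; simp only [hρ]; field_simp [(ha x).1]
    obtain ⟨u, huT, humin⟩ := Finset.exists_min_image (symmDiff E A) ρ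
      (Finset.card_pos.1 (by omega))
    have hT : ∀ x, x ∈ symmDiff E A → 0 < ρ x := by
      intro x hx
      have h1 := hE x
      have h2 := ha x
      have h3 := hρe x
      rw [Finset.mem_symmDiff, h1.2, h2.2, not_lt, not_lt] at hx
      by_contra hn
      push Not at hn
      rcases hx with hx | hx
      · nlinarith
      · rcases lt_of_le_of_ne hx.2 h1.1 with h4
        nlinarith
    have hu0 := hT u huT
    have hq0 : dot3 (h + ρ u • a) (V u) = 0 := by rw [dot3_add_smul, hρe u]; ring
    have hq : ∀ x, x ≠ u → dot3 (h + ρ u • a) (V x) ≠ 0 ∧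
        (x ∈ E ↔ 0 < dot3 (h + ρ u • a) (V x)) := by
      intro x hxu
      have h1 := hE x
      have h2 := ha x
      have h3 := hρe x
      by_cases hxT : x ∈ symmDiff E A
      · have hlt : ρ u < ρ x := by
          refine lt_of_le_of_ne (humin x hxT) fun he => hgen x u hxu ?_
          rw [hρe u, hρe x, he]; ring
        rw [Finset.mem_symmDiff, h2.2, not_lt] at hxT
        rw [dot3_add_smul, h3]
        rcases hxT with ⟨h4, h5⟩ | ⟨h4, h5⟩
        · have h5 := lt_of_le_of_ne h5 h2.1
          have : 0 < -(ρ x * dot3 a (V x)) + ρ u * dot3 a (V x) := by nlinarith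
          exact ⟨this.ne', by simp [h4, this]⟩
        · have : -(ρ x * dot3 a (V x)) + ρ u * dot3 a (V x) < 0 := by nlinarith
          exact ⟨this.ne, iff_of_false h5 this.not_gt⟩
      · rw [Finset.mem_symmDiff] at hxT
        rw [dot3_add_smul]
        by_cases hxE : x ∈ E
        · have hxA : x ∈ A := by tauto
          have p1 := h1.2.1 hxE
          have p2 := h2.2.1 hxA
          have : 0 < dot3 h (V x) + ρ u * dot3 a (V x) := by positivity
          exact ⟨this.ne', by simp [hxE, this]⟩
        · have hxA : x ∉ A := by tauto
          rw [h1.2, not_lt] at hxE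
          rw [h2.2, not_lt] at hxA
          have p1 := lt_of_le_of_ne hxE h1.1
          have p2 := lt_of_le_of_ne hxA h2.1
          have : dot3 h (V x) + ρ u * dot3 a (V x) < 0 := by nlinarith
          exact ⟨this.ne, by rw [h1.2]; exact iff_of_false hxE.not_gt this.not_gt⟩
    obtain ⟨s, hs, Hs⟩ := exists_small (Finset.univ : Finset ι) V (h + ρ u • a) a
    have hcell : ∀ E1 : Finset ι, (∀ x, x ≠ u → (x ∈ E1 ↔ x ∈ E)) → (u ∈ E1 ↔ u ∈ A) →
        IsCell V E1 := by
      intro E1 hE1 hu1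
      refine ⟨h + ρ u • a + s • a, fun x => ?_⟩
      by_cases hxu : x = u
      · subst hxu
        rw [dot3_add_smul, hq0, zero_add, hu1, (ha x).2]
        exact ⟨mul_ne_zero hs.ne' (ha x).1, (mul_pos_iff_of_pos_left hs).symm⟩
      · rw [hE1 x hxu, (hq x hxu).2]
        have h1 := Hs x (Finset.mem_univ x)
        rcases (hq x hxu).1.lt_or_gt with h2 | h2
        · exact ⟨(h1.2 h2).ne, iff_of_false h2.not_gt (h1.2 h2).not_gt⟩
        · exact ⟨(h1.1 h2).ne', by simp [h2, h1.1 h2]⟩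
    have hcard : ∀ E1 : Finset ι, (∀ x, x ≠ u → (x ∈ E1 ↔ x ∈ E)) → (u ∈ E1 ↔ u ∈ A) →
        (symmDiff E1 A).card = d := by
      intro E1 hE1 hu1
      have : symmDiff E1 A = (symmDiff E A).erase u := by
        ext x
        by_cases hxu : x = u
        · subst hxu; simp [Finset.mem_symmDiff, hu1]
        · simp [Finset.mem_symmDiff, hxu, hE1 x hxu]
      rw [this, Finset.card_erase_of_mem huT, hd, Nat.add_sub_cancel]
    rw [Finset.mem_symmDiff] at huT
    rcases huT with ⟨huE, huA⟩ | ⟨huA, huE⟩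
    · have h1 : ∀ x, x ≠ u → (x ∈ E.erase u ↔ x ∈ E) := fun x hx => by simp [hx]
      have h2 : u ∈ E.erase u ↔ u ∈ A := by simp [huA]
      rw [← ih (E.erase u) (hcell _ h1 h2) (hcard _ h1 h2)]
      have := excess_insert hV (Finset.notMem_erase u E) _ hq0 (fun x hx => by
        rw [h1 x hx]; exact hq x hx)
      rwa [Finset.insert_erase huE] at this
    · have h1 : ∀ x, x ≠ u → (x ∈ insert u E ↔ x ∈ E) := fun x hx => by simp [hx]
      have h2 : u ∈ insert u E ↔ u ∈ A := by simp [huA]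
      rw [← ih (insert u E) (hcell _ h1 h2) (hcard _ h1 h2)]
      exact (excess_insert hV huE _ hq0 hq).symm

lemma exists_separating {a b : Fin 3 → ℝ} (h : cross3 a b ≠ 0) :
    ∃ z : Fin 3 → ℝ, 0 < dot3 z a ∧ dot3 z b < 0 := by
  have h1 := dot3_self_pos h
  -- The difference of two vectors of the dual basis of `a`, `b`, scaled by the Gram determinant.
  refine ⟨(dot3 b b • a - dot3 a b • b) - (dot3 a a • b - dot3 a b • a), ?_, ?_⟩
  · convert h1 using 1
    simp [dot3, cross3]; ring
  · rw [← neg_pos]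
    convert h1 using 1
    simp [dot3, cross3]; ring

/-- If the plane with normal `q` contains just `V c` and `V d`, a small tilt adds `c` but not `d` to
its positive side. -/
lemma isCell_insert {c d : ι} (q z : Fin 3 → ℝ) (hc : dot3 q (V c) = 0) (hd : dot3 q (V d) = 0)
    (hq : ∀ x, x ≠ c → x ≠ d → dot3 q (V x) ≠ 0) (hzc : 0 < dot3 z (V c))
    (hzd : dot3 z (V d) < 0) :
    IsCell V (insert c (Finset.univ.filter fun x => 0 < dot3 q (V x))) := by
  obtain ⟨s, hs, Hs⟩ := exists_small (Finset.univ : Finset ι) V q z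
  refine ⟨q + s • z, fun x => ?_⟩
  simp only [Finset.mem_insert, Finset.mem_filter, Finset.mem_univ, true_and]
  by_cases hxc : x = c
  · subst hxc
    have : 0 < dot3 (q + s • z) (V x) := by rw [dot3_add_smul, hc]; nlinarith
    exact ⟨this.ne', by simp [this]⟩
  by_cases hxd : x = d
  · subst hxd
    have : dot3 (q + s • z) (V x) < 0 := by rw [dot3_add_smul, hd]; nlinarith
    exact ⟨this.ne, by simp [hxc, hd, this.le]⟩
  have h1 := Hs x (Finset.mem_univ x)
  rcases (hq x hxc hxd).lt_or_gt with h2 | h2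
  · exact ⟨(h1.2 h2).ne, iff_of_false (by simp [hxc, h2.not_gt]) (h1.2 h2).not_gt⟩
  · exact ⟨(h1.1 h2).ne', by simp [h2, h1.1 h2]⟩

lemma Step.isCell (hV : GenPos V) {A B : Finset ι} (h : Step V A B) :
    IsCell V A ∧ IsCell V B := by
  obtain ⟨u, w, huw, rfl, rfl⟩ := h
  have e : leftSet V u w = Finset.univ.filter fun x => 0 < dot3 (cross3 (V u) (V w)) (V x) := by
    simp only [dot3_cross3]; rfl
  rw [e]
  have h1 : dot3 (cross3 (V u) (V w)) (V u) = 0 := by rw [dot3_cross3, det3_self_left]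
  have h2 : dot3 (cross3 (V u) (V w)) (V w) = 0 := by rw [dot3_cross3, det3_self_right]
  have h3 : ∀ x, x ≠ u → x ≠ w → dot3 (cross3 (V u) (V w)) (V x) ≠ 0 := fun x hu hw => by
    rw [dot3_cross3]; exact hV.triple u w x huw hu.symm hw.symm
  obtain ⟨z, hz1, hz2⟩ := exists_separating (hV.pair u w huw)
  obtain ⟨z', hz1', hz2'⟩ := exists_separating (hV.pair w u huw.symm)
  exact ⟨isCell_insert _ z h1 h2 h3 hz1 hz2,
    isCell_insert _ z' h2 h1 (fun x hw hu => h3 x hu hw) hz1' hz2'⟩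

lemma linked_isCell (hV : GenPos V) {A B : Finset ι} (h : Relation.EqvGen (Step V) A B) :
    A = B ∨ (IsCell V A ∧ IsCell V B) := by
  induction h with
  | rel _ _ h => exact .inr (h.isCell hV)
  | refl _ => exact .inl rfl
  | symm _ _ _ ih => exact ih.imp Eq.symm And.symm
  | trans _ _ _ _ _ ih1 ih2 =>
    rcases ih1 with rfl | h1
    · exact ih2
    · rcases ih2 with rfl | h2
      · exact .inr h1
      · exact .inr ⟨h1.1, h2.2⟩

/-- The excess is nonnegative for the class member found in `exists_disjoint_linked`, hence for
every cell. -/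
theorem half_le_card_halving (hV : GenPos V) (hN : 2 ≤ Fintype.card ι) {E : Finset ι}
    (hE : IsCell V E) (hEc : E.card = Fintype.card ι / 2) :
    Fintype.card ι / 2 ≤ (halving V (Fintype.card ι / 2) E).card := by
  obtain ⟨A, B, hAB, hd, hA, hB⟩ := exists_disjoint_linked hV hN
  have hne : A ≠ B := by
    rintro rfl
    rw [disjoint_self] at hd
    subst hd
    rw [Finset.bot_eq_empty, Finset.card_empty] at hA
    omega
  have h1 := excess_cell hV ((linked_isCell hV hAB).resolve_left hne).1 _ E hE rfl
  have h2 := le_card_halving hV hAB hd hA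
  have h3 := Finset.card_add_card_compl A
  have h4 := Finset.card_add_card_compl E
  unfold excess at h1
  omega

end

/-! ### Lifting the plane to space -/

/-- The determinant of `b - a` and `c - a`; its sign is the orientation of the triangle `a`, `b`,
`c`, and `PosSide a b c` says that it is positive. -/
def orient (a b c : Pt2) : ℝ := (b 0 - a 0) * (c 1 - a 1) - (b 1 - a 1) * (c 0 - a 0)

lemma collinear_of_orient_eq_zero {a b c : Pt2} (hab : a ≠ b) (h : orient a b c = 0) :
    Collinear ℝ ({a, b, c} : Set Pt2) := by
  rw [collinear_iff_of_mem (p₀ := a) (by simp)]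
  refine ⟨b - a, ?_⟩
  have hc : ∃ r : ℝ, c = r • (b - a) + a := by
    unfold orient at h
    by_cases h0 : b 0 - a 0 = 0
    · have h1 : b 1 - a 1 ≠ 0 := by
        intro h1
        apply hab
        ext i; fin_cases i
        · simp; linarith
        · simp; linarith
      refine ⟨(c 1 - a 1) / (b 1 - a 1), ?_⟩
      have h2 : c 0 - a 0 = 0 := by
        rw [h0, zero_mul, zero_sub, neg_eq_zero] at h
        exact (mul_eq_zero.1 h).resolve_left h1
      ext i; fin_cases i
      · simp [h0]; linarith
      · simp; field_simp; ring
    · refine ⟨(c 0 - a 0) / (b 0 - a 0), ?_⟩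
      ext i; fin_cases i
      · simp; field_simp; ring
      · simp; field_simp; linarith
  rintro p (rfl | rfl | rfl)
  · exact ⟨0, by simp⟩
  · exact ⟨1, by simp⟩
  · simpa using hc

/-- `1` on the white points (those in `W`) and `-1` on the others. -/
def colorSign (W : Finset Pt2) (x : Pt2) : ℝ := if x ∈ W then 1 else -1

/-- The plane `ℝ²` is placed at height `1` in `ℝ³`, and the points outside `W` are then replaced by
their antipodes. Thus the points outside `W` are the lower half of the configuration, and reversing
a vector moves it to the other side of every plane through the origin. -/
def lift3 (W : Finset Pt2) (x : Pt2) : Fin 3 → ℝ :=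
  ![colorSign W x * x 0, colorSign W x * x 1, colorSign W x]

lemma colorSign_ne_zero (W : Finset Pt2) (x : Pt2) : colorSign W x ≠ 0 := by
  unfold colorSign; split_ifs <;> norm_num

lemma det3_lift3 (W : Finset Pt2) (a b c : Pt2) : det3 (lift3 W a) (lift3 W b) (lift3 W c) =
    colorSign W a * colorSign W b * colorSign W c * orient a b c := by
  simp [det3, lift3, orient]; ring

lemma genPos_lift3 (R W : Finset Pt2)
    (hgp : ∀ a ∈ R, ∀ b ∈ R, ∀ c ∈ R, a ≠ b → a ≠ c → b ≠ c →
      ¬ Collinear ℝ ({a, b, c} : Set Pt2)) :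
    GenPos (fun x : {x // x ∈ R} => lift3 W x.1) where
  triple i j k hij hik hjk := by
    rw [det3_lift3]
    have h1 := hgp i.1 i.2 j.1 j.2 k.1 k.2 (Subtype.coe_ne_coe.2 hij) (Subtype.coe_ne_coe.2 hik)
      (Subtype.coe_ne_coe.2 hjk)
    exact mul_ne_zero (mul_ne_zero (mul_ne_zero (colorSign_ne_zero _ _) (colorSign_ne_zero _ _))
      (colorSign_ne_zero _ _))
      fun h => h1 (collinear_of_orient_eq_zero (Subtype.coe_ne_coe.2 hij) h)
  pair i j hij := by
    intro h
    apply hij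
    have h0 := congrFun h 0
    have h1 := congrFun h 1
    have hi := colorSign_ne_zero W i.1
    have hj := colorSign_ne_zero W j.1
    simp only [cross3, lift3, Matrix.cons_val, Pi.zero_apply] at h0 h1
    apply Subtype.ext
    ext l
    fin_cases l
    · apply mul_left_cancel₀ (mul_ne_zero hi hj)
      simp only [Fin.zero_eta]; linear_combination -h1
    · apply mul_left_cancel₀ (mul_ne_zero hi hj)
      simp only [Fin.mk_one]; linear_combination h0

/-- On the positive side of the plane through the lifts of a black `b` and a white `w` lie the
white points left of the line from `w` to `b` and the black points right of it. The number of all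
black points exceeds by one the number of those off the line, so the condition of `halving` says
that equally many white and black points are on the left. -/
lemma balanced_of_halving (R W : Finset Pt2)
    (hgp : ∀ a ∈ R, ∀ b ∈ R, ∀ c ∈ R, a ≠ b → a ≠ c → b ≠ c →
      ¬ Collinear ℝ ({a, b, c} : Set Pt2)) (hWR : W ⊆ R) (b w : {x // x ∈ R})
    (hb : b.1 ∉ W) (hw : w.1 ∈ W)
    (h : (leftSet (fun x : {x // x ∈ R} => lift3 W x.1) b w).card + 1 = (R \ W).card) :
    (W.filter (fun x => PosSide w.1 b.1 x)).card =
      ((R \ W).filter (fun x => PosSide w.1 b.1 x)).card := by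
  have hwb : w.1 ≠ b.1 := fun he => hb (he ▸ hw)
  have hpos : ∀ x, PosSide w.1 b.1 x ↔ 0 < orient w.1 b.1 x := fun x => Iff.rfl
  have hor : ∀ x, orient b.1 w.1 x = - orient w.1 b.1 x := fun x => by simp [orient]; ring
  have e1 : (leftSet (fun x : {x // x ∈ R} => lift3 W x.1) b w).map (Function.Embedding.subtype _) =
      W.filter (fun x => PosSide w.1 b.1 x) ∪
        (R \ W).filter (fun x => orient w.1 b.1 x < 0) := by
    ext x
    simp only [Finset.mem_map, mem_leftSet, Function.Embedding.coe_subtype, Subtype.exists,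
      exists_and_right, exists_eq_right, Finset.mem_union, Finset.mem_filter, Finset.mem_sdiff,
      hpos, det3_lift3, hor]
    by_cases hx : x ∈ W
    · simp [hx, hb, hw, colorSign, hWR hx]
    · simp [hx, hb, hw, colorSign]
  have e2 : R \ W = insert b.1 ((R \ W).filter (fun x => PosSide w.1 b.1 x) ∪
        (R \ W).filter (fun x => orient w.1 b.1 x < 0)) := by
    ext x
    simp only [Finset.mem_insert, Finset.mem_union, Finset.mem_filter, Finset.mem_sdiff, hpos]
    by_cases hxb : x = b.1
    · subst hxb; simp [hb]
    · simp only [hxb, false_or]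
      refine ⟨fun hx => ?_, fun hx => by tauto⟩
      have hne : orient w.1 b.1 x ≠ 0 := fun h0 =>
        hgp w.1 w.2 b.1 b.2 x hx.1 hwb (fun he => hx.2 (he ▸ hw)) (Ne.symm hxb)
          (collinear_of_orient_eq_zero hwb h0)
      rcases hne.lt_or_gt with h1 | h1
      · exact .inr ⟨hx, h1⟩
      · exact .inl ⟨hx, h1⟩
  have hbb : orient w.1 b.1 b.1 = 0 := by simp [orient]; ring
  have c2 := congrArg Finset.card e2
  rw [Finset.card_insert_of_notMem (by simp [hpos, hbb]), Finset.card_union_of_disjoint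
    (Finset.disjoint_filter.2 fun x _ h1 h2 => lt_asymm h2 ((hpos x).1 h1))] at c2
  have c1 := congrArg Finset.card e1
  rw [Finset.card_map, Finset.card_union_of_disjoint] at c1
  · rw [c2, c1] at h
    linarith
  · exact Finset.disjoint_left.2 fun x h1 h2 =>
      (Finset.mem_sdiff.1 (Finset.mem_filter.1 h2).1).2 (Finset.mem_filter.1 h1).1

end BalancedLines

/-- Given `r` points in general position in the plane, `⌈r/2⌉` of them white and
`⌊r/2⌋` black, there are at least `⌊r/2⌋` almost balanced directed lines: pairs
`(w, b)` of a white and a black point such that the open half-plane on the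
positive side of the directed line from `w` to `b` contains equally many white
and black points. -/
theorem almost_balanced_directed_lines
    (r : ℕ) (R W : Finset Pt2) (hR : R.card = r)
    (hgp : ∀ a ∈ R, ∀ b ∈ R, ∀ c ∈ R, a ≠ b → a ≠ c → b ≠ c →
      ¬ Collinear ℝ ({a, b, c} : Set Pt2))
    (hWR : W ⊆ R) (hW : W.card = (r + 1) / 2) :
    (r / 2 : ℕ) ≤
      {p : Pt2 × Pt2 | p.1 ∈ W ∧ p.2 ∈ R \ W ∧
        (W.filter (fun x => PosSide p.1 p.2 x)).card =
          ((R \ W).filter (fun x => PosSide p.1 p.2 x)).card}.ncard := by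
  open BalancedLines in
  by_cases hr : r < 2
  · rw [Nat.div_eq_of_lt hr]; exact Nat.zero_le _
  have hV := genPos_lift3 R W hgp
  have hN : Fintype.card {x // x ∈ R} = r := by rw [Fintype.card_coe, hR]
  have hB : (R \ W).card = r / 2 := by rw [Finset.card_sdiff_of_subset hWR, hR, hW]; omega
  set E : Finset {x // x ∈ R} := Finset.univ.filter fun x => x.1 ∉ W with hEdef
  have hEc : E.card = r / 2 := by
    rw [← hB, ← Finset.card_map (Function.Embedding.subtype _)]
    congr 1
    ext x
    simp [hEdef, and_comm]
  have hE : IsCell (fun x : {x // x ∈ R} => lift3 W x.1) E := by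
    refine ⟨![0, 0, -1], fun x => ?_⟩
    by_cases hx : x.1 ∈ W <;> simp [hEdef, hx, dot3, lift3, colorSign]
  have hmain := half_le_card_halving hV (by omega) hE (by rw [hEc, hN])
  rw [hN] at hmain
  refine hmain.trans ?_
  set f : {x // x ∈ R} × {x // x ∈ R} → Pt2 × Pt2 := fun p => (p.2.1, p.1.1) with hf
  have hfin : {p : Pt2 × Pt2 | p.1 ∈ W ∧ p.2 ∈ R \ W ∧
        (W.filter (fun x => PosSide p.1 p.2 x)).card =
          ((R \ W).filter (fun x => PosSide p.1 p.2 x)).card}.Finite :=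
    (W ×ˢ (R \ W)).finite_toSet.subset fun p hp => by
      simpa using ⟨hp.1, Finset.mem_sdiff.1 hp.2.1⟩
  rw [← Set.ncard_coe_finset]
  refine Set.ncard_le_ncard_of_injOn f ?_ ?_ hfin
  · rintro ⟨b, w⟩ hp
    rw [Finset.mem_coe, mem_halving] at hp
    obtain ⟨h1, h2, h3⟩ := hp
    have hb : b.1 ∉ W := by simpa [hEdef] using h1
    have hw : w.1 ∈ W := by simpa [hEdef] using h2
    exact ⟨hw, Finset.mem_sdiff.2 ⟨b.2, hb⟩,
      balanced_of_halving R W hgp hWR b w hb hw (by rw [hB]; exact h3)⟩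
  · rintro ⟨b, w⟩ _ ⟨b', w'⟩ _ h
    simp only [hf, Prod.mk.injEq] at h
    exact Prod.ext (Subtype.ext h.2) (Subtype.ext h.1)
end
end

section
/- There exist a constant c > 0 and a natural number s₀ such that for every integer s ≥ s₀ and every set S of s points in general position in ℝ³ the following holds: the number of subsets T of S such that T is a k-set of S for some k with min{k, s − k} ≥ ⌈(s−1)/2⌉ (i.e., T can be separated from S \ T by an affine plane avoiding all points of S, and both |T| ≥ ⌈(s−1)/2⌉ and s − |T| ≥ ⌈(s−1)/2⌉) is at least c · s². -/
/-!
Call a triple `t ⊆ S` halving if the plane through it splits the other points as evenly as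
possible.

* Every pair `p, q` lies in a halving triple (`exists_triple`). Projecting along `q - p` turns the
  other points into pairwise non-parallel plane vectors, and a line rotating about the origin
  passes from one side count to the complementary one in unit steps (`exists_halving_vector`).
  Hence there are at least `s (s - 1) / 6` halving triples.
* Fix a linear functional `x` (the sweep) that is injective on `S`. Let `p, q, r` be a halving
  triple with `x p < x q < x r`, and `A` the points on the larger side of its plane (either
  side if they are equal). Tilting the
  plane about the direction `r - p` shows that `T = A ∪ {q}` is separated from the rest
  (`TripleSet.separated`), and it has the required size.
* A set `T` arises in this way from at most two triples (`TripleSet.not_three`). Let `u` be the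
  normal of the plane, positive on `A`, and `w = q - λ p - (1 - λ) r` with `λ` such that `x w = 0`.
  Then `u w = 0`, while any functional having `T` weakly above `S \ T` is nonnegative at `w`. So
  the restriction of `u` to the plane `ker x` spans an extreme ray of a planar cone depending only
  on `T`, and such a cone has at most two extreme rays. This plays the role of Euler's formula for
  the normal fan of the `k`-set polytope: each vertex of the fan is the first or the last point,
  in the sweep, of one of the cells around it.

So there are at least `s (s - 1) / 12` sets.
-/

noncomputable section

attribute [local instance] Classical.propDecidable

/-- Points of `ℝ³`. -/
abbrev Pt3 := EuclideanSpace ℝ (Fin 3)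

/-- A finite point set in `ℝ³` is in general position if no four of its points
are coplanar, i.e. every subset of at most four points is affinely independent. -/
def GenPos3 (S : Finset Pt3) : Prop :=
  ∀ T : Finset Pt3, T ⊆ S → T.card ≤ 4 →
    AffineIndependent ℝ ((↑) : {x // x ∈ (T : Set Pt3)} → Pt3)

/-- `T` can be separated from `S \ T` by an affine plane passing through no
point of `S`. -/
def SeparatedSubset (S T : Finset Pt3) : Prop :=
  T ⊆ S ∧ ∃ (f : Pt3 →ₗ[ℝ] ℝ) (α : ℝ),
    (∀ x ∈ T, α < f x) ∧ ∀ x ∈ S, x ∉ T → f x < α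


/-! ### Halving a planar family of vectors -/

/-- Discrete intermediate value argument: for points on a line carrying two colours, the quantity
`#(σ after r) + #(¬σ before r)` starts at the number of `σ`-points, ends at the number of the
others, and changes in unit steps, so it is close to half of the total for some `r`. -/
lemma exists_balanced_aux {ι : Type*} (S : Finset ι) (hS : S.Nonempty) (k : ι → ℝ)
    (hk : Set.InjOn k S) (σ : ι → Prop) (hσ : 2 * (S.filter σ).card ≤ S.card) :
    ∃ r ∈ S, S.card ≤
        2 * (S.filter fun j => (k r < k j ∧ σ j) ∨ (k j < k r ∧ ¬ σ j)).card + 2 ∧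
      2 * (S.filter fun j => (k r < k j ∧ σ j) ∨ (k j < k r ∧ ¬ σ j)).card ≤ S.card := by
  -- `h i` counts just after passing `i`.
  set h : ι → ℕ := fun i => (S.filter fun j => (k i < k j ∧ σ j) ∨ (k j ≤ k i ∧ ¬ σ j)).card
    with hh
  have hsum : (S.filter σ).card + (S.filter fun j => ¬ σ j).card = S.card :=
    Finset.card_filter_add_card_filter_not _
  obtain ⟨M, hM, hMmax⟩ := Finset.exists_max_image S k hS
  have hMF : S.card ≤ 2 * h M := by
    have : h M = (S.filter fun j => ¬ σ j).card := by
      simp only [hh]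
      congr 1
      apply Finset.filter_congr
      intro j hj
      have := hMmax j hj
      constructor
      · rintro (⟨h1, _⟩ | ⟨_, h2⟩)
        · linarith
        · exact h2
      · intro h1
        exact Or.inr ⟨this, h1⟩
    omega
  obtain ⟨r, hr, hrmin⟩ := Finset.exists_min_image (S.filter fun i => S.card ≤ 2 * h i) k
    ⟨M, by simp [hM, hMF]⟩
  rw [Finset.mem_filter] at hr
  obtain ⟨hrS, hrF⟩ := hr
  -- The count just before reaching `r` is at most half.
  have hpre : 2 * (S.filter fun j => (k r ≤ k j ∧ σ j) ∨ (k j < k r ∧ ¬ σ j)).card ≤ S.card := by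
    rcases (S.filter fun j => k j < k r).eq_empty_or_nonempty with he | hne
    · refine le_trans (Nat.mul_le_mul_left 2 (Finset.card_le_card ?_)) hσ
      intro j hj
      rw [Finset.mem_filter] at hj ⊢
      refine ⟨hj.1, ?_⟩
      rcases hj.2 with h1 | h1
      · exact h1.2
      · have : j ∈ (S.filter fun j => k j < k r) := by simp [hj.1, h1.1]
        rw [he] at this
        simp at this
    · obtain ⟨j, hj, hjmax⟩ := Finset.exists_max_image _ k hne
      rw [Finset.mem_filter] at hj
      have hjF : ¬ S.card ≤ 2 * h j := by
        intro hc
        have := hrmin j (by simp [hj.1, hc])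
        linarith [hj.2]
      have : (S.filter fun i => (k r ≤ k i ∧ σ i) ∨ (k i < k r ∧ ¬ σ i)).card = h j := by
        rw [hh]
        congr 1
        apply Finset.filter_congr
        intro i hi
        have e : k i < k r ↔ k i ≤ k j :=
          ⟨fun h1 => hjmax i (by simp [hi, h1]), fun h1 => lt_of_le_of_lt h1 hj.2⟩
        rw [← not_lt, e, not_le]
      omega
  by_cases hσr : σ r
  · -- Passing a `σ`-point lowers the count, which contradicts the choice of `r`.
    exfalso
    have : h r < (S.filter fun j => (k r ≤ k j ∧ σ j) ∨ (k j < k r ∧ ¬ σ j)).card := by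
      apply Finset.card_lt_card
      rw [Finset.ssubset_iff_of_subset]
      · refine ⟨r, by simp [hrS, hσr], by simp [hσr]⟩
      · intro j hj
        rw [Finset.mem_filter] at hj ⊢
        refine ⟨hj.1, ?_⟩
        rcases hj.2 with h1 | h1
        · exact Or.inl ⟨h1.1.le, h1.2⟩
        · refine Or.inr ⟨lt_of_le_of_ne h1.1 fun he => ?_, h1.2⟩
          rw [hk hj.1 hrS he] at h1
          exact h1.2 hσr
    omega
  · refine ⟨r, hrS, ?_, ?_⟩
    · have : h r ≤ (insert r
          (S.filter fun j => (k r < k j ∧ σ j) ∨ (k j < k r ∧ ¬ σ j))).card := by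
        apply Finset.card_le_card
        intro j hj
        rw [Finset.mem_filter] at hj
        rw [Finset.mem_insert, Finset.mem_filter]
        rcases hj.2 with h1 | h1
        · exact Or.inr ⟨hj.1, Or.inl h1⟩
        · rcases eq_or_ne j r with h2 | h2
          · exact Or.inl h2
          · exact Or.inr ⟨hj.1, Or.inr ⟨lt_of_le_of_ne h1.1 fun he => h2 (hk hj.1 hrS he), h1.2⟩⟩
      have := this.trans (Finset.card_insert_le _ _)
      omega
    · refine le_trans (Nat.mul_le_mul_left 2 (Finset.card_le_card ?_)) hpre
      intro j hj
      rw [Finset.mem_filter] at hj ⊢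
      refine ⟨hj.1, ?_⟩
      rcases hj.2 with h1 | h1
      · exact Or.inl ⟨h1.1.le, h1.2⟩
      · exact Or.inr h1

/-- The same without a condition on `σ`: exchanging the colours turns the count `L` into
`#S - 1 - L`. -/
lemma exists_balanced {ι : Type*} (S : Finset ι) (hS : S.Nonempty) (k : ι → ℝ)
    (hk : Set.InjOn k S) (σ : ι → Prop) :
    ∃ r ∈ S, S.card ≤
        2 * (S.filter fun j => (k r < k j ∧ σ j) ∨ (k j < k r ∧ ¬ σ j)).card + 2 ∧
      2 * (S.filter fun j => (k r < k j ∧ σ j) ∨ (k j < k r ∧ ¬ σ j)).card ≤ S.card := by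
  by_cases hσ : 2 * (S.filter σ).card ≤ S.card
  · exact exists_balanced_aux S hS k hk σ hσ
  · have hsum : (S.filter σ).card + (S.filter fun j => ¬ σ j).card = S.card :=
      Finset.card_filter_add_card_filter_not _
    have hσ' : 2 * (S.filter fun j => ¬ σ j).card ≤ S.card := by omega
    obtain ⟨r, hr, h1, h2⟩ := exists_balanced_aux S hS k hk (fun j => ¬ σ j) (by convert hσ')
    have h1' : S.card ≤
        2 * (S.filter fun j => (k r < k j ∧ ¬ σ j) ∨ (k j < k r ∧ ¬ ¬ σ j)).card + 2 := by
      convert h1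
    have h2' : 2 * (S.filter fun j => (k r < k j ∧ ¬ σ j) ∨ (k j < k r ∧ ¬ ¬ σ j)).card ≤
        S.card := by
      convert h2
    refine ⟨r, hr, ?_⟩
    -- The counts for `σ` and for `¬ σ` add up to `#S - 1`.
    have key : (S.filter fun j => (k r < k j ∧ σ j) ∨ (k j < k r ∧ ¬ σ j)).card +
        (S.filter fun j => (k r < k j ∧ ¬ σ j) ∨ (k j < k r ∧ ¬ ¬ σ j)).card + 1 = S.card := by
      rw [← Finset.card_erase_add_one hr, ← Finset.card_union_of_disjoint]
      · congr 2
        ext j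
        simp only [Finset.mem_union, Finset.mem_filter, Finset.mem_erase]
        constructor
        · rintro (⟨h3, h4⟩ | ⟨h3, h4⟩) <;> refine ⟨?_, h3⟩ <;> rintro rfl <;> simp at h4
        · rintro ⟨h3, h4⟩
          have : k j ≠ k r := fun he => h3 (hk h4 hr he)
          rcases lt_or_gt_of_ne this with h5 | h5 <;> by_cases h6 : σ j <;> simp [h4, h5, h6]
      · rw [Finset.disjoint_left]
        intro j h3 h4
        rw [Finset.mem_filter] at h3 h4
        rcases h3.2 with h5 | h5 <;> rcases h4.2 with h6 | h6
        · exact h6.2 h5.2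
        · linarith [h5.1, h6.1]
        · linarith [h5.1, h6.1]
        · exact h6.2 h5.2
    omega

/-- Among pairwise non-parallel plane vectors, one spans a line through the origin which halves
the others. -/
lemma exists_halving_vector {ι : Type*} (S : Finset ι) (hS : 2 ≤ S.card) (a b : ι → ℝ)
    (hab : ∀ i ∈ S, ∀ j ∈ S, i ≠ j → a i * b j - a j * b i ≠ 0) :
    ∃ r ∈ S,
      (S.filter fun j => 0 < a r * b j - a j * b r).card ≤
        (S.filter fun j => a r * b j - a j * b r < 0).card + 1 ∧
      (S.filter fun j => a r * b j - a j * b r < 0).card ≤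
        (S.filter fun j => 0 < a r * b j - a j * b r).card + 1 := by
  -- After a shear, no first coordinate vanishes, so that slopes make sense.
  obtain ⟨t, ht⟩ := Infinite.exists_notMem_finset (S.image fun j => -a j / b j)
  have ha : ∀ i ∈ S, a i + t * b i ≠ 0 := by
    intro i hi h0
    by_cases hb : b i = 0
    · have ha0 : a i = 0 := by simpa [hb] using h0
      obtain ⟨j, hj, hji⟩ := Finset.exists_mem_ne (by omega : 1 < S.card) i
      exact hab i hi j hj hji.symm (by simp [hb, ha0])
    · apply ht
      rw [Finset.mem_image]
      refine ⟨i, hi, ?_⟩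
      rw [div_eq_iff hb]
      linarith
  set A : ι → ℝ := fun i => a i + t * b i with hA
  have hdet : ∀ i j, a i * b j - a j * b i = A i * b j - A j * b i := by
    intro i j
    simp only [hA]
    ring
  have hk : Set.InjOn (fun i => b i / A i) S := by
    intro i hi j hj hij
    by_contra hne
    apply hab i hi j hj hne
    rw [hdet]
    simp only at hij
    rw [div_eq_div_iff (ha i hi) (ha j hj)] at hij
    linarith
  obtain ⟨r, hr, h1, h2⟩ := exists_balanced S (Finset.card_pos.mp (by omega)) _ hk
    (fun i => 0 < A i)
  refine ⟨r, hr, ?_⟩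
  have hsum : (S.filter fun j => 0 < a r * b j - a j * b r).card +
      (S.filter fun j => a r * b j - a j * b r < 0).card + 1 = S.card := by
    rw [← Finset.card_erase_add_one hr, ← Finset.card_union_of_disjoint]
    · congr 2
      ext j
      simp only [Finset.mem_union, Finset.mem_filter, Finset.mem_erase]
      constructor
      · rintro (⟨h3, h4⟩ | ⟨h3, h4⟩) <;> refine ⟨?_, h3⟩ <;> rintro rfl <;> linarith
      · rintro ⟨h3, h4⟩
        rcases lt_or_gt_of_ne (hab r hr j h4 (Ne.symm h3)) with h5 | h5 <;> simp [h4, h5]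
    · rw [Finset.disjoint_left]
      intro j h3 h4
      rw [Finset.mem_filter] at h3 h4
      linarith [h3.2, h4.2]
  have hdiff : ∀ j ∈ S, b j / A j - b r / A r = (A r * b j - A j * b r) / (A r * A j) := by
    intro j hj
    have h3 : A j ≠ 0 := ha j hj
    have h4 : A r ≠ 0 := ha r hr
    field_simp
  have hslope : ∀ j ∈ S, (b r / A r < b j / A j ↔ 0 < (A r * b j - A j * b r) / (A r * A j)) ∧
      (b j / A j < b r / A r ↔ (A r * b j - A j * b r) / (A r * A j) < 0) := by
    intro j hj
    rw [← hdiff j hj]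
    exact ⟨sub_pos.symm, sub_neg.symm⟩
  -- Depending on the sign of `A r`, the balanced count is the left or the right side of the line.
  have hdA : ∀ j, (0 < a r * b j - a j * b r ↔ 0 < A r * b j - A j * b r) ∧
      (a r * b j - a j * b r < 0 ↔ A r * b j - A j * b r < 0) := fun j => by
    rw [hdet]
    exact ⟨Iff.rfl, Iff.rfl⟩
  rcases lt_or_gt_of_ne (ha r hr) with hneg | hpos
  · have : (S.filter fun j => (b r / A r < b j / A j ∧ 0 < A j) ∨
        (b j / A j < b r / A r ∧ ¬ 0 < A j)) = S.filter fun j => a r * b j - a j * b r < 0 := by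
      apply Finset.filter_congr
      intro j hj
      rw [(hslope j hj).1, (hslope j hj).2, (hdA j).2]
      rcases lt_or_gt_of_ne (ha j hj) with h3 | h3
      · have h4 : 0 < A r * A j := mul_pos_of_neg_of_neg hneg h3
        have h5 : ¬ 0 < A j := not_lt.mpr h3.le
        rw [div_lt_iff₀ h4, zero_mul]
        tauto
      · have h4 : A r * A j < 0 := mul_neg_of_neg_of_pos hneg h3
        have h5 : 0 < A j := h3
        rw [lt_div_iff_of_neg h4, zero_mul]
        tauto
    rw [this] at h1 h2
    omega
  · have : (S.filter fun j => (b r / A r < b j / A j ∧ 0 < A j) ∨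
        (b j / A j < b r / A r ∧ ¬ 0 < A j)) = S.filter fun j => 0 < a r * b j - a j * b r := by
      apply Finset.filter_congr
      intro j hj
      rw [(hslope j hj).1, (hslope j hj).2, (hdA j).1]
      rcases lt_or_gt_of_ne (ha j hj) with h3 | h3
      · have h4 : A r * A j < 0 := mul_neg_of_pos_of_neg hpos h3
        have h5 : ¬ 0 < A j := not_lt.mpr h3.le
        rw [div_lt_iff_of_neg h4, zero_mul]
        tauto
      · have h4 : 0 < A r * A j := mul_pos hpos h3
        have h5 : 0 < A j := h3
        rw [lt_div_iff₀ h4, zero_mul]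
        tauto
    rw [this] at h1 h2
    omega

/-! ### Linear functionals and orientation in coordinates -/

/-- The linear functional on `ℝ³` with coefficients `a`, `b`, `c`. -/
def lin (a b c : ℝ) : Pt3 →ₗ[ℝ] ℝ :=
  a • (EuclideanSpace.proj (𝕜 := ℝ) (0 : Fin 3)).toLinearMap +
  b • (EuclideanSpace.proj (𝕜 := ℝ) (1 : Fin 3)).toLinearMap +
  c • (EuclideanSpace.proj (𝕜 := ℝ) (2 : Fin 3)).toLinearMap

@[simp] lemma lin_apply (a b c : ℝ) (y : Pt3) : lin a b c y = a * y 0 + b * y 1 + c * y 2 := by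
  simp [lin]

/-- The sweep functional `(1, δ, δ²)`; it separates the points of a finite set for all but
finitely many `δ`. -/
def swp (δ : ℝ) : Pt3 →ₗ[ℝ] ℝ := lin 1 δ (δ ^ 2)

/-- The orientation determinant `det (q - p, r - p, y - p)`. -/
def orient (p q r y : Pt3) : ℝ :=
  ((q 1 - p 1) * (r 2 - p 2) - (q 2 - p 2) * (r 1 - p 1)) * (y 0 - p 0) +
  ((q 2 - p 2) * (r 0 - p 0) - (q 0 - p 0) * (r 2 - p 2)) * (y 1 - p 1) +
  ((q 0 - p 0) * (r 1 - p 1) - (q 1 - p 1) * (r 0 - p 0)) * (y 2 - p 2)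

lemma quadratic_eq_zero {a b c : ℝ} (h : (Polynomial.C a + Polynomial.C b * Polynomial.X +
    Polynomial.C c * Polynomial.X ^ 2 : Polynomial ℝ) = 0) : a = 0 ∧ b = 0 ∧ c = 0 := by
  have c0 := congrArg (fun R => Polynomial.coeff R 0) h
  have c1 := congrArg (fun R => Polynomial.coeff R 1) h
  have c2 := congrArg (fun R => Polynomial.coeff R 2) h
  simp [Polynomial.coeff_X, Polynomial.coeff_C, Polynomial.coeff_X_pow] at c0 c1 c2
  exact ⟨c0, c1, c2⟩

lemma exists_generic_sweep (S : Finset Pt3) : ∃ δ : ℝ, Set.InjOn (swp δ) S := by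
  let P : Pt3 × Pt3 → Polynomial ℝ := fun e =>
    Polynomial.C (e.1 0 - e.2 0) + Polynomial.C (e.1 1 - e.2 1) * Polynomial.X +
      Polynomial.C (e.1 2 - e.2 2) * Polynomial.X ^ 2
  obtain ⟨δ, hδ⟩ := Infinite.exists_notMem_finset
    (S.offDiag.biUnion fun e => (P e).roots.toFinset)
  refine ⟨δ, fun p hp q hq hpq => ?_⟩
  by_contra hne
  apply hδ
  rw [Finset.mem_biUnion]
  refine ⟨(p, q), by simpa using ⟨hp, hq, hne⟩, ?_⟩
  rw [Multiset.mem_toFinset, Polynomial.mem_roots']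
  constructor
  · intro h0
    apply hne
    obtain ⟨c0, c1, c2⟩ := quadratic_eq_zero h0
    ext i
    fin_cases i
    · exact sub_eq_zero.mp c0
    · exact sub_eq_zero.mp c1
    · exact sub_eq_zero.mp c2
  · simp [swp] at hpq
    simp [P, Polynomial.IsRoot]
    linarith

lemma orient_ne_zero {S : Finset Pt3} (hG : GenPos3 S) {p q r y : Pt3} (hp : p ∈ S) (hq : q ∈ S)
    (hr : r ∈ S) (hy : y ∈ S) (hpq : p ≠ q) (hpr : p ≠ r) (hpy : p ≠ y) (hqr : q ≠ r)
    (hqy : q ≠ y) (hry : r ≠ y) : orient p q r y ≠ 0 := by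
  intro h0
  have hT := hG {p, q, r, y} (by
    intro z hz
    simp only [Finset.mem_insert, Finset.mem_singleton] at hz
    rcases hz with rfl | rfl | rfl | rfl <;> assumption) Finset.card_le_four
  have hA : AffineIndependent ℝ ![p, q, r, y] := by
    let e : Fin 4 ↪ {x // x ∈ (({p, q, r, y} : Finset Pt3) : Set Pt3)} :=
      ⟨fun i => ⟨![p, q, r, y] i, by fin_cases i <;> simp⟩, by
        intro i j hij
        rw [Subtype.mk.injEq] at hij
        fin_cases i <;> fin_cases j <;> simp_all⟩
    exact hT.comp_embedding e
  let M : Matrix (Fin 3) (Fin 3) ℝ :=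
    Matrix.of ![fun i => q i - p i, fun i => r i - p i, fun i => y i - p i]
  have hdet : M.det = 0 := by
    rw [← h0, Matrix.det_fin_three]
    simp [M, orient]
    ring
  obtain ⟨v, hv, hvM⟩ := Matrix.exists_vecMul_eq_zero_iff.mpr hdet
  have hvi : ∀ i, v 0 * (q i - p i) + v 1 * (r i - p i) + v 2 * (y i - p i) = 0 := by
    intro i
    have := congrFun hvM i
    simpa [Matrix.vecMul, dotProduct, Fin.sum_univ_three, M] using this
  rw [affineIndependent_iff] at hA
  have hw := hA Finset.univ ![-(v 0 + v 1 + v 2), v 0, v 1, v 2]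
    (by simp [Fin.sum_univ_four]; ring) (by
      ext i
      have := hvi i
      simp [Fin.sum_univ_four]
      linarith)
  apply hv
  ext i
  fin_cases i
  · simpa using hw 1 (by simp)
  · simpa using hw 2 (by simp)
  · simpa using hw 3 (by simp)

/-! ### Halving triples -/

/-- `t = {p, q, r} ⊆ S` spans a plane `a y₀ + b y₁ + c y₂ = m` containing no further point of `S`,
`q` is the middle point of `t` for the sweep functional, and `T` consists of `q` and the points of
`S` on the positive side of the plane. -/
def TripleSet (S : Finset Pt3) (δ : ℝ) (t T : Finset Pt3) : Prop :=
  ∃ (p q r : Pt3) (a b c m : ℝ), t = {p, q, r} ∧ t ⊆ S ∧ swp δ p < swp δ q ∧ swp δ q < swp δ r ∧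
    (∀ y ∈ S, lin a b c y = m ↔ y ∈ t) ∧ T = insert q (S.filter fun y => m < lin a b c y)

lemma sort_three (x : Pt3 → ℝ) (p q r : Pt3) (hpq : x p ≠ x q) (hpr : x p ≠ x r)
    (hqr : x q ≠ x r) :
    ∃ p' q' r' : Pt3, ({p, q, r} : Finset Pt3) = {p', q', r'} ∧ x p' < x q' ∧ x q' < x r' := by
  rcases lt_or_gt_of_ne hpq with h1 | h1 <;> rcases lt_or_gt_of_ne hpr with h2 | h2 <;>
    rcases lt_or_gt_of_ne hqr with h3 | h3
  · exact ⟨p, q, r, rfl, h1, h3⟩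
  · exact ⟨p, r, q, by ext; simp; tauto, h2, h3⟩
  · linarith
  · exact ⟨r, p, q, by ext; simp; tauto, h2, h1⟩
  · exact ⟨q, p, r, by ext; simp; tauto, h1, h2⟩
  · linarith
  · exact ⟨q, r, p, by ext; simp; tauto, h3, h2⟩
  · exact ⟨r, q, p, by ext; simp; tauto, h3, h1⟩

/-- Every pair of points lies in a triple whose plane halves the remaining points. -/
lemma exists_triple {S : Finset Pt3} (hG : GenPos3 S) (hS : 4 ≤ S.card) {δ : ℝ}
    (hδ : Set.InjOn (swp δ) S) {p q : Pt3} (hp : p ∈ S) (hq : q ∈ S) (hpq : p ≠ q) :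
    ∃ t T : Finset Pt3, {p, q} ⊆ t ∧ t.card = 3 ∧ TripleSet S δ t T ∧ S.card / 2 ≤ T.card ∧
      S.card / 2 ≤ S.card - T.card := by
  -- The points are projected along `q - p` to the kernel of the sweep functional.
  set ξ : ℝ := swp δ q - swp δ p with hξ
  have hξ0 : ξ ≠ 0 := sub_ne_zero.mpr fun h => hpq (hδ hq hp h).symm
  set α : Pt3 → ℝ := fun y => ξ * (y 1 - p 1) - (swp δ y - swp δ p) * (q 1 - p 1) with hα
  set β : Pt3 → ℝ := fun y => ξ * (y 2 - p 2) - (swp δ y - swp δ p) * (q 2 - p 2) with hβ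
  have hdet : ∀ r y, α r * β y - α y * β r = ξ * orient p q r y := by
    intro r y
    simp only [hα, hβ, hξ, swp, lin_apply, orient]
    ring
  set S' := (S.erase p).erase q with hS'
  have hcard : S'.card + 2 = S.card := by
    rw [hS', Finset.card_erase_of_mem (by simp [hq, hpq.symm]), Finset.card_erase_of_mem hp]
    omega
  have hmem : ∀ y, y ∈ S' ↔ y ≠ q ∧ y ≠ p ∧ y ∈ S := by
    intro y
    simp [hS']
  have hne : ∀ i ∈ S', ∀ j ∈ S', i ≠ j → ξ * orient p q i j ≠ 0 := by
    intro i hi j hj hij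
    rw [hmem] at hi hj
    exact mul_ne_zero hξ0 (orient_ne_zero hG hp hq hi.2.2 hj.2.2 hpq hi.2.1.symm hj.2.1.symm
      hi.1.symm hj.1.symm hij)
  obtain ⟨r, hr, h1, h2⟩ := exists_halving_vector S' (by omega) α β (by
    intro i hi j hj hij
    rw [hdet]
    exact hne i hi j hj hij)
  simp only [hdet] at h1 h2
  have hr' := (hmem r).mp hr
  -- An oriented normal, chosen so that the positive side is not the smaller one.
  obtain ⟨κ, hκ0, hκ⟩ : ∃ κ : ℝ, κ ≠ 0 ∧
      (S'.filter fun j => κ * orient p q r j < 0).card ≤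
        (S'.filter fun j => 0 < κ * orient p q r j).card ∧
      (S'.filter fun j => 0 < κ * orient p q r j).card ≤
        (S'.filter fun j => κ * orient p q r j < 0).card + 1 := by
    rcases le_total (S'.filter fun j => ξ * orient p q r j < 0).card
        (S'.filter fun j => 0 < ξ * orient p q r j).card with h | h
    · exact ⟨ξ, hξ0, h, h1⟩
    · refine ⟨-ξ, neg_ne_zero.mpr hξ0, ?_⟩
      simp only [neg_mul, Left.neg_neg_iff, Left.neg_pos_iff]
      exact ⟨h, h2⟩
  set a := κ * ((q 1 - p 1) * (r 2 - p 2) - (q 2 - p 2) * (r 1 - p 1)) with ha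
  set b := κ * ((q 2 - p 2) * (r 0 - p 0) - (q 0 - p 0) * (r 2 - p 2)) with hb
  set c := κ * ((q 0 - p 0) * (r 1 - p 1) - (q 1 - p 1) * (r 0 - p 0)) with hc
  set m := lin a b c p with hm
  have hlin : ∀ y, lin a b c y = m + κ * orient p q r y := by
    intro y
    simp only [hm, lin_apply, ha, hb, hc, orient]
    ring
  have op : orient p q r p = 0 := by simp [orient]
  have oq : orient p q r q = 0 := by simp only [orient]; ring
  have or' : orient p q r r = 0 := by simp only [orient]; ring
  have ho : ∀ y ∈ S, κ * orient p q r y = 0 ↔ y ∈ ({p, q, r} : Finset Pt3) := by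
    intro y hy
    simp only [Finset.mem_insert, Finset.mem_singleton]
    constructor
    · intro h
      by_contra hcon
      push Not at hcon
      exact mul_ne_zero hκ0 (orient_ne_zero hG hp hq hr'.2.2 hy hpq hr'.2.1.symm hcon.1.symm
        hr'.1.symm hcon.2.1.symm hcon.2.2.symm) h
    · rintro (rfl | rfl | rfl) <;> simp [op, oq, or']
  have hcardt : ({p, q, r} : Finset Pt3).card = 3 :=
    Finset.card_eq_three.mpr ⟨p, q, r, hpq, hr'.2.1.symm, hr'.1.symm, rfl⟩
  have hts : ({p, q, r} : Finset Pt3) ⊆ S := by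
    intro z hz
    simp only [Finset.mem_insert, Finset.mem_singleton] at hz
    rcases hz with rfl | rfl | rfl
    exacts [hp, hq, hr'.2.2]
  obtain ⟨p', q', r', ht, hx1, hx2⟩ := sort_three (swp δ) p q r (fun h => hpq (hδ hp hq h))
    (fun h => hr'.2.1 (hδ hp hr'.2.2 h).symm) (fun h => hr'.1 (hδ hq hr'.2.2 h).symm)
  refine ⟨{p, q, r}, insert q' (S.filter fun y => m < lin a b c y), ?_, hcardt,
    ⟨p', q', r', a, b, c, m, ht, hts, hx1, hx2, ?_, rfl⟩, ?_⟩
  · intro z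
    simp
    tauto
  · intro y hy
    rw [hlin, ← ho y hy]
    simp
  · have hq' : q' ∈ ({p, q, r} : Finset Pt3) := by rw [ht]; simp
    have hq'S := hts hq'
    have e1 : (S.filter fun y => m < lin a b c y) =
        S'.filter fun y => 0 < κ * orient p q r y := by
      ext y
      simp only [Finset.mem_filter, hmem, hlin, lt_add_iff_pos_right]
      constructor
      · rintro ⟨h3, h4⟩
        refine ⟨⟨?_, ?_, h3⟩, h4⟩ <;> rintro rfl <;> simp [op, oq] at h4
      · rintro ⟨h3, h4⟩
        exact ⟨h3.2.2, h4⟩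
    have hnot : q' ∉ (S.filter fun y => m < lin a b c y) := by
      rw [Finset.mem_filter, hlin, (ho q' hq'S).mpr hq']
      simp
    rw [Finset.card_insert_of_notMem hnot, e1]
    have hsum : (S'.filter fun j => 0 < κ * orient p q r j).card +
        (S'.filter fun j => κ * orient p q r j < 0).card + 1 = S'.card := by
      rw [← Finset.card_erase_add_one hr, ← Finset.card_union_of_disjoint]
      · congr 2
        ext j
        simp only [Finset.mem_union, Finset.mem_filter, Finset.mem_erase]
        constructor
        · rintro (⟨h3, h4⟩ | ⟨h3, h4⟩) <;> refine ⟨?_, h3⟩ <;> rintro rfl <;> simp [or'] at h4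
        · rintro ⟨h3, h4⟩
          have h5 := (hmem j).mp h4
          have : κ * orient p q r j ≠ 0 := by
            rw [Ne, ho j h5.2.2]
            simp [h5.1, h5.2.1, h3]
          rcases lt_or_gt_of_ne this with h6 | h6 <;> simp [h4, h6]
      · rw [Finset.disjoint_left]
        intro j h3 h4
        rw [Finset.mem_filter] at h3 h4
        linarith [h3.2, h4.2]
    omega

/-! ### From halving triples to halving sets -/

/-- Adding a small multiple of `g` to `f` tilts the plane `f = m` through `p, q, r` so that only
`q` joins the positive side. -/
lemma separated_of_tilt {S : Finset Pt3} {p q r : Pt3} {f g : Pt3 →ₗ[ℝ] ℝ} {m : ℝ} (hq : q ∈ S)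
    (hf : ∀ y ∈ S, f y = m → y = p ∨ y = q ∨ y = r) (hfp : f p = m) (hfq : f q = m)
    (hfr : f r = m) (hgr : g r = g p) (hgq : g p < g q) :
    SeparatedSubset S (insert q (S.filter fun y => m < f y)) := by
  set n := (g p + g q) / 2 with hn
  have hev : ∀ᶠ ε in nhdsWithin (0 : ℝ) (Set.Ioi 0),
      ∀ y ∈ S, f y ≠ m → ε * |g y - n| < |f y - m| := by
    rw [Filter.eventually_all_finset]
    intro y _
    by_cases hy : f y = m
    · simp [hy]
    · have hc : Filter.Tendsto (fun ε : ℝ => ε * |g y - n|) (nhdsWithin 0 (Set.Ioi 0))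
          (nhds (0 * |g y - n|)) :=
        ((continuous_id.mul continuous_const).tendsto 0).mono_left nhdsWithin_le_nhds
      have hpos : 0 * |g y - n| < |f y - m| := by
        rw [zero_mul]
        exact abs_pos.mpr (sub_ne_zero.mpr hy)
      filter_upwards [hc.eventually_lt_const hpos] with ε h _
      exact h
  obtain ⟨ε, hε, hε0⟩ := (hev.and self_mem_nhdsWithin).exists
  have hε0 : 0 < ε := hε0
  refine ⟨?_, f + ε • g, m + ε * n, ?_, ?_⟩
  · intro y hy
    rw [Finset.mem_insert, Finset.mem_filter] at hy
    rcases hy with rfl | hy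
    exacts [hq, hy.1]
  · intro y hy
    rw [Finset.mem_insert, Finset.mem_filter] at hy
    simp only [LinearMap.add_apply, LinearMap.smul_apply, smul_eq_mul]
    rcases hy with rfl | ⟨hy, hmy⟩
    · rw [hfq]
      nlinarith
    · have h1 := hε y hy hmy.ne'
      rw [abs_of_pos (sub_pos.mpr hmy)] at h1
      have h2 := mul_le_mul_of_nonneg_left (neg_abs_le (g y - n)) hε0.le
      linarith
  · intro y hy hyT
    rw [Finset.mem_insert, Finset.mem_filter] at hyT
    push Not at hyT
    simp only [LinearMap.add_apply, LinearMap.smul_apply, smul_eq_mul]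
    have hle := hyT.2 hy
    by_cases hym : f y = m
    · rcases hf y hy hym with rfl | rfl | rfl
      · rw [hym]; nlinarith
      · exact absurd rfl hyT.1
      · rw [hym, hgr]; nlinarith
    · have hlt := lt_of_le_of_ne hle hym
      have h1 := hε y hy hym
      rw [abs_of_neg (sub_neg.mpr hlt)] at h1
      have h2 := mul_le_mul_of_nonneg_left (le_abs_self (g y - n)) hε0.le
      linarith

lemma sum_sq_nonpos {u v w : ℝ} (h : ¬ 0 < u ^ 2 + v ^ 2 + w ^ 2) : u = 0 ∧ v = 0 ∧ w = 0 := by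
  refine ⟨?_, ?_, ?_⟩ <;> nlinarith [sq_nonneg u, sq_nonneg v, sq_nonneg w]

/-- Raising the middle point `q` off its plane, keeping `p` and `r` level, separates `T`. -/
lemma TripleSet.separated {S : Finset Pt3} (hG : GenPos3 S) (hS : 4 ≤ S.card) {δ : ℝ}
    {t T : Finset Pt3} (h : TripleSet S δ t T) : SeparatedSubset S T := by
  obtain ⟨p, q, r, a, b, c, m, rfl, hts, hx1, hx2, hm, rfl⟩ := h
  have hp : p ∈ S := hts (by simp)
  have hq : q ∈ S := hts (by simp)
  have hr : r ∈ S := hts (by simp)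
  have hpq : p ≠ q := by rintro rfl; exact lt_irrefl _ hx1
  have hqr : q ≠ r := by rintro rfl; exact lt_irrefl _ hx2
  have hpr : p ≠ r := by rintro rfl; exact lt_asymm hx1 hx2
  obtain ⟨y, hy, hyt⟩ := Finset.exists_mem_notMem_of_card_lt_card
    (lt_of_le_of_lt (Finset.card_le_three (a := p) (b := q) (c := r)) (by omega : 3 < S.card))
  simp only [Finset.mem_insert, Finset.mem_singleton, not_or] at hyt
  have ho := orient_ne_zero hG hp hq hr hy hpq hpr (Ne.symm hyt.1) hqr (Ne.symm hyt.2.1)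
    (Ne.symm hyt.2.2)
  -- `w` is the component of `q - p` orthogonal to `r - p`, scaled by `|r - p|²`.
  set N : ℝ := (r 0 - p 0) ^ 2 + (r 1 - p 1) ^ 2 + (r 2 - p 2) ^ 2 with hN
  set I : ℝ := (q 0 - p 0) * (r 0 - p 0) + (q 1 - p 1) * (r 1 - p 1) +
    (q 2 - p 2) * (r 2 - p 2) with hI
  set w : Fin 3 → ℝ := fun i => N * (q i - p i) - I * (r i - p i) with hw
  refine separated_of_tilt (p := p) (r := r) (g := lin (w 0) (w 1) (w 2)) hq ?_
    ((hm p hp).mpr (by simp)) ((hm q hq).mpr (by simp)) ((hm r hr).mpr (by simp)) ?_ ?_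
  · intro z hz hzm
    simpa using (hm z hz).mp hzm
  · simp only [lin_apply, hw, hN, hI]
    ring
  · rw [← sub_pos]
    -- Lagrange's identity: the difference is the squared length of the cross product.
    set u0 := (q 1 - p 1) * (r 2 - p 2) - (q 2 - p 2) * (r 1 - p 1) with hu0
    set u1 := (q 2 - p 2) * (r 0 - p 0) - (q 0 - p 0) * (r 2 - p 2) with hu1
    set u2 := (q 0 - p 0) * (r 1 - p 1) - (q 1 - p 1) * (r 0 - p 0) with hu2
    have e : lin (w 0) (w 1) (w 2) q - lin (w 0) (w 1) (w 2) p = u0 ^ 2 + u1 ^ 2 + u2 ^ 2 := by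
      simp only [lin_apply, hw, hN, hI, hu0, hu1, hu2]
      ring
    rw [e]
    by_contra hcon
    obtain ⟨z0, z1, z2⟩ := sum_sq_nonpos hcon
    apply ho
    have : orient p q r y = u0 * (y 0 - p 0) + u1 * (y 1 - p 1) + u2 * (y 2 - p 2) := rfl
    rw [this, z0, z1, z2]
    ring

/-- A planar cone has only two extreme rays: there are no three functionals on the plane with
zeros `wᵢ` such that each is positive at the zeros of the other two. -/
lemma no_three_extreme (U V a b : Fin 3 → ℝ) (h0 : ∀ i, U i * a i + V i * b i = 0)
    (h : ∀ i j, i ≠ j → 0 < U i * a j + V i * b j) : False := by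
  have key : ∀ i, ∃ κ : ℝ, U i = -κ * b i ∧ V i = κ * a i := by
    intro i
    obtain ⟨j, hji⟩ := exists_ne i
    have hne : ¬ (a i = 0 ∧ b i = 0) := by
      rintro ⟨h1, h2⟩
      have := h j i hji
      rw [h1, h2] at this
      simp at this
    by_cases ha : a i = 0
    · have hb : b i ≠ 0 := fun hb => hne ⟨ha, hb⟩
      have := h0 i
      refine ⟨-U i / b i, by field_simp, ?_⟩
      rw [ha] at this ⊢
      simpa [hb] using this
    · refine ⟨V i / a i, ?_, by field_simp⟩
      have := h0 i
      field_simp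
      linarith
  choose κ hU hV using key
  have hd : ∀ i j, i ≠ j → κ i * κ j < 0 := by
    intro i j hij
    have h1 := h i j hij
    have h2 := h j i hij.symm
    rw [hU, hV] at h1 h2
    set d := a i * b j - a j * b i with hd
    have e1 : 0 < -(κ i * d) * -1 := by rw [hd]; linarith
    have e2 : 0 < κ j * d * -1 := by rw [hd]; linarith
    by_contra hcon
    push Not at hcon
    nlinarith [mul_pos e1 e2, mul_nonneg hcon (sq_nonneg d)]
  have h01 := hd 0 1 (by decide)
  have h02 := hd 0 2 (by decide)
  have h12 := hd 1 2 (by decide)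
  nlinarith [mul_pos_of_neg_of_neg h01 h02, sq_nonneg (κ 0), mul_nonneg (sq_nonneg (κ 0))
    (neg_nonneg.mpr h12.le)]

/-- A set `T` arises from at most two triples. -/
lemma TripleSet.not_three {S : Finset Pt3} {δ : ℝ} {T : Finset Pt3} (t : Fin 3 → Finset Pt3)
    (ht : Function.Injective t) (h : ∀ i, TripleSet S δ (t i) T) : False := by
  choose p q r a b c m htE hts hx1 hx2 hm hT using h
  -- `w i` is a positive multiple of `q i` minus the point of the line `p i, r i` at the same
  -- sweep height; it lies in the kernel of the sweep functional.
  set w : Fin 3 → Fin 3 → ℝ := fun i k =>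
    (swp δ (r i) - swp δ (p i)) * q i k - (swp δ (r i) - swp δ (q i)) * p i k -
      (swp δ (q i) - swp δ (p i)) * r i k with hw
  have hker : ∀ i, w i 0 = - δ * w i 1 - δ ^ 2 * w i 2 := by
    intro i
    simp only [hw, swp, lin_apply]
    ring
  have hval : ∀ i j, (b i - δ * a i) * w j 1 + (c i - δ ^ 2 * a i) * w j 2 =
      (swp δ (r j) - swp δ (q j)) * (lin (a i) (b i) (c i) (q j) - lin (a i) (b i) (c i) (p j)) +
      (swp δ (q j) - swp δ (p j)) *
        (lin (a i) (b i) (c i) (q j) - lin (a i) (b i) (c i) (r j)) := by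
    intro i j
    have : (b i - δ * a i) * w j 1 + (c i - δ ^ 2 * a i) * w j 2 =
        a i * w j 0 + b i * w j 1 + c i * w j 2 := by
      rw [hker j]
      ring
    rw [this]
    simp only [hw, lin_apply]
    ring
  have hpS : ∀ i, p i ∈ S := fun i => hts i (by rw [htE]; simp)
  have hqS : ∀ i, q i ∈ S := fun i => hts i (by rw [htE]; simp)
  have hrS : ∀ i, r i ∈ S := fun i => hts i (by rw [htE]; simp)
  have hpm : ∀ i, lin (a i) (b i) (c i) (p i) = m i := fun i =>
    (hm i _ (hpS i)).mpr (by rw [htE]; simp)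
  have hqm : ∀ i, lin (a i) (b i) (c i) (q i) = m i := fun i =>
    (hm i _ (hqS i)).mpr (by rw [htE]; simp)
  have hrm : ∀ i, lin (a i) (b i) (c i) (r i) = m i := fun i =>
    (hm i _ (hrS i)).mpr (by rw [htE]; simp)
  have hin : ∀ i, ∀ y ∈ T, m i ≤ lin (a i) (b i) (c i) y := by
    intro i y hy
    rw [hT i, Finset.mem_insert, Finset.mem_filter] at hy
    rcases hy with rfl | hy
    exacts [(hqm i).ge, hy.2.le]
  have hout : ∀ i, ∀ y ∈ S, y ∉ T → lin (a i) (b i) (c i) y ≤ m i := by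
    intro i y hy hyT
    rw [hT i, Finset.mem_insert, Finset.mem_filter] at hyT
    push Not at hyT
    exact hyT.2 hy
  have hqT : ∀ i, q i ∈ T := fun i => by rw [hT i]; simp
  have hpT : ∀ i, p i ∉ T := fun i => by
    rw [hT i, Finset.mem_insert, Finset.mem_filter, hpm i]
    rintro (h1 | h1)
    · have := hx1 i
      rw [h1] at this
      exact lt_irrefl _ this
    · exact lt_irrefl _ h1.2
  have hrT : ∀ i, r i ∉ T := fun i => by
    rw [hT i, Finset.mem_insert, Finset.mem_filter, hrm i]
    rintro (h1 | h1)
    · have := hx2 i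
      rw [h1] at this
      exact lt_irrefl _ this
    · exact lt_irrefl _ h1.2
  refine no_three_extreme (fun i => b i - δ * a i) (fun i => c i - δ ^ 2 * a i)
    (fun i => w i 1) (fun i => w i 2) ?_ ?_
  · intro i
    rw [hval, hpm, hqm, hrm]
    ring
  · intro i j hij
    rw [hval]
    have k1 := hin i _ (hqT j)
    have k2 := hout i _ (hpS j) (hpT j)
    have k3 := hout i _ (hrS j) (hrT j)
    have l1 := sub_pos.mpr (hx1 j)
    have l2 := sub_pos.mpr (hx2 j)
    have n1 := mul_nonneg l2.le (sub_nonneg.mpr (k2.trans k1))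
    have n2 := mul_nonneg l1.le (sub_nonneg.mpr (k3.trans k1))
    refine lt_of_le_of_ne (add_nonneg n1 n2) fun heq => ?_
    have z1 := (mul_eq_zero.mp (le_antisymm (by linarith) n1)).resolve_left l2.ne'
    have z2 := (mul_eq_zero.mp (le_antisymm (by linarith) n2)).resolve_left l1.ne'
    -- All three points of `t j` then lie on plane `i`, so that `t j = t i`.
    have hsub : t j ⊆ t i := by
      intro y hy
      have hyS := hts j hy
      rw [← hm i y hyS]
      rw [htE j] at hy
      simp only [Finset.mem_insert, Finset.mem_singleton] at hy
      rcases hy with rfl | rfl | rfl <;> linarith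
    have hc : ∀ k, (t k).card = 3 := by
      intro k
      rw [htE k]
      refine Finset.card_eq_three.mpr ⟨_, _, _, ?_, ?_, ?_, rfl⟩
      · exact fun h => (hx1 k).ne (congrArg _ h)
      · exact fun h => ((hx1 k).trans (hx2 k)).ne (congrArg _ h)
      · exact fun h => (hx2 k).ne (congrArg _ h)
    exact hij (ht (Finset.eq_of_subset_of_card_le hsub (by rw [hc, hc]))).symm

/-! ### Counting -/

/-- There are `Ω(s²)` subsets `T` of `S` that are `k`-sets of `S` for some `k`
with `min {k, s - k} ≥ ⌈(s-1)/2⌉`. -/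
theorem near_halving_ksets_lower_bound :
    ∃ (c : ℝ) (s₀ : ℕ), 0 < c ∧
      ∀ s : ℕ, s₀ ≤ s → ∀ S : Finset Pt3, S.card = s → GenPos3 S →
        c * s ^ 2 ≤
          ({T : Finset Pt3 | SeparatedSubset S T ∧
              (s - 1 + 1) / 2 ≤ T.card ∧ (s - 1 + 1) / 2 ≤ s - T.card}.ncard : ℝ) := by
  refine ⟨1 / 24, 4, by norm_num, ?_⟩
  rintro s hs S rfl hG
  obtain ⟨δ, hδ⟩ := exists_generic_sweep S
  rw [Nat.sub_add_cancel (by omega : 1 ≤ S.card)]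
  set F : Finset (Finset Pt3) := S.powerset.filter fun T =>
    SeparatedSubset S T ∧ S.card / 2 ≤ T.card ∧ S.card / 2 ≤ S.card - T.card with hF
  have hset : {T : Finset Pt3 | SeparatedSubset S T ∧
      S.card / 2 ≤ T.card ∧ S.card / 2 ≤ S.card - T.card} = (F : Set (Finset Pt3)) := by
    ext T
    simp only [hF, Set.mem_ofPred_eq, Finset.coe_filter, Finset.mem_powerset]
    exact ⟨fun h => ⟨h.1.1, h⟩, fun h => h.2⟩
  rw [hset, Set.ncard_coe_finset]
  have hpair : ∀ e ∈ S.powersetCard 2, ∃ t T : Finset Pt3, e ⊆ t ∧ t.card = 3 ∧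
      TripleSet S δ t T ∧ S.card / 2 ≤ T.card ∧ S.card / 2 ≤ S.card - T.card := by
    intro e he
    rw [Finset.mem_powersetCard] at he
    obtain ⟨p, q, hpq, rfl⟩ := Finset.card_eq_two.mp he.2
    exact exists_triple hG hs hδ (he.1 (by simp)) (he.1 (by simp)) hpq
  choose! τ Θ hτ using hpair
  set H := (S.powersetCard 2).image τ with hH
  have hc1 : (S.powersetCard 2).card ≤ 3 * H.card := by
    refine Finset.card_le_mul_card_image_of_maps_to
      (fun e he => Finset.mem_image_of_mem τ he) 3 fun t ht => ?_
    obtain ⟨e₀, he₀, rfl⟩ := Finset.mem_image.mp ht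
    have hsub : ((S.powersetCard 2).filter fun e => τ e = τ e₀) ⊆ (τ e₀).powersetCard 2 := by
      intro e he
      rw [Finset.mem_filter] at he
      rw [Finset.mem_powersetCard, ← he.2]
      exact ⟨(hτ e he.1).1, (Finset.mem_powersetCard.mp he.1).2⟩
    refine (Finset.card_le_card hsub).trans ?_
    rw [Finset.card_powersetCard, (hτ e₀ he₀).2.1]
    decide
  have hHT : ∀ t ∈ H, ∃ T ∈ F, TripleSet S δ t T := by
    intro t ht
    obtain ⟨e, he, rfl⟩ := Finset.mem_image.mp ht
    obtain ⟨_, _, h3, h4, h5⟩ := hτ e he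
    have hsep := h3.separated hG hs
    refine ⟨Θ e, ?_, h3⟩
    rw [hF, Finset.mem_filter, Finset.mem_powerset]
    exact ⟨hsep.1, hsep, h4, h5⟩
  choose! Ψ hΨF hΨ using hHT
  have hc2 : H.card ≤ 2 * F.card := by
    refine Finset.card_le_mul_card_image_of_maps_to hΨF 2 fun T _ => ?_
    by_contra hcon
    push Not at hcon
    obtain ⟨t₁, t₂, t₃, h1, h2, h3, h12, h13, h23⟩ := Finset.two_lt_card_iff.mp hcon
    rw [Finset.mem_filter] at h1 h2 h3
    refine TripleSet.not_three (S := S) (δ := δ) (T := T) ![t₁, t₂, t₃] ?_ ?_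
    · intro i j hij
      fin_cases i <;> fin_cases j <;> simp_all
    · intro i
      fin_cases i
      · simpa [h1.2] using hΨ t₁ h1.1
      · simpa [h2.2] using hΨ t₂ h2.1
      · simpa [h3.2] using hΨ t₃ h3.1
  have hc3 : S.card * (S.card - 1) ≤ 12 * F.card := by
    rw [Finset.card_powersetCard] at hc1
    have h2 : S.card.choose 2 * 2 = S.card * (S.card - 1) := by
      rw [Nat.choose_two_right]
      exact Nat.div_mul_cancel (Nat.even_mul_pred_self _).two_dvd
    omega
  have hc4 : (S.card : ℝ) * (S.card - 1) ≤ 12 * F.card := by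
    have h1 : ((S.card * (S.card - 1) : ℕ) : ℝ) ≤ ((12 * F.card : ℕ) : ℝ) := by exact_mod_cast hc3
    push_cast [Nat.cast_sub (by omega : 1 ≤ S.card)] at h1
    exact h1
  have hs' : (4 : ℝ) ≤ S.card := by exact_mod_cast hs
  nlinarith
end
end

section
/- There exist a constant c > 0 and a natural number s₀ such that for every integer s ≥ s₀ and every set S of s points in general position in ℝ³ the following holds: the number of subsets T of S with 1 ≤ |T| ≤ ⌈s/4⌉ such that T can be separated from S \ T by an affine plane passing through no point of S (i.e., the number of (≤ ⌈s/4⌉)-sets of S) is at least c · s³. -/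
/-!
Points `x ∈ ℝ³` are lifted to `(x, 1) ∈ ℝ³ × ℝ`, so that affine functions become linear functionals
and general position says that any four lifted points form a basis. Fix two points `p, q ∈ S`. Every
triple `T ⊆ S \ {p, q}` spans a plane, given by a unique functional `h` vanishing on `T` with
`h p = -1`. Let `A T` be the set of points of `S` on the side of the plane not containing `p`.

*Many triples with small `A T`.* For every `R ⊆ S \ {p, q}` with `|R| = 60`, the convex hull of
`R ∪ {p}` has a facet avoiding `p` (`LiftGenPos.exists_facet`): a triple `T ⊆ R` with `A T` disjoint
from `R`. A triple with `|A T|` larger than about `s / 4` arises from at most a `(4/5)^57` fraction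
of the 60-sets containing it, and `(60 choose 3) * (4/5)^57 ≤ 1/2`, so double counting
(`double_count`, `sampling_bound`) yields a positive fraction of all triples with
`|A T| + 3 ≤ ⌈s/4⌉`.

*From triples to sets.* Tilting the plane of `T` slightly separates `A T ∪ T'` from the rest of `S`
for any `T' ⊆ T` (`LiftGenPos.tiltSet_separated`). Let `T'` consist of the points of `T` whose
coordinate in the expansion of `q` in the basis `T ∪ {p}` is positive. Then, among all `g` with
`g p = -1` that are nonnegative on `A T ∪ T'` and nonpositive on the other points of `S`, the
functional `h` is the unique minimiser of `g q`. Hence `A T ∪ T'` determines `h`, and so `T`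
(`LiftGenPos.tiltSet_injective`). This is the dual of the fact that a cell of a plane arrangement
has only one lowest vertex. At most one triple is lost to `A T ∪ T' = ∅`.
-/


noncomputable section

attribute [local instance] Classical.propDecidable

/-! ### Functionals on points in general position -/

section Abstract

variable {α V : Type*} [AddCommGroup V] [Module ℝ V]

/-- The linear form of general position: any at most four of the vectors `v x`, `x ∈ S`, are
linearly independent. It is applied to the lifts `v x = (x, 1)` in `ℝ³ × ℝ`, whose linear
functionals are the affine functions on `ℝ³`. -/
def LiftGenPos (v : α → V) (S : Finset α) : Prop :=
  ∀ W : Finset α, W ⊆ S → W.card ≤ 4 → LinearIndependent ℝ (fun x : W => v x)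

theorem LiftGenPos.exists_functional {v : α → V} {S : Finset α} (hS : LiftGenPos v S)
    {W : Finset α} (hW : W ⊆ S) (hc : W.card ≤ 4) (w : α → ℝ) :
    ∃ h : V →ₗ[ℝ] ℝ, ∀ x ∈ W, h (v x) = w x := by
  have hli := hS W hW hc
  obtain ⟨h, hh⟩ := LinearMap.exists_extend ((Module.Basis.span hli).constr ℝ (fun x : W => w x))
  refine ⟨h, fun x hx => ?_⟩
  have h1 := (Module.Basis.span hli).constr_basis ℝ (fun x : W => w x) ⟨x, hx⟩
  rw [← hh] at h1
  simpa [Module.Basis.span_apply] using h1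

theorem LiftGenPos.span_eq_top {v : α → V} {S : Finset α} (hS : LiftGenPos v S)
    (hV : Module.finrank ℝ V = 4) {W : Finset α} (hW : W ⊆ S) (hc : W.card = 4) :
    Submodule.span ℝ (v '' (W : Set α)) = ⊤ := by
  have hne : Nonempty W := by
    obtain ⟨x, hx⟩ := Finset.card_pos.1 (by omega : 0 < W.card)
    exact ⟨⟨x, hx⟩⟩
  have h := (hS W hW hc.le).span_eq_top_of_card_eq_finrank (by simp [hc, hV])
  rw [← h]
  congr 1
  ext y
  simp

theorem LiftGenPos.eq_zero {v : α → V} {S : Finset α} (hS : LiftGenPos v S)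
    (hV : Module.finrank ℝ V = 4) {W : Finset α} (hW : W ⊆ S) (hc : W.card = 4)
    {h : V →ₗ[ℝ] ℝ} (h0 : ∀ x ∈ W, h (v x) = 0) : h = 0 := by
  apply LinearMap.ext_on (hS.span_eq_top hV hW hc)
  rintro _ ⟨x, hx, rfl⟩
  simpa using h0 x hx

variable [DecidableEq α]

/-- A nonzero functional vanishing on a triple vanishes at no further point. -/
theorem LiftGenPos.ne_zero_of_notMem {v : α → V} {S : Finset α} (hS : LiftGenPos v S)
    (hV : Module.finrank ℝ V = 4) {T : Finset α} (hT : T ⊆ S) (hc : T.card = 3)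
    {h : V →ₗ[ℝ] ℝ} (hne : h ≠ 0) (h0 : ∀ x ∈ T, h (v x) = 0) {y : α} (hy : y ∈ S)
    (hyT : y ∉ T) : h (v y) ≠ 0 := by
  intro h1
  apply hne
  apply hS.eq_zero hV (W := insert y T)
  · exact Finset.insert_subset hy hT
  · rw [Finset.card_insert_of_notMem hyT, hc]
  · intro x hx
    rcases Finset.mem_insert.1 hx with rfl | hx
    exacts [h1, h0 x hx]

/-- The convex hull of `R ∪ {p}` has a facet avoiding `p`. A functional that is `-1` at `p`,
nonpositive on `R` and has as many zeros on `R` as possible must have at least three: with fewer,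
it can be moved along a direction vanishing at `p` and at the known zeros until it meets the next
point of `R`. -/
theorem LiftGenPos.exists_facet {v : α → V} {S : Finset α} (hS : LiftGenPos v S)
    {e : V →ₗ[ℝ] ℝ} (he : ∀ x, e (v x) = 1) {p : α} (hp : p ∈ S) {R : Finset α} (hR : R ⊆ S) (hpR : p ∉ R) (hc : 3 ≤ R.card) :
    ∃ T ⊆ R, T.card = 3 ∧ ∃ h : V →ₗ[ℝ] ℝ,
      h (v p) = -1 ∧ (∀ x ∈ T, h (v x) = 0) ∧ ∀ x ∈ R, h (v x) ≤ 0 := by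
  let P : Finset α → Prop := fun Z => ∃ h : V →ₗ[ℝ] ℝ,
    h (v p) = -1 ∧ (∀ x ∈ Z, h (v x) = 0) ∧ ∀ x ∈ R, h (v x) ≤ 0
  have hne : (R.powerset.filter P).Nonempty :=
    ⟨∅, by simpa using ⟨-e, by simp [he], by simp [he]⟩⟩
  obtain ⟨Z, hZ, hmax⟩ := Finset.exists_max_image _ Finset.card hne
  obtain ⟨hZR, h, hp1, hZ0, hneg⟩ := Finset.mem_filter.1 hZ
  rw [Finset.mem_powerset] at hZR
  by_cases h3 : 3 ≤ Z.card
  · obtain ⟨T, hTZ, hT⟩ := Finset.exists_subset_card_eq h3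
    exact ⟨T, hTZ.trans hZR, hT, h, hp1, fun x hx => hZ0 x (hTZ hx), hneg⟩
  exfalso
  obtain ⟨y, hyR, hyZ⟩ : ∃ y ∈ R, y ∉ Z := by
    by_contra! hcon
    have := Finset.card_le_card (fun y hy => hcon y hy : R ⊆ Z)
    omega
  have hyp : y ≠ p := fun e => hpR (e ▸ hyR)
  -- a direction fixing the values at `p` and on `Z`, and increasing the one at `y`
  obtain ⟨g, hg⟩ := hS.exists_functional (W := insert y (insert p Z))
    (Finset.insert_subset (hR hyR) (Finset.insert_subset hp (hZR.trans hR)))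
    (by
      have h1 := Finset.card_insert_le y (insert p Z)
      have h2 := Finset.card_insert_le p Z
      omega) (fun x => if x = y then 1 else 0)
  have hgy : g (v y) = 1 := by simpa using hg y (by simp)
  have hgp : g (v p) = 0 := by simpa [hyp.symm] using hg p (by simp)
  have hgZ : ∀ x ∈ Z, g (v x) = 0 := fun x hx => by
    have hxy : x ≠ y := fun e => hyZ (e ▸ hx)
    simpa [hxy] using hg x (by simp [hx])
  obtain ⟨x₀, hx₀, hmin⟩ := Finset.exists_min_image (R.filter fun x => 0 < g (v x))
    (fun x => -h (v x) / g (v x)) ⟨y, by simp [hyR, hgy]⟩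
  obtain ⟨hx₀R, hgx₀⟩ := Finset.mem_filter.1 hx₀
  have hx₀Z : x₀ ∉ Z := fun hx => hgx₀.ne' (hgZ x₀ hx)
  -- the largest step along `g` that keeps the functional nonpositive on `R`
  set t := -h (v x₀) / g (v x₀) with ht
  have ht0 : 0 ≤ t := div_nonneg (by linarith [hneg x₀ hx₀R]) hgx₀.le
  have hP : P (insert x₀ Z) := by
    refine ⟨h + t • g, by simp [hp1, hgp], fun x hx => ?_, fun x hx => ?_⟩
    · rcases Finset.mem_insert.1 hx with rfl | hx
      · simp only [LinearMap.add_apply, LinearMap.smul_apply, smul_eq_mul, ht]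
        field_simp
        ring
      · simp [hZ0 x hx, hgZ x hx]
    · simp only [LinearMap.add_apply, LinearMap.smul_apply, smul_eq_mul]
      by_cases hgx : 0 < g (v x)
      · have := hmin x (Finset.mem_filter.2 ⟨hx, hgx⟩)
        have := (le_div_iff₀ hgx).1 this
        linarith
      · nlinarith [hneg x hx]
  have := hmax _ (Finset.mem_filter.2
    ⟨Finset.mem_powerset.2 (Finset.insert_subset hx₀R hZR), hP⟩)
  rw [Finset.card_insert_of_notMem hx₀Z] at this
  omega

/-! ### Separable sets determined by triples -/

/-- The vector `v q` has nonzero coordinates on `T` in the basis given by `T ∪ {p}`. -/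
theorem LiftGenPos.exists_coords {v : α → V} {S : Finset α} (hS : LiftGenPos v S)
    (hV : Module.finrank ℝ V = 4) {p q : α} (hp : p ∈ S) (hq : q ∈ S) (hpq : p ≠ q)
    {T : Finset α} (hT : T ⊆ S) (hpT : p ∉ T) (hqT : q ∉ T) (hc : T.card = 3) :
    ∃ (l : α → ℝ) (m : ℝ), (∀ h : V →ₗ[ℝ] ℝ,
      h (v q) = ∑ x ∈ T, l x * h (v x) + m * h (v p)) ∧ ∀ x ∈ T, l x ≠ 0 := by
  have hspan := hS.span_eq_top hV (W := insert p T) (Finset.insert_subset hp hT)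
    (by rw [Finset.card_insert_of_notMem hpT, hc])
  have hmem : v q ∈ Submodule.span ℝ (v '' ((insert p T : Finset α) : Set α)) := by
    rw [hspan]; trivial
  obtain ⟨l, hl⟩ : ∃ l : α → ℝ, ∑ x ∈ insert p T, l x • v x = v q := by
    obtain ⟨l, hl⟩ := (Submodule.mem_span_image_finset_iff_exists_fun ℝ).1 hmem
    refine ⟨fun x => if hx : x ∈ insert p T then l ⟨x, hx⟩ else 0, ?_⟩
    rw [← hl, ← Finset.sum_coe_sort]
    exact Finset.sum_congr rfl fun x _ => by simp only [x.2, dif_pos]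
  rw [Finset.sum_insert hpT] at hl
  have key : ∀ h : V →ₗ[ℝ] ℝ, h (v q) = ∑ x ∈ T, l x * h (v x) + l p * h (v p) := by
    intro h
    rw [← hl]
    simp [add_comm]
  refine ⟨l, l p, key, fun x hx hlx => ?_⟩
  have hpx : p ≠ x := fun e => hpT (e ▸ hx)
  -- a functional vanishing at `p` and on `T \ {x}`, but not at `q`
  obtain ⟨h, hh⟩ := hS.exists_functional (W := insert q (insert p (T.erase x)))
    (Finset.insert_subset hq (Finset.insert_subset hp ((Finset.erase_subset _ _).trans hT)))
    (by
      have h1 := Finset.card_insert_le q (insert p (T.erase x))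
      have h2 := Finset.card_insert_le p (T.erase x)
      rw [Finset.card_erase_of_mem hx] at h2
      omega) (fun y => if y = q then 1 else 0)
  have hq1 : h (v q) = 1 := by simpa using hh q (by simp)
  have hp0 : h (v p) = 0 := by simpa [hpq] using hh p (by simp)
  have hk := key h
  rw [hq1, hp0, Finset.sum_eq_zero] at hk
  · simp at hk
  · intro y hy
    by_cases hyx : y = x
    · rw [hyx, hlx, zero_mul]
    · have hyq : y ≠ q := fun e => hqT (e ▸ hy)
      have : h (v y) = 0 := by simpa [hyq] using hh y (by simp [hy, hyx])
      rw [this, mul_zero]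

/-- The set `{x ∈ S | h x > 0}` together with the points of `T` with positive weight `l`: one of
the eight separable sets obtained by tilting the plane `h = 0` through the triple `T`. -/
def tiltSet (v : α → V) (S T : Finset α) (h : V →ₗ[ℝ] ℝ) (l : α → ℝ) : Finset α :=
  S.filter fun x => 0 < h (v x) ∨ (x ∈ T ∧ 0 < l x)

theorem tiltSet_card_le (v : α → V) (S T : Finset α) (h : V →ₗ[ℝ] ℝ) (l : α → ℝ) :
    (tiltSet v S T h l).card ≤ (S.filter fun x => 0 < h (v x)).card + T.card := by
  refine (Finset.card_le_card fun x hx => ?_).trans (Finset.card_union_le _ _)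
  simp only [tiltSet, Finset.mem_filter, Finset.mem_union] at hx ⊢
  tauto

theorem LiftGenPos.tiltSet_separated {v : α → V} {S : Finset α} (hS : LiftGenPos v S)
    (hV : Module.finrank ℝ V = 4) {T : Finset α} (hT : T ⊆ S) (hc : T.card = 3)
    {h : V →ₗ[ℝ] ℝ} (hne : h ≠ 0) (h0 : ∀ x ∈ T, h (v x) = 0) (l : α → ℝ) :
    ∃ H : V →ₗ[ℝ] ℝ, (∀ x ∈ tiltSet v S T h l, 0 < H (v x)) ∧
      ∀ x ∈ S, x ∉ tiltSet v S T h l → H (v x) < 0 := by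
  obtain ⟨g, hg⟩ := hS.exists_functional hT (by omega) (fun x => if 0 < l x then 1 else -1)
  -- every small enough tilt keeps the strict signs off `T` and realises the prescribed ones on `T`
  have hev : ∀ᶠ e : ℝ in nhdsWithin 0 (Set.Ioi 0), ∀ x ∈ S,
      (x ∈ tiltSet v S T h l → 0 < h (v x) + e * g (v x)) ∧
      (x ∉ tiltSet v S T h l → h (v x) + e * g (v x) < 0) := by
    rw [Filter.eventually_all_finset]
    intro x hx
    have hcont : Filter.Tendsto (fun e : ℝ => h (v x) + e * g (v x)) (nhdsWithin 0 (Set.Ioi 0))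
        (nhds (h (v x))) := by
      have : Continuous fun e : ℝ => h (v x) + e * g (v x) := by fun_prop
      simpa using (this.tendsto 0).mono_left nhdsWithin_le_nhds
    by_cases hxT : x ∈ T
    · filter_upwards [self_mem_nhdsWithin] with e he
      have he : 0 < e := he
      by_cases hl : 0 < l x
      · simp [tiltSet, hx, hxT, hl, h0 x hxT, hg x hxT, he]
      · simp [tiltSet, hx, hxT, hl, h0 x hxT, hg x hxT, he]
    · have hxne := hS.ne_zero_of_notMem hV hT hc hne h0 hx hxT
      rcases lt_or_gt_of_ne hxne with hlt | hgt
      · filter_upwards [hcont.eventually_lt_const hlt] with e he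
        simp [tiltSet, hxT, hlt.le, he]
      · filter_upwards [hcont.eventually_const_lt hgt] with e he
        simp [tiltSet, hxT, hx, hgt, he]
  obtain ⟨e, he⟩ := hev.exists
  refine ⟨h + e • g, fun x hx => ?_, fun x hx hx' => ?_⟩
  · simpa using (he x (Finset.mem_filter.1 hx).1).1 hx
  · simpa using (he x hx).2 hx'

/-- If `h₁` defines the plane of `T₁` and `T₁` is tilted according to the coordinates `l₁` of
`v q`, then `h₁` minimises evaluation at `q` over all normalised functionals weakly separating the
same set, and a second minimiser also vanishes on `T₁`. -/
theorem tiltSet_minimizer {v : α → V} {S : Finset α} {p q : α} {T₁ T₂ : Finset α} (hT₁ : T₁ ⊆ S)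
    {h₁ h₂ : V →ₗ[ℝ] ℝ} (hp₁ : h₁ (v p) = -1) (hp₂ : h₂ (v p) = -1)
    (h0₁ : ∀ x ∈ T₁, h₁ (v x) = 0) (h0₂ : ∀ x ∈ T₂, h₂ (v x) = 0) {l₁ l₂ : α → ℝ} {m₁ : ℝ}
    (hl₁ : ∀ h : V →ₗ[ℝ] ℝ, h (v q) = ∑ x ∈ T₁, l₁ x * h (v x) + m₁ * h (v p))
    (hl₁0 : ∀ x ∈ T₁, l₁ x ≠ 0) (heq : tiltSet v S T₁ h₁ l₁ = tiltSet v S T₂ h₂ l₂) :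
    h₁ (v q) ≤ h₂ (v q) ∧ (h₂ (v q) ≤ h₁ (v q) → ∀ x ∈ T₁, h₂ (v x) = 0) := by
  have hnn : ∀ x ∈ T₁, 0 ≤ l₁ x * h₂ (v x) := by
    intro x hx
    have hiff : x ∈ tiltSet v S T₁ h₁ l₁ ↔ x ∈ tiltSet v S T₂ h₂ l₂ := by rw [heq]
    simp only [tiltSet, Finset.mem_filter, hT₁ hx, hx, h0₁ x hx, lt_irrefl, true_and,
      false_or] at hiff
    rcases lt_or_ge 0 (l₁ x) with hl | hl
    · refine mul_nonneg hl.le ?_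
      rcases hiff.1 hl with h | h
      exacts [h.le, (h0₂ x h.1).ge]
    · refine mul_nonneg_of_nonpos_of_nonpos hl (not_lt.1 fun h => ?_)
      exact absurd (hiff.2 (Or.inl h)) (not_lt.2 hl)
  have e₁ : h₁ (v q) = m₁ * (-1) := by
    rw [hl₁ h₁, hp₁, Finset.sum_eq_zero (fun x hx => by rw [h0₁ x hx, mul_zero]), zero_add]
  have e₂ := hl₁ h₂
  rw [hp₂] at e₂
  have hs := Finset.sum_nonneg hnn
  refine ⟨by linarith, fun hle x hx => ?_⟩
  have hz := (Finset.sum_eq_zero_iff_of_nonneg hnn).1 (by linarith) x hx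
  exact (mul_eq_zero.1 hz).resolve_left (hl₁0 x hx)

theorem LiftGenPos.tiltSet_injective {v : α → V} {S : Finset α} (hS : LiftGenPos v S)
    (hV : Module.finrank ℝ V = 4) {p q : α} {T₁ T₂ : Finset α} (hT₁ : T₁ ⊆ S) (hT₂ : T₂ ⊆ S)
    (hc₁ : T₁.card = 3) (hc₂ : T₂.card = 3)
    {h₁ h₂ : V →ₗ[ℝ] ℝ} (hp₁ : h₁ (v p) = -1) (hp₂ : h₂ (v p) = -1)
    (h0₁ : ∀ x ∈ T₁, h₁ (v x) = 0) (h0₂ : ∀ x ∈ T₂, h₂ (v x) = 0)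
    {l₁ l₂ : α → ℝ} {m₁ m₂ : ℝ}
    (hl₁ : ∀ h : V →ₗ[ℝ] ℝ, h (v q) = ∑ x ∈ T₁, l₁ x * h (v x) + m₁ * h (v p))
    (hl₂ : ∀ h : V →ₗ[ℝ] ℝ, h (v q) = ∑ x ∈ T₂, l₂ x * h (v x) + m₂ * h (v p))
    (hl₁0 : ∀ x ∈ T₁, l₁ x ≠ 0) (hl₂0 : ∀ x ∈ T₂, l₂ x ≠ 0)
    (heq : tiltSet v S T₁ h₁ l₁ = tiltSet v S T₂ h₂ l₂) : T₁ = T₂ := by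
  have a := tiltSet_minimizer hT₁ hp₁ hp₂ h0₁ h0₂ hl₁ hl₁0 heq
  have b := tiltSet_minimizer hT₂ hp₂ hp₁ h0₂ h0₁ hl₂ hl₂0 heq.symm
  have hz := a.2 b.1
  have hne : h₂ ≠ 0 := by
    rintro rfl
    simp at hp₂
  refine Finset.eq_of_subset_of_card_le (fun x hx => ?_) (by omega)
  by_contra hx2
  exact hS.ne_zero_of_notMem hV hT₂ hc₂ hne h0₂ (hT₁ hx) hx2 (hz x hx)

end Abstract

/-! ### Sampling -/

theorem choose_ratio {a N : ℕ} (h : 5 * a ≤ 4 * N) (j : ℕ) :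
    5 ^ j * a.choose j ≤ 4 ^ j * N.choose j := by
  have hd : 5 ^ j * a.descFactorial j ≤ 4 ^ j * N.descFactorial j := by
    induction j with
    | zero => simp
    | succ j ih =>
      rw [Nat.descFactorial_succ, Nat.descFactorial_succ]
      calc 5 ^ (j + 1) * ((a - j) * a.descFactorial j)
          = (5 * (a - j)) * (5 ^ j * a.descFactorial j) := by ring
        _ ≤ (4 * (N - j)) * (4 ^ j * N.descFactorial j) := Nat.mul_le_mul (by omega) ih
        _ = _ := by ring
  rw [Nat.descFactorial_eq_factorial_mul_choose, Nat.descFactorial_eq_factorial_mul_choose] at hd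
  refine le_of_mul_le_mul_left ?_ j.factorial_pos
  linarith

/-- Double counting of pairs `(R, T)` with `T` a triple in the `r`-set `R` and `R` avoiding the set
`A T`: every `R` occurs, a good `T` lies in at most all `r`-sets containing it, and a bad one in at
most `a.choose (r - 3)`. -/
theorem double_count {α : Type*} [DecidableEq α] (S : Finset α) (A : Finset α → Finset α) (good : Finset α → Prop)
    [DecidablePred good] (r a : ℕ)
    (hex : ∀ R ∈ S.powersetCard r, ∃ T ⊆ R, T.card = 3 ∧ Disjoint R (A T))
    (hbad : ∀ T ∈ S.powersetCard 3, ¬ good T → ((S \ T) \ A T).card ≤ a) :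
    S.card.choose r ≤ ((S.powersetCard 3).filter good).card * (S.card - 3).choose (r - 3)
      + S.card.choose 3 * a.choose (r - 3) := by
  let F : Finset α → Finset (Finset α) := fun T =>
    (((S \ T) \ A T).powersetCard (r - 3)).image (· ∪ T)
  have hF : ∀ T, (F T).card ≤ ((S \ T) \ A T).card.choose (r - 3) := fun T =>
    Finset.card_image_le.trans (Finset.card_powersetCard _ _).le
  have hsub : S.powersetCard r ⊆ (S.powersetCard 3).biUnion F := by
    intro R hR
    obtain ⟨T, hTR, hT, hdis⟩ := hex R hR
    obtain ⟨hRS, hRc⟩ := Finset.mem_powersetCard.1 hR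
    refine Finset.mem_biUnion.2 ⟨T, Finset.mem_powersetCard.2 ⟨hTR.trans hRS, hT⟩, ?_⟩
    refine Finset.mem_image.2 ⟨R \ T, Finset.mem_powersetCard.2 ⟨fun x hx => ?_, ?_⟩, ?_⟩
    · obtain ⟨hxR, hxT⟩ := Finset.mem_sdiff.1 hx
      simp only [Finset.mem_sdiff]
      exact ⟨⟨hRS hxR, hxT⟩, Finset.disjoint_left.1 hdis hxR⟩
    · rw [Finset.card_sdiff_of_subset hTR, hT, hRc]
    · exact Finset.sdiff_union_of_subset hTR
  calc S.card.choose r = (S.powersetCard r).card := (Finset.card_powersetCard _ _).symm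
    _ ≤ ((S.powersetCard 3).biUnion F).card := Finset.card_le_card hsub
    _ ≤ ∑ T ∈ S.powersetCard 3, (F T).card := Finset.card_biUnion_le
    _ = ∑ T ∈ (S.powersetCard 3).filter good, (F T).card
        + ∑ T ∈ (S.powersetCard 3).filter (fun T => ¬ good T), (F T).card :=
          (Finset.sum_filter_add_sum_filter_not _ _ _).symm
    _ ≤ ∑ T ∈ (S.powersetCard 3).filter good, (S.card - 3).choose (r - 3)
        + ∑ T ∈ (S.powersetCard 3).filter (fun T => ¬ good T), a.choose (r - 3) := by
          gcongr with T hT T hT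
          · refine (hF T).trans (Nat.choose_le_choose _ ?_)
            obtain ⟨hTS, hTc⟩ := Finset.mem_powersetCard.1 (Finset.mem_filter.1 hT).1
            refine (Finset.card_le_card Finset.sdiff_subset).trans ?_
            rw [Finset.card_sdiff_of_subset hTS, hTc]
          · obtain ⟨hT1, hT2⟩ := Finset.mem_filter.1 hT
            exact (hF T).trans (Nat.choose_le_choose _ (hbad T hT1 hT2))
    _ ≤ _ := by
          rw [Finset.sum_const, Finset.sum_const, smul_eq_mul, smul_eq_mul]
          gcongr
          rw [← Finset.card_powersetCard]
          exact Finset.card_le_card (Finset.filter_subset _ _)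

/-- The sampling bound with sample size `60`, for which `2 * (60 choose 3) * (4/5)^57 ≤ 1`. -/
theorem sampling_bound {n g a : ℕ} (hn : 60 ≤ n) (ha : 5 * a ≤ 4 * (n - 3))
    (h : n.choose 60 ≤ g * (n - 3).choose 57 + n.choose 3 * a.choose 57) :
    n.choose 3 ≤ 68440 * g := by
  have h1 : n.choose 60 * 34220 = n.choose 3 * (n - 3).choose 57 := by
    have := Nat.choose_mul (n := n) (k := 60) (s := 3) (by norm_num)
    rw [show Nat.choose 60 3 = 34220 by rfl] at this
    exact this
  have h2 := choose_ratio ha 57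
  have hX : 0 < (n - 3).choose 57 := Nat.choose_pos (by omega)
  set X := (n - 3).choose 57
  have h3 : 68440 * a.choose 57 ≤ X := by
    norm_num at h2
    omega
  refine le_of_mul_le_mul_right ?_ hX
  have h4 := Nat.mul_le_mul_left (n.choose 3) h3
  nlinarith

/-! ### The lifting to `ℝ³ × ℝ` -/

theorem GenPos3.liftGenPos {S : Finset Pt3} (hS : GenPos3 S) :
    LiftGenPos (fun x : Pt3 => ((x, 1) : Pt3 × ℝ)) S := by
  intro W hW hc
  have hai := hS W hW hc
  rw [affineIndependent_iff] at hai
  rw [linearIndependent_iff']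
  intro s w hw
  have e1 := congrArg Prod.fst hw
  have e2 := congrArg Prod.snd hw
  simp only [Prod.fst_sum, Prod.snd_sum, Prod.smul_fst, Prod.smul_snd, smul_eq_mul, mul_one,
    Prod.fst_zero, Prod.snd_zero] at e1 e2
  exact hai s w e2 e1

theorem finrank_lift : Module.finrank ℝ (Pt3 × ℝ) = 4 := by
  simp

/-- The number of triples avoiding `p` and `q`, out of `s` points, is at least `s³ / 12`. -/
theorem choose_three_lower {s : ℕ} (hs : 1000 ≤ s) :
    (s : ℝ) ^ 3 / 12 ≤ ((s - 2).choose 3 : ℝ) := by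
  obtain ⟨k, rfl⟩ : ∃ k, s = k + 4 := ⟨s - 4, by omega⟩
  have h := Nat.pow_le_choose (α := ℝ) 3 (k + 4 - 2)
  have hk : (996 : ℝ) ≤ k := by exact_mod_cast (by omega : 996 ≤ k)
  rw [show k + 4 - 2 + 1 - 3 = k by omega, show ((Nat.factorial 3 : ℕ) : ℝ) = 6 by
    norm_num [Nat.factorial]] at h
  have h1 : ((k + 4 : ℕ) : ℝ) ^ 3 ≤ (101 / 100 * k) ^ 3 := by
    apply pow_le_pow_left₀ (by positivity)
    push_cast
    linarith
  have h2 : (0 : ℝ) ≤ (k : ℝ) ^ 3 := by positivity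
  rw [mul_pow] at h1
  norm_num at h1
  norm_num
  linarith

/-- There are `Ω(s³)` subsets `T` of `S` that are `(≤ ⌈s/4⌉)`-sets of `S`. -/
theorem at_most_quarter_sets_lower_bound :
    ∃ (c : ℝ) (s₀ : ℕ), 0 < c ∧
      ∀ s : ℕ, s₀ ≤ s → ∀ S : Finset Pt3, S.card = s → GenPos3 S →
        c * s ^ 3 ≤
          ({T : Finset Pt3 | SeparatedSubset S T ∧
              1 ≤ T.card ∧ T.card ≤ (s + 3) / 4}.ncard : ℝ) := by
  refine ⟨1 / 10000000, 1000, by norm_num, fun s hs S hcard hgp => ?_⟩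
  have hL := hgp.liftGenPos
  have hV := finrank_lift
  set v : Pt3 → Pt3 × ℝ := fun x => (x, 1) with hv
  obtain ⟨p, hp, q, hq, hpq⟩ := Finset.one_lt_card.1 (by omega : 1 < S.card)
  set S' := (S.erase p).erase q with hS'
  have hS'S : S' ⊆ S := (Finset.erase_subset _ _).trans (Finset.erase_subset _ _)
  have hpS' : p ∉ S' := by simp [hS']
  have hqS' : q ∉ S' := by simp [hS']
  have hS'c : S'.card = s - 2 := by
    rw [hS', Finset.card_erase_of_mem (by simp [hq, hpq.symm]), Finset.card_erase_of_mem hp, hcard]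
    omega
  -- for each triple: its plane, normalised at `p`, and the coordinates of the lift of `q`
  have hdata : ∀ T : Finset Pt3, ∃ (h : Pt3 × ℝ →ₗ[ℝ] ℝ) (l : Pt3 → ℝ) (m : ℝ),
      T ∈ S'.powersetCard 3 → h (v p) = -1 ∧ (∀ x ∈ T, h (v x) = 0) ∧
        (∀ h : Pt3 × ℝ →ₗ[ℝ] ℝ, h (v q) = ∑ x ∈ T, l x * h (v x) + m * h (v p)) ∧
        ∀ x ∈ T, l x ≠ 0 := by
    intro T
    by_cases hT : T ∈ S'.powersetCard 3
    · obtain ⟨hTS, hTc⟩ := Finset.mem_powersetCard.1 hT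
      have hpT : p ∉ T := fun h => hpS' (hTS h)
      obtain ⟨h, hh⟩ := hL.exists_functional (W := insert p T)
        (Finset.insert_subset hp (hTS.trans hS'S))
        (by rw [Finset.card_insert_of_notMem hpT, hTc]) (fun x => if x = p then -1 else 0)
      obtain ⟨l, m, hl, hl0⟩ := hL.exists_coords hV hp hq hpq (hTS.trans hS'S) hpT
        (fun h => hqS' (hTS h)) hTc
      refine ⟨h, l, m, fun _ => ⟨by simpa using hh p (by simp), fun x hx => ?_, hl, hl0⟩⟩
      have hxp : x ≠ p := fun e => hpT (e ▸ hx)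
      simpa [hxp] using hh x (by simp [hx])
    · exact ⟨0, 0, 0, fun h => absurd h hT⟩
  choose h l m hd using hdata
  let A : Finset Pt3 → Finset Pt3 := fun T => S.filter fun x => 0 < h T (v x)
  let good : Finset Pt3 → Prop := fun T => (A T).card + 3 ≤ (s + 3) / 4
  set G := (S'.powersetCard 3).filter good with hG
  have hcount : (s - 2).choose 3 ≤ 68440 * G.card := by
    have hdc := double_count S' A good 60 (s - 2 - (s + 3) / 4) ?_ ?_
    · rw [hS'c, show 60 - 3 = 57 from rfl] at hdc
      exact sampling_bound (a := s - 2 - (s + 3) / 4) (by omega) (by omega) hdc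
    · intro R hR
      obtain ⟨hRS, hRc⟩ := Finset.mem_powersetCard.1 hR
      obtain ⟨T, hTR, hTc, h', hp', h0', hneg⟩ := hL.exists_facet
        (e := LinearMap.snd ℝ Pt3 ℝ) (fun x => rfl) hp (hRS.trans hS'S)
        (fun h => hpS' (hRS h)) (by omega)
      refine ⟨T, hTR, hTc, ?_⟩
      have hTS := hTR.trans hRS
      have hpT : p ∉ T := fun h => hpS' (hTS h)
      obtain ⟨hp1, h01, -, -⟩ := hd T (Finset.mem_powersetCard.2 ⟨hTS, hTc⟩)
      have heq : h T - h' = 0 := by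
        apply hL.eq_zero hV (W := insert p T) (Finset.insert_subset hp (hTS.trans hS'S))
          (by rw [Finset.card_insert_of_notMem hpT, hTc])
        intro x hx
        rw [LinearMap.sub_apply]
        rcases Finset.mem_insert.1 hx with rfl | hx
        · rw [hp1, hp', sub_self]
        · rw [h01 x hx, h0' x hx, sub_self]
      rw [Finset.disjoint_left]
      intro x hxR hxA
      have := (Finset.mem_filter.1 hxA).2
      rw [sub_eq_zero.1 heq] at this
      linarith [hneg x hxR]
    · intro T hT hbad
      obtain ⟨hTS, hTc⟩ := Finset.mem_powersetCard.1 hT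
      obtain ⟨hp1, h01, -, -⟩ := hd T hT
      -- `S' \ T \ A T`, `T` and `A T` are disjoint subsets of `S \ {p}`
      have hpA : p ∉ A T := by simp [A, hp1]
      have hTA : Disjoint T (A T) := by
        rw [Finset.disjoint_left]
        intro x hx hxA
        exact (Finset.mem_filter.1 hxA).2.ne' (h01 x hx)
      have hsub : ((S' \ T) \ A T) ∪ (T ∪ A T) ⊆ S.erase p := by
        intro x hx
        simp only [Finset.mem_union, Finset.mem_sdiff] at hx
        rcases hx with ⟨⟨hx, -⟩, -⟩ | hx | hx
        · exact Finset.mem_erase.2 ⟨fun e => hpS' (e ▸ hx), hS'S hx⟩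
        · exact Finset.mem_erase.2 ⟨fun e => hpS' (e ▸ hTS hx), hS'S (hTS hx)⟩
        · exact Finset.mem_erase.2 ⟨fun e => hpA (e ▸ hx), (Finset.mem_filter.1 hx).1⟩
      have hc := Finset.card_le_card hsub
      rw [Finset.card_erase_of_mem hp, hcard, Finset.card_union_of_disjoint,
        Finset.card_union_of_disjoint hTA, hTc] at hc
      · have : ¬ ((A T).card + 3 ≤ (s + 3) / 4) := hbad
        omega
      · rw [Finset.disjoint_left]
        intro x hx hx'
        simp only [Finset.mem_sdiff, Finset.mem_union] at hx hx'
        tauto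
  -- the (≤ ⌈s/4⌉)-set assigned to each good triple
  let Φ : Finset Pt3 → Finset Pt3 := fun T => tiltSet v S T (h T) (l T)
  have hinj : Set.InjOn Φ G := by
    intro T₁ h₁ T₂ h₂ heq
    have m₁ := (Finset.mem_filter.1 (Finset.mem_coe.1 h₁)).1
    have m₂ := (Finset.mem_filter.1 (Finset.mem_coe.1 h₂)).1
    obtain ⟨s₁, c₁⟩ := Finset.mem_powersetCard.1 m₁
    obtain ⟨s₂, c₂⟩ := Finset.mem_powersetCard.1 m₂
    obtain ⟨p₁, z₁, l₁, n₁⟩ := hd T₁ m₁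
    obtain ⟨p₂, z₂, l₂, n₂⟩ := hd T₂ m₂
    exact hL.tiltSet_injective hV (s₁.trans hS'S) (s₂.trans hS'S) c₁ c₂ p₁ p₂ z₁ z₂ l₁ l₂ n₁ n₂ heq
  set F := {T : Finset Pt3 | SeparatedSubset S T ∧ 1 ≤ T.card ∧ T.card ≤ (s + 3) / 4} with hF
  have hfin : F.Finite :=
    S.powerset.finite_toSet.subset fun T hT => by simpa using hT.1.1
  have hsub : (((G.image Φ).erase ∅ : Finset (Finset Pt3)) : Set (Finset Pt3)) ⊆ F := by
    intro U hU
    obtain ⟨hU0, hU⟩ := Finset.mem_erase.1 (Finset.mem_coe.1 hU)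
    obtain ⟨T, hT, rfl⟩ := Finset.mem_image.1 hU
    obtain ⟨hT1, hT2⟩ := Finset.mem_filter.1 hT
    obtain ⟨hTS, hTc⟩ := Finset.mem_powersetCard.1 hT1
    obtain ⟨p₁, z₁, -, -⟩ := hd T hT1
    have hne : h T ≠ 0 := by
      intro e
      rw [e] at p₁
      simp at p₁
    obtain ⟨H, hH1, hH2⟩ := hL.tiltSet_separated hV (hTS.trans hS'S) hTc hne z₁ (l T)
    have hsplit : ∀ x : Pt3, H (v x) = H (x, 0) + H (0, 1) := by
      intro x
      rw [← map_add]
      simp [hv]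
    refine ⟨⟨Finset.filter_subset _ _, H ∘ₗ LinearMap.inl ℝ Pt3 ℝ, -H (0, 1), ?_, ?_⟩, ?_, ?_⟩
    · intro x hx
      have := hH1 x hx
      rw [hsplit] at this
      simp only [LinearMap.comp_apply, LinearMap.inl_apply]
      linarith
    · intro x hx hx'
      have := hH2 x hx hx'
      rw [hsplit] at this
      simp only [LinearMap.comp_apply, LinearMap.inl_apply]
      linarith
    · exact Finset.card_pos.2 (Finset.nonempty_iff_ne_empty.2 hU0)
    · have h1 := tiltSet_card_le v S T (h T) (l T)
      rw [hTc] at h1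
      exact h1.trans hT2
  have hle : G.card ≤ F.ncard + 1 := by
    have h1 := Set.ncard_le_ncard hsub hfin
    rw [Set.ncard_coe_finset] at h1
    have h2 := Finset.pred_card_le_card_erase (s := G.image Φ) (a := ∅)
    rw [Finset.card_image_of_injOn hinj] at h2
    omega
  have h3 := choose_three_lower hs
  have h4 : ((s - 2).choose 3 : ℝ) ≤ 68440 * (F.ncard + 1) := by
    exact_mod_cast hcount.trans (Nat.mul_le_mul_left _ hle)
  have h5 : (1000 : ℝ) ^ 3 ≤ (s : ℝ) ^ 3 := by
    gcongr
    exact_mod_cast hs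
  linarith
end
end
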